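/- arXiv:0812.2265 — 2 statements merged into one kernel-verified Lean document; each statement's English description precedes it below -/
import Mathlib

section
/- In the low temperature phase, the mixing time of any local Markov chain for the exponential random graph model is exponentially large: there exists α > 0 and N such that for all n ≥ N, every ergodic Markov chain on graphs on [n] with stationary distribution p_n whose transitions change at most m(n) edges per step, where m(n)=o(n), has mixing time at least e^{αn}. In particular this holds for the Glauber dynamics. -/
open Finset

open scoped Classical

noncomputable section

/-- The set of edges of the complete graph `K_n` on vertex set `[n] = Fin n`:
unordered pairs of distinct vertices. -/
abbrev EdgeK (n : ℕ) : Type := {e : Sym2 (Fin n) // ¬ e.IsDiag}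

/-- A graph on `[n]`, identified with an element `X ∈ {0,1}^{E(K_n)}`. -/
abbrev Config (n : ℕ) : Type := EdgeK n → Bool

/-- The image of an edge under an injection of vertex sets. -/
def mapEdge {m n : ℕ} (v : Fin m ↪ Fin n) (a : EdgeK m) : EdgeK n :=
  ⟨a.1.map v, fun h => a.2 ((Sym2.isDiag_map v.injective).mp h)⟩

/-- The complete graph `K_n` as a configuration. -/
def fullConfig (n : ℕ) : Config n := fun _ => true

/-- `X ∪ {e}`. -/
def addEdge {n : ℕ} (X : Config n) (e : EdgeK n) : Config n :=
  fun f => if f = e then true else X f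

/-- `X_{e+}` (for `b = true`), resp. `X_{e-}` (for `b = false`). -/
def setEdge {n : ℕ} (X : Config n) (e : EdgeK n) (b : Bool) : Config n :=
  fun f => if f = e then b else X f

/-- `N_G(X)`: the number of tuples of `m` distinct vertices of `[n]` such that every
edge of the pattern graph `G` (a graph on `m` labelled vertices) is mapped to an edge of `X`. -/
def copyCount {n m : ℕ} (X : Config n) (G : Finset (EdgeK m)) : ℕ :=
  (univ.filter fun v : Fin m ↪ Fin n => ∀ a ∈ G, X (mapEdge v a) = true).card

/-- `N_G(X, e)`: the number of such tuples for `X ∪ {e}` which moreover use the edge `e`. -/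
def rootedCount {n m : ℕ} (X : Config n) (G : Finset (EdgeK m)) (e : EdgeK n) : ℕ :=
  (univ.filter fun v : Fin m ↪ Fin n =>
    (∃ a ∈ G, mapEdge v a = e) ∧ ∀ a ∈ G, addEdge X e (mapEdge v a) = true).card

/-- `N_G(X, e, e')`: the number of such tuples for `X ∪ {e, e'}` which use both `e` and `e'`. -/
def rooted2Count {n m : ℕ} (X : Config n) (G : Finset (EdgeK m)) (e e' : EdgeK n) : ℕ :=
  (univ.filter fun v : Fin m ↪ Fin n =>
    (∃ a ∈ G, mapEdge v a = e) ∧ (∃ a ∈ G, mapEdge v a = e') ∧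
      ∀ a ∈ G, addEdge (addEdge X e) e' (mapEdge v a) = true).card

/-- The number of edges of the graph `X`. -/
def edgeCount {n : ℕ} (X : Config n) : ℕ := (univ.filter fun e => X e = true).card

/-- Hamming distance between two graphs: the number of edges of disagreement. -/
def hamDist {n : ℕ} (X Y : Config n) : ℕ := (univ.filter fun f => X f ≠ Y f).card

/-- The Hamiltonian `H(X) = ∑ i, β i * N_{G_i}(X) / n^(|V_i| - 2)`. -/
def ergmH {s : ℕ} (V : Fin s → ℕ) (Pt : ∀ i, Finset (EdgeK (V i))) (β : Fin s → ℝ)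
    (n : ℕ) (X : Config n) : ℝ :=
  ∑ i, β i * (copyCount X (Pt i) : ℝ) / (n : ℝ) ^ (V i - 2)

/-- The Gibbs measure `p_n(X) = exp(H(X)) / Z_n`. -/
def gibbs {s : ℕ} (V : Fin s → ℕ) (Pt : ∀ i, Finset (EdgeK (V i))) (β : Fin s → ℝ)
    (n : ℕ) (X : Config n) : ℝ :=
  Real.exp (ergmH V Pt β n X) / ∑ Y : Config n, Real.exp (ergmH V Pt β n Y)

/-- `∂_e H(X) = H(X_{e+}) - H(X_{e-})`. -/
def dH {s : ℕ} (V : Fin s → ℕ) (Pt : ∀ i, Finset (EdgeK (V i))) (β : Fin s → ℝ)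
    (n : ℕ) (X : Config n) (e : EdgeK n) : ℝ :=
  ergmH V Pt β n (setEdge X e true) - ergmH V Pt β n (setEdge X e false)

/-- The transition kernel of the Glauber dynamics: a uniformly random edge `e` of `K_n` is
chosen and set present with probability `exp(∂_e H(X)) /(1 + exp(∂_e H(X)))`, absent
otherwise. -/
def glauber {s : ℕ} (V : Fin s → ℕ) (Pt : ∀ i, Finset (EdgeK (V i))) (β : Fin s → ℝ)
    (n : ℕ) (X Y : Config n) : ℝ :=
  ((n.choose 2 : ℝ))⁻¹ * ∑ e : EdgeK n,
    ((if Y = setEdge X e true then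
        Real.exp (dH V Pt β n X e) / (1 + Real.exp (dH V Pt β n X e)) else 0)
      + (if Y = setEdge X e false then 1 / (1 + Real.exp (dH V Pt β n X e)) else 0))

/-- The `t`-step distribution of the Markov chain with one-step kernel `K`,
started from a given state. -/
def kernelStep {n : ℕ} (K : Config n → Config n → ℝ) : ℕ → Config n → Config n → ℝ
  | 0 => fun x y => if y = x then 1 else 0
  | (t+1) => fun x y => ∑ z, kernelStep K t x z * K z y

/-- Total variation distance between two (signed) distributions on `Config n`. -/
def tvDist {n : ℕ} (μ ν : Config n → ℝ) : ℝ := (∑ Y, |μ Y - ν Y|) / 2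

/-- `mixes K π t` says that after `t` steps the chain with kernel `K` is within total
variation distance `e⁻¹` of `π` from every starting state. -/
def mixes {n : ℕ} (K : Config n → Config n → ℝ) (π : Config n → ℝ) (t : ℕ) : Prop :=
  ∀ x, tvDist (kernelStep K t x) π ≤ Real.exp (-1)

/-- The mixing time: the least `t` such that from every starting state the chain is within
total variation distance `e⁻¹` of `π`. -/
def mixingTime {n : ℕ} (K : Config n → Config n → ℝ) (π : Config n → ℝ) : ℕ :=
  sInf {t | mixes K π t}

/-- `Ψ(p) = ∑ i, 2 β_i |E_i| p^(|E_i| - 1)`. -/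
def PsiF {s : ℕ} {V : Fin s → ℕ} (Pt : ∀ i, Finset (EdgeK (V i))) (β : Fin s → ℝ)
    (p : ℝ) : ℝ :=
  ∑ i, 2 * β i * ((Pt i).card : ℝ) * p ^ ((Pt i).card - 1)

/-- `φ(p) = exp(Ψ(p)) / (1 + exp(Ψ(p)))`. -/
def phiF {s : ℕ} {V : Fin s → ℕ} (Pt : ∀ i, Finset (EdgeK (V i))) (β : Fin s → ℝ)
    (p : ℝ) : ℝ :=
  Real.exp (PsiF Pt β p) / (1 + Real.exp (PsiF Pt β p))

/-- High temperature phase: `φ(p) = p` has a unique solution `p*` (in `[0,1]`), which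
moreover satisfies `φ'(p*) < 1`. -/
def HighTemp {s : ℕ} {V : Fin s → ℕ} (Pt : ∀ i, Finset (EdgeK (V i))) (β : Fin s → ℝ)
    (pstar : ℝ) : Prop :=
  pstar ∈ Set.Icc (0:ℝ) 1 ∧ phiF Pt β pstar = pstar ∧
    (∀ q ∈ Set.Icc (0:ℝ) 1, phiF Pt β q = q → q = pstar) ∧
    deriv (phiF Pt β) pstar < 1

/-- Low temperature phase: `φ(p) = p` has at least two solutions `p` with `φ'(p) < 1`. -/
def LowTemp {s : ℕ} {V : Fin s → ℕ} (Pt : ∀ i, Finset (EdgeK (V i))) (β : Fin s → ℝ) : Prop :=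
  ∃ p₁ p₂ : ℝ, p₁ ∈ Set.Icc (0:ℝ) 1 ∧ p₂ ∈ Set.Icc (0:ℝ) 1 ∧ p₁ ≠ p₂ ∧
    phiF Pt β p₁ = p₁ ∧ phiF Pt β p₂ = p₂ ∧
    deriv (phiF Pt β) p₁ < 1 ∧ deriv (phiF Pt β) p₂ < 1

/-- `r_G(X, e) = (N_G(X,e) / (2 |E(G)| n^(|V(G)|-2)))^(1/(|E(G)|-1))`. -/
def rG {n m : ℕ} (X : Config n) (G : Finset (EdgeK m)) (e : EdgeK n) : ℝ :=
  ((rootedCount X G e : ℝ) / (2 * (G.card : ℝ) * (n : ℝ) ^ (m - 2))) ^ (((G.card : ℝ) - 1)⁻¹)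

/-- The set of values `r_G(X,e)` over all edges `e` of `K_n` and all graphs `G` on at
most `L` vertices with at least two edges. -/
def rSet (L n : ℕ) (X : Config n) : Set ℝ :=
  {r | ∃ m, m ≤ L ∧ ∃ G : Finset (EdgeK m), 2 ≤ G.card ∧ ∃ e : EdgeK n, r = rG X G e}

/-- `r̄(X)`: the maximum of `r_G(X,e)` over all edges `e` of `K_n` and all graphs `G` on
at most `L` vertices with at least two edges. -/
def rbar (L n : ℕ) (X : Config n) : ℝ := sSup (rSet L n X)

/-- `r_min(X)`: the corresponding minimum. -/
def rmin (L n : ℕ) (X : Config n) : ℝ := sInf (rSet L n X)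

/-- The cycle `C_l` on `l` labelled vertices, as a pattern graph. -/
def cyclePattern (l : ℕ) [NeZero l] : Finset (EdgeK l) :=
  univ.filter fun e => ∃ i : Fin l, e.1 = s(i, i + 1)

/-- The probability of a length-`T` trajectory `w` for the chain with kernel `K`
started at `x`. -/
def trajProb {n T : ℕ} (K : Config n → Config n → ℝ) (x : Config n)
    (w : Fin (T+1) → Config n) : ℝ :=
  (if w 0 = x then 1 else 0) * ∏ i : Fin T, K (w i.castSucc) (w i.succ)

/-- Two edges of `K_n` share a vertex. -/
def sharesVertex {n : ℕ} (e e' : EdgeK n) : Prop := ∃ v, v ∈ e.1 ∧ v ∈ e'.1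

end


noncomputable section

namespace LT

variable {n : ℕ}

/-- Bernoulli product weight. -/
def mu (q : ℝ) (X : Config n) : ℝ := ∏ e, if X e = true then q else 1 - q

lemma mu_nonneg {q : ℝ} (h0 : 0 ≤ q) (h1 : q ≤ 1) (X : Config n) : 0 ≤ mu q X :=
  Finset.prod_nonneg fun e _ => by split_ifs <;> linarith

/-- Expectation over a product of one-coordinate functions. -/
lemma sum_prod (g : EdgeK n → Bool → ℝ) :
    ∑ X : Config n, ∏ e, g e (X e) = ∏ e, (g e true + g e false) := by
  have h := Finset.prod_univ_sum (fun _ : EdgeK n => (Finset.univ : Finset Bool)) g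
  rw [Fintype.piFinset_univ] at h
  rw [← h]
  refine Finset.prod_congr rfl fun e _ => ?_
  simp

lemma sum_mu (q : ℝ) : ∑ X : Config n, mu q X = 1 := by
  unfold mu
  rw [sum_prod (fun _ b => if b = true then q else 1 - q)]
  simp

lemma sum_mu_ind (q : ℝ) (T : Finset (EdgeK n)) :
    ∑ X : Config n, mu q X * (if ∀ e ∈ T, X e = true then 1 else 0) = q ^ T.card := by
  have h : ∀ X : Config n, mu q X * (if ∀ e ∈ T, X e = true then 1 else 0)
      = ∏ e, (if X e = true then q else 1 - q) * (if e ∈ T then (if X e = true then 1 else 0) else 1) := by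
    intro X
    rw [Finset.prod_mul_distrib]
    congr 1
    split_ifs with hT
    · symm
      apply Finset.prod_eq_one
      intro e _
      by_cases he : e ∈ T <;> simp [he]
      exact hT e he
    · push Not at hT
      obtain ⟨e, he, hX⟩ := hT
      symm
      apply Finset.prod_eq_zero (Finset.mem_univ e)
      simp [he, hX]
  simp_rw [h]
  rw [sum_prod (fun e b => (if b = true then q else 1 - q) * (if e ∈ T then (if b = true then 1 else 0) else 1))]
  have : ∀ e : EdgeK n, ((if (true:Bool) = true then q else 1 - q) * (if e ∈ T then (if (true : Bool) = true then (1:ℝ) else 0) else 1)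
      + (if (false:Bool) = true then q else 1 - q) * (if e ∈ T then (if (false:Bool) = true then (1:ℝ) else 0) else 1)) = if e ∈ T then q else 1 := by
    intro e
    by_cases he : e ∈ T <;> simp [he]
  rw [Finset.prod_congr rfl (fun e _ => this e)]
  simp

lemma mu_set (q : ℝ) (X : Config n) (e : EdgeK n) (b : Bool) :
    mu q (setEdge X e b) = (if b = true then q else 1 - q) * ∏ f ∈ univ.erase e, if X f = true then q else 1 - q := by
  unfold mu
  rw [← Finset.mul_prod_erase univ _ (Finset.mem_univ e)]
  congr 1
  · simp [setEdge]
  · refine Finset.prod_congr rfl fun f hf => ?_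
    simp [setEdge, Finset.ne_of_mem_erase hf]

lemma setEdge_self (X : Config n) (e : EdgeK n) : setEdge X e (X e) = X := by
  funext f; unfold setEdge; split_ifs with h
  · rw [h]
  · rfl

lemma mu_rel (q : ℝ) (X : Config n) (e : EdgeK n) :
    (1 - q) * mu q (setEdge X e true) = q * mu q (setEdge X e false) := by
  rw [mu_set, mu_set]; simp; ring

lemma setEdge_set (X : Config n) (e : EdgeK n) (b c : Bool) :
    setEdge (setEdge X e b) e c = setEdge X e c := by
  funext f; unfold setEdge; split_ifs <;> rfl

/-- flip an edge -/
def flipE (e : EdgeK n) (X : Config n) : Config n := setEdge X e (!(X e))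

lemma flip_flip (e : EdgeK n) (X : Config n) : flipE e (flipE e X) = X := by
  unfold flipE; rw [setEdge_set]
  have : (!(setEdge X e (!(X e))) e) = X e := by simp [setEdge]
  rw [this, setEdge_self]

lemma sum_flip (e : EdgeK n) (F : Config n → ℝ) : ∑ X, F (flipE e X) = ∑ X, F X :=
  Equiv.sum_comp (⟨flipE e, flipE e, flip_flip e, flip_flip e⟩ : Config n ≃ Config n) F

/-- one-coordinate averaging -/
def avg (q : ℝ) (e : EdgeK n) (F : Config n → ℝ) (X : Config n) : ℝ :=
  q * F (setEdge X e true) + (1 - q) * F (setEdge X e false)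

lemma sum_avg (q : ℝ) (e : EdgeK n) (F : Config n → ℝ) :
    ∑ X, mu q X * avg q e F X = ∑ X, mu q X * F X := by
  have key : ∀ X, mu q X * avg q e F X + mu q (flipE e X) * avg q e F (flipE e X)
      = mu q X * F X + mu q (flipE e X) * F (flipE e X) := by
    intro X
    have h0 : X = setEdge X e (X e) := (setEdge_self X e).symm
    unfold flipE avg
    simp only [setEdge_set]
    cases hX : X e
    · rw [hX] at h0
      have h1 : mu q X = mu q (setEdge X e false) := by rw [← h0]
      have h2 : F X = F (setEdge X e false) := by rw [← h0]
      rw [h1, h2]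
      simp only [Bool.not_false, mu_set]
      simp; ring
    · rw [hX] at h0
      have h1 : mu q X = mu q (setEdge X e true) := by rw [← h0]
      have h2 : F X = F (setEdge X e true) := by rw [← h0]
      rw [h1, h2]
      simp only [Bool.not_true, mu_set]
      simp; ring
  have h1 := sum_flip e (fun X => mu q X * avg q e F X)
  have h2 := sum_flip e (fun X => mu q X * F X)
  have h3 := Finset.sum_congr (rfl : (univ : Finset (Config n)) = univ) (fun X _ => key X)
  rw [Finset.sum_add_distrib, Finset.sum_add_distrib] at h3
  linarith

lemma setEdge_comm (X : Config n) {e f : EdgeK n} (h : e ≠ f) (b c : Bool) :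
    setEdge (setEdge X e b) f c = setEdge (setEdge X f c) e b := by
  funext g; unfold setEdge
  by_cases h1 : g = e
  · subst h1; simp [h]
  · by_cases h2 : g = f
    · subst h2; simp [h1]
    · simp [h1, h2]

lemma exp_bd {x : ℝ} (h : |x| ≤ 1) : Real.exp x ≤ 1 + x + x ^ 2 := by
  have := Real.abs_exp_sub_one_sub_id_le h
  have := (abs_le.mp this).2
  linarith

/-- Two point exponential moment bound. -/
lemma two_point {q x y c : ℝ} (h0 : 0 ≤ q) (h1 : q ≤ 1) (hxy : |x - y| ≤ c) (hc : c ≤ 1) :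
    q * Real.exp x + (1 - q) * Real.exp y ≤ Real.exp (c ^ 2) * Real.exp (q * x + (1 - q) * y) := by
  set z := q * x + (1 - q) * y with hz
  have hx : x = z + (1 - q) * (x - y) := by rw [hz]; ring
  have hy : y = z + (-(q * (x - y))) := by rw [hz]; ring
  set d := x - y with hd
  have a1 : |(1 - q) * d| ≤ c := by
    rw [abs_mul, abs_of_nonneg (by linarith : 0 ≤ 1 - q)]
    nlinarith [abs_nonneg d]
  have a2 : |-(q * d)| ≤ c := by
    rw [abs_neg, abs_mul, abs_of_nonneg h0]
    nlinarith [abs_nonneg d]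
  have b1 := exp_bd (a1.trans hc)
  have b2 := exp_bd (a2.trans hc)
  have s1 : ((1 - q) * d) ^ 2 ≤ c ^ 2 := sq_le_sq' (by linarith [(abs_le.mp a1).1]) (abs_le.mp a1).2
  have s2 : (-(q * d)) ^ 2 ≤ c ^ 2 := sq_le_sq' (by linarith [(abs_le.mp a2).1]) (abs_le.mp a2).2
  have e1 : Real.exp x = Real.exp z * Real.exp ((1 - q) * d) := by rw [← Real.exp_add, ← hx]
  have e2 : Real.exp y = Real.exp z * Real.exp (-(q * d)) := by rw [← Real.exp_add, ← hy]
  rw [e1, e2]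
  have e3 : 1 + c ^ 2 ≤ Real.exp (c ^ 2) := by linarith [Real.add_one_le_exp (c ^ 2)]
  have : q * Real.exp ((1 - q) * d) + (1 - q) * Real.exp (-(q * d)) ≤ 1 + c ^ 2 := by
    have t1 : q * Real.exp ((1 - q) * d) ≤ q * (1 + (1 - q) * d + c ^ 2) :=
      mul_le_mul_of_nonneg_left (by linarith) h0
    have t2 : (1 - q) * Real.exp (-(q * d)) ≤ (1 - q) * (1 + -(q * d) + c ^ 2) :=
      mul_le_mul_of_nonneg_left (by linarith) (by linarith)
    nlinarith
  have hz0 := Real.exp_pos z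
  nlinarith [mul_le_mul_of_nonneg_left (this.trans e3) hz0.le]

/-- Bounded difference exponential moment bound. -/
lemma mgf {q lam : ℝ} (h0 : 0 ≤ q) (h1 : q ≤ 1) (hl : 0 ≤ lam) (c : EdgeK n → ℝ)
    (hc : ∀ e, lam * c e ≤ 1) (S : Finset (EdgeK n)) :
    ∀ f : Config n → ℝ,
      (∀ X e, |f (setEdge X e true) - f (setEdge X e false)| ≤ c e) →
      (∀ e, e ∉ S → ∀ X, f (setEdge X e true) = f (setEdge X e false)) →
      ∑ X, mu q X * Real.exp (lam * f X) ≤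
        Real.exp (lam ^ 2 * ∑ e ∈ S, c e ^ 2) * Real.exp (lam * ∑ X, mu q X * f X) := by
  induction S using Finset.induction_on with
  | empty =>
    intro f _ hS
    have hstep : ∀ X e b, f (setEdge X e b) = f X := by
      intro X e b
      have := hS e (by simp) X
      have h2 : f X = f (setEdge X e (X e)) := by rw [setEdge_self]
      rw [h2]
      cases b <;> cases X e <;> simp [this]
    have hconst : ∀ X Y, f X = f Y := by
      intro X Y
      have : ∀ T : Finset (EdgeK n), f (fun e => if e ∈ T then Y e else X e) = f X := by
        intro T
        induction T using Finset.induction_on with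
        | empty => simp
        | insert a T ha ih =>
          rw [← ih, ← hstep (fun e => if e ∈ T then Y e else X e) a (Y a)]
          congr 1
          funext e
          unfold setEdge
          by_cases he : e = a
          · subst he; simp
          · simp [he]
      have h := this univ
      simpa using h.symm
    let Z : Config n := fun _ => true
    have : ∀ X, f X = f Z := fun X => hconst X Z
    simp_rw [this, ← Finset.sum_mul, sum_mu]
    simp
  | insert a S ha ih =>
    intro f hf hS
    have hpt : ∀ X, avg q a (fun X => Real.exp (lam * f X)) X ≤
        Real.exp (lam ^ 2 * c a ^ 2) * Real.exp (lam * avg q a f X) := by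
      intro X
      unfold avg
      have hd : |lam * f (setEdge X a true) - lam * f (setEdge X a false)| ≤ lam * c a := by
        rw [← mul_sub, abs_mul, abs_of_nonneg hl]
        exact mul_le_mul_of_nonneg_left (hf X a) hl
      have := two_point h0 h1 hd (hc a)
      convert this using 3
      · ring
      · ring
    have i1 := ih (avg q a f) (by
      intro X e
      by_cases he : e = a
      · subst he
        unfold avg
        simp only [setEdge_set, sub_self, abs_zero]
        exact (abs_nonneg _).trans (hf X e)
      · unfold avg
        rw [setEdge_comm X he, setEdge_comm X he, setEdge_comm X he, setEdge_comm X he]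
        have t1 := hf (setEdge X a true) e
        have t2 := hf (setEdge X a false) e
        rw [abs_le] at *
        constructor <;> nlinarith) (by
      intro e he X
      by_cases hea : e = a
      · subst hea; unfold avg; simp only [setEdge_set]
      · unfold avg
        rw [setEdge_comm X hea, setEdge_comm X hea, setEdge_comm X hea, setEdge_comm X hea]
        have : e ∉ insert a S := by simp [hea, he]
        rw [hS e this, hS e this])
    rw [sum_avg] at i1
    rw [← sum_avg q a (fun X => Real.exp (lam * f X)), Finset.sum_insert ha]
    calc ∑ X, mu q X * avg q a (fun X => Real.exp (lam * f X)) X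
        ≤ ∑ X, mu q X * (Real.exp (lam ^ 2 * c a ^ 2) * Real.exp (lam * avg q a f X)) :=
          Finset.sum_le_sum fun X _ => mul_le_mul_of_nonneg_left (hpt X) (mu_nonneg h0 h1 X)
      _ = Real.exp (lam ^ 2 * c a ^ 2) * ∑ X, mu q X * Real.exp (lam * avg q a f X) := by
          rw [Finset.mul_sum]; exact Finset.sum_congr rfl fun X _ => by ring
      _ ≤ Real.exp (lam ^ 2 * c a ^ 2) * (Real.exp (lam ^ 2 * ∑ e ∈ S, c e ^ 2) *
            Real.exp (lam * ∑ X, mu q X * f X)) :=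
          mul_le_mul_of_nonneg_left i1 (Real.exp_pos _).le
      _ = _ := by rw [← mul_assoc, ← Real.exp_add]; congr 2; ring

/-- Upper tail. -/
lemma tail {q lam η : ℝ} (h0 : 0 ≤ q) (h1 : q ≤ 1) (hl : 0 ≤ lam) (c : EdgeK n → ℝ)
    (hc : ∀ e, lam * c e ≤ 1) (f : Config n → ℝ)
    (hf : ∀ X e, |f (setEdge X e true) - f (setEdge X e false)| ≤ c e) (v : ℝ)
    (hv : ∑ X, mu q X * f X + η ≤ v) :
    ∑ X, mu q X * (if v ≤ f X then 1 else 0) ≤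
      Real.exp (lam ^ 2 * ∑ e, c e ^ 2 - lam * η) := by
  have h := mgf h0 h1 hl c hc univ f hf (by simp)
  set E := ∑ X, mu q X * f X with hE
  have h2 : ∑ X, mu q X * (if v ≤ f X then 1 else 0) ≤
      Real.exp (-(lam * v)) * ∑ X, mu q X * Real.exp (lam * f X) := by
    rw [Finset.mul_sum]
    refine Finset.sum_le_sum fun X _ => ?_
    rw [mul_left_comm]
    refine mul_le_mul_of_nonneg_left ?_ (mu_nonneg h0 h1 X)
    rw [← Real.exp_add]
    split_ifs with hX
    · apply Real.one_le_exp
      nlinarith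
    · exact (Real.exp_pos _).le
  refine h2.trans ((mul_le_mul_of_nonneg_left h (Real.exp_pos _).le).trans ?_)
  rw [← Real.exp_add, ← Real.exp_add]
  apply Real.exp_le_exp.mpr
  nlinarith

/-- Lattice comparison inequality, by adding the edges one at a time. -/
lemma latt_up {q : ℝ} (h0 : 0 < q) (h1 : q < 1) (w : Config n → ℝ) (hw : ∀ X, 0 ≤ w X)
    (h : ∀ X e, (1 - q) * w (setEdge X e true) ≤ q * w (setEdge X e false)) (a b : Config n) :
    w a * mu q b ≤ w (a ⊓ b) * mu q (a ⊔ b) := by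
  have main : ∀ T : Finset (EdgeK n), T ⊆ univ.filter (fun e => a e = true ∧ b e = false) →
      w a * mu q b ≤ w (fun e => if e ∈ T then false else a e) * mu q (fun e => if e ∈ T then true else b e) := by
    intro T
    induction T using Finset.induction_on with
    | empty => intro _; simp
    | insert x T hx ih =>
      intro hT
      have ih' := ih ((Finset.subset_insert x T).trans hT)
      have hxm := hT (Finset.mem_insert_self x T)
      simp only [Finset.mem_filter, Finset.mem_univ, true_and] at hxm
      refine ih'.trans ?_
      set a' : Config n := fun e => if e ∈ T then false else a e with ha'
      set b' : Config n := fun e => if e ∈ T then true else b e with hb'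
      have ea : a' = setEdge a' x true := by
        funext e; unfold setEdge; split_ifs with he
        · subst he; simp [ha', hx, hxm.1]
        · rfl
      have eb : b' = setEdge b' x false := by
        funext e; unfold setEdge; split_ifs with he
        · subst he; simp [hb', hx, hxm.2]
        · rfl
      have ea2 : (fun e => if e ∈ insert x T then false else a e) = setEdge a' x false := by
        funext e; unfold setEdge
        by_cases he : e = x <;> simp [he, ha']
      have eb2 : (fun e => if e ∈ insert x T then true else b e) = setEdge b' x true := by
        funext e; unfold setEdge
        by_cases he : e = x <;> simp [he, hb']
      rw [ea2, eb2]
      have r1 := h a' x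
      have r2 := mu_rel q b' x
      rw [← ea] at r1
      rw [← eb] at r2
      have m1 := mu_nonneg h0.le h1.le b'
      have w1 := hw (setEdge a' x false)
      have : (1 - q) * (w a' * mu q b') ≤ (1 - q) * (w (setEdge a' x false) * mu q (setEdge b' x true)) := by
        calc (1 - q) * (w a' * mu q b') = ((1 - q) * w a') * mu q b' := by ring
          _ ≤ (q * w (setEdge a' x false)) * mu q b' := mul_le_mul_of_nonneg_right r1 m1
          _ = w (setEdge a' x false) * (q * mu q b') := by ring
          _ = w (setEdge a' x false) * ((1 - q) * mu q (setEdge b' x true)) := by rw [r2]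
          _ = _ := by ring
      exact le_of_mul_le_mul_left this (by linarith)
  have := main _ (Finset.Subset.refl _)
  convert this using 3
  · funext e
    simp only [Pi.inf_apply, Finset.mem_filter, Finset.mem_univ, true_and]
    cases a e <;> cases b e <;> simp
  · funext e
    simp only [Pi.sup_apply, Finset.mem_filter, Finset.mem_univ, true_and]
    cases a e <;> cases b e <;> simp

lemma latt_down {q : ℝ} (h0 : 0 < q) (h1 : q < 1) (w : Config n → ℝ)
    (h : ∀ X e, q * w (setEdge X e false) ≤ (1 - q) * w (setEdge X e true)) (a b : Config n) :
    mu q a * w b ≤ mu q (a ⊓ b) * w (a ⊔ b) := by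
  have main : ∀ T : Finset (EdgeK n), T ⊆ univ.filter (fun e => a e = true ∧ b e = false) →
      mu q a * w b ≤ mu q (fun e => if e ∈ T then false else a e) * w (fun e => if e ∈ T then true else b e) := by
    intro T
    induction T using Finset.induction_on with
    | empty => intro _; simp
    | insert x T hx ih =>
      intro hT
      have ih' := ih ((Finset.subset_insert x T).trans hT)
      have hxm := hT (Finset.mem_insert_self x T)
      simp only [Finset.mem_filter, Finset.mem_univ, true_and] at hxm
      refine ih'.trans ?_
      set a' : Config n := fun e => if e ∈ T then false else a e with ha'
      set b' : Config n := fun e => if e ∈ T then true else b e with hb'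
      have ea : a' = setEdge a' x true := by
        funext e; unfold setEdge; split_ifs with he
        · subst he; simp [ha', hx, hxm.1]
        · rfl
      have eb : b' = setEdge b' x false := by
        funext e; unfold setEdge; split_ifs with he
        · subst he; simp [hb', hx, hxm.2]
        · rfl
      have ea2 : (fun e => if e ∈ insert x T then false else a e) = setEdge a' x false := by
        funext e; unfold setEdge
        by_cases he : e = x <;> simp [he, ha']
      have eb2 : (fun e => if e ∈ insert x T then true else b e) = setEdge b' x true := by
        funext e; unfold setEdge
        by_cases he : e = x <;> simp [he, hb']
      rw [ea2, eb2]
      have r1 := h b' x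
      have r2 := mu_rel q a' x
      rw [← eb] at r1
      rw [← ea] at r2
      have m1 := mu_nonneg h0.le h1.le a'
      have : q * (mu q a' * w b') ≤ q * (mu q (setEdge a' x false) * w (setEdge b' x true)) := by
        calc q * (mu q a' * w b') = (q * w b') * mu q a' := by ring
          _ ≤ ((1 - q) * w (setEdge b' x true)) * mu q a' := mul_le_mul_of_nonneg_right r1 m1
          _ = w (setEdge b' x true) * ((1 - q) * mu q a') := by ring
          _ = w (setEdge b' x true) * (q * mu q (setEdge a' x false)) := by rw [r2]
          _ = _ := by ring
      exact le_of_mul_le_mul_left this h0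
  have := main _ (Finset.Subset.refl _)
  convert this using 3
  · funext e
    simp only [Pi.inf_apply, Finset.mem_filter, Finset.mem_univ, true_and]
    cases a e <;> cases b e <;> simp
  · funext e
    simp only [Pi.sup_apply, Finset.mem_filter, Finset.mem_univ, true_and]
    cases a e <;> cases b e <;> simp

/-- Stochastic domination by the product measure. -/
lemma dom_up {q : ℝ} (h0 : 0 < q) (h1 : q < 1) (w : Config n → ℝ) (hw : ∀ X, 0 ≤ w X)
    (h : ∀ X e, (1 - q) * w (setEdge X e true) ≤ q * w (setEdge X e false))
    (P : Config n → Prop) (hP : ∀ X Y, X ≤ Y → P X → P Y) :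
    ∑ X, (if P X then 1 else 0) * w X ≤ (∑ X, w X) * ∑ X, mu q X * (if P X then 1 else 0) := by
  have := holley (α := Config n) (β := ℝ) (f := w) (g := fun X => (∑ Y, w Y) * mu q X)
    (μ := fun X => if P X then 1 else 0) (fun X => by simp only [Pi.zero_apply]; split_ifs <;> norm_num)
    hw (fun X => mul_nonneg (Finset.sum_nonneg fun Y _ => hw Y) (mu_nonneg h0.le h1.le X))
    (by
      intro X Y hXY
      by_cases hX : P X
      · simp [hX, hP X Y hXY hX]
      · simp only [hX, if_false]; split_ifs <;> norm_num)
    (by rw [← Finset.mul_sum, sum_mu, mul_one])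
    (by
      intro a b
      have := mul_le_mul_of_nonneg_left (latt_up h0 h1 w hw h a b) (Finset.sum_nonneg fun Y (_ : Y ∈ univ) => hw Y)
      nlinarith)
  refine this.trans (le_of_eq ?_)
  rw [Finset.mul_sum]
  exact Finset.sum_congr rfl fun X _ => by ring

lemma dom_down {q : ℝ} (h0 : 0 < q) (h1 : q < 1) (w : Config n → ℝ) (hw : ∀ X, 0 ≤ w X)
    (h : ∀ X e, q * w (setEdge X e false) ≤ (1 - q) * w (setEdge X e true))
    (P : Config n → Prop) (hP : ∀ X Y, X ≤ Y → P Y → P X) :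
    ∑ X, (if P X then 1 else 0) * w X ≤ (∑ X, w X) * ∑ X, mu q X * (if P X then 1 else 0) := by
  have := holley (α := Config n) (β := ℝ) (g := w) (f := fun X => (∑ Y, w Y) * mu q X)
    (μ := fun X => if P X then 0 else 1) (fun X => by simp only [Pi.zero_apply]; split_ifs <;> norm_num)
    (fun X => mul_nonneg (Finset.sum_nonneg fun Y _ => hw Y) (mu_nonneg h0.le h1.le X)) hw
    (by
      intro X Y hXY
      by_cases hX : P Y
      · simp [hX, hP X Y hXY hX]
      · simp only [hX, if_false]; split_ifs <;> norm_num)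
    (by rw [← Finset.mul_sum, sum_mu, mul_one])
    (by
      intro a b
      have := mul_le_mul_of_nonneg_left (latt_down h0 h1 w h a b) (Finset.sum_nonneg fun Y (_ : Y ∈ univ) => hw Y)
      nlinarith)
  have e1 : ∀ X, (if P X then (0:ℝ) else 1) = 1 - (if P X then 1 else 0) := by
    intro X; split_ifs <;> norm_num
  simp_rw [e1, sub_mul, one_mul, Finset.sum_sub_distrib] at this
  rw [← Finset.mul_sum, sum_mu, mul_one] at this
  have e2 : ∑ X, (if P X then (1:ℝ) else 0) * ((∑ Y, w Y) * mu q X)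
      = (∑ X, w X) * ∑ X, mu q X * (if P X then 1 else 0) := by
    rw [Finset.mul_sum]
    exact Finset.sum_congr rfl fun X _ => by ring
  linarith

/-- Bottleneck bound. -/
lemma bottleneck (K : Config n → Config n → ℝ) (π : Config n → ℝ)
    (hK0 : ∀ X Y, 0 ≤ K X Y) (hK1 : ∀ X, ∑ Y, K X Y = 1)
    (hst : ∀ Y, ∑ X, π X * K X Y = π Y) (hπ0 : ∀ X, 0 ≤ π X) (hπ1 : ∑ X, π X = 1)
    (A D : Finset (Config n)) (hD : ∀ X ∈ A, X ∉ D → ∀ Y, Y ∉ A → K X Y = 0)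
    (hA : 0 < ∑ X ∈ A, π X) (hA2 : ∑ X ∈ A, π X ≤ 1 / 2) (δ : ℝ)
    (hδ : ∑ X ∈ D, π X ≤ δ * ∑ X ∈ A, π X) (t : ℕ) (ht : t * δ < 1 / 10) :
    ¬ mixes K π t := by
  have k0 : ∀ t X Y, 0 ≤ kernelStep K t X Y := by
    intro t
    induction t with
    | zero => intro X Y; simp only [kernelStep]; split_ifs <;> norm_num
    | succ t ih =>
      intro X Y; simp only [kernelStep]
      exact Finset.sum_nonneg fun Z _ => mul_nonneg (ih X Z) (hK0 Z Y)
  have k1 : ∀ t X, ∑ Y, kernelStep K t X Y = 1 := by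
    intro t
    induction t with
    | zero => intro X; simp [kernelStep]
    | succ t ih =>
      intro X; simp only [kernelStep]
      rw [Finset.sum_comm]
      simp_rw [← Finset.mul_sum, hK1, mul_one]
      exact ih X
  have kst : ∀ t Y, ∑ X, π X * kernelStep K t X Y = π Y := by
    intro t
    induction t with
    | zero => intro Y; simp [kernelStep]
    | succ t ih =>
      intro Y; simp only [kernelStep]
      simp_rw [Finset.mul_sum]
      rw [Finset.sum_comm]
      simp_rw [← mul_assoc, ← Finset.sum_mul, ih]
      exact hst Y
  have kc : ∀ Z (S : Finset (Config n)), ∑ Y ∈ S, K Z Y ≤ 1 := by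
    intro Z S
    rw [← hK1 Z]
    exact Finset.sum_le_univ_sum_of_nonneg (hK0 Z)
  have F : ∀ t : ℕ, ∑ X ∈ A, π X * ∑ Y ∈ Aᶜ, kernelStep K t X Y ≤ t * ∑ X ∈ D, π X := by
    intro t
    induction t with
    | zero =>
      simp only [kernelStep, Nat.cast_zero, zero_mul]
      apply le_of_eq
      apply Finset.sum_eq_zero
      intro X hX
      rw [Finset.sum_eq_zero, mul_zero]
      intro Y hY
      rw [if_neg]
      rintro rfl
      exact (Finset.mem_compl.mp hY) hX
    | succ t ih =>
      have step : ∀ X, ∑ Y ∈ Aᶜ, kernelStep K (t+1) X Y ≤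
          ∑ Y ∈ Aᶜ, kernelStep K t X Y + ∑ Z ∈ D, kernelStep K t X Z := by
        intro X
        simp only [kernelStep]
        rw [Finset.sum_comm]
        simp_rw [← Finset.mul_sum]
        have : ∀ Z, kernelStep K t X Z * ∑ Y ∈ Aᶜ, K Z Y ≤
            (if Z ∈ Aᶜ then kernelStep K t X Z else 0) + (if Z ∈ D then kernelStep K t X Z else 0) := by
          intro Z
          have hk := k0 t X Z
          have hkk : kernelStep K t X Z * ∑ Y ∈ Aᶜ, K Z Y ≤ kernelStep K t X Z :=
            mul_le_of_le_one_right hk (kc Z _)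
          by_cases hZA : Z ∈ A
          · by_cases hZD : Z ∈ D
            · simp [hZA, hZD]; exact hkk
            · have : ∑ Y ∈ Aᶜ, K Z Y = 0 :=
                Finset.sum_eq_zero fun Y hY => hD Z hZA hZD Y (Finset.mem_compl.mp hY)
              simp [hZA, hZD, this]
          · by_cases hZD : Z ∈ D
            · simp [hZA, hZD]; linarith
            · simp [hZA, hZD]; exact hkk
        refine (Finset.sum_le_sum fun Z _ => this Z).trans (le_of_eq ?_)
        rw [Finset.sum_add_distrib, Finset.sum_ite_mem, Finset.sum_ite_mem, Finset.univ_inter, Finset.univ_inter]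
      have s2 : ∑ X ∈ A, π X * ∑ Z ∈ D, kernelStep K t X Z ≤ ∑ Z ∈ D, π Z := by
        simp_rw [Finset.mul_sum]
        rw [Finset.sum_comm]
        refine Finset.sum_le_sum fun Z _ => ?_
        rw [← kst t Z]
        exact Finset.sum_le_univ_sum_of_nonneg fun X => mul_nonneg (hπ0 X) (k0 t X Z)
      calc ∑ X ∈ A, π X * ∑ Y ∈ Aᶜ, kernelStep K (t+1) X Y
          ≤ ∑ X ∈ A, (π X * ∑ Y ∈ Aᶜ, kernelStep K t X Y + π X * ∑ Z ∈ D, kernelStep K t X Z) :=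
            Finset.sum_le_sum fun X _ => by
              rw [← mul_add]; exact mul_le_mul_of_nonneg_left (step X) (hπ0 X)
        _ ≤ t * ∑ X ∈ D, π X + ∑ X ∈ D, π X := by rw [Finset.sum_add_distrib]; linarith
        _ = _ := by push_cast; ring
  intro hmix
  have he : Real.exp (-1) ≤ 0.38 := by
    rw [Real.exp_neg]
    have := Real.exp_one_gt_d9
    rw [inv_le_comm₀ (Real.exp_pos _) (by norm_num)]
    norm_num
    linarith
  have low : ∀ X, (1:ℝ)/10 ≤ ∑ Y ∈ Aᶜ, kernelStep K t X Y := by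
    intro X
    have h1 := hmix X
    unfold tvDist at h1
    have h2 : ∑ Y ∈ A, (kernelStep K t X Y - π Y) ≤ ∑ Y ∈ A, |kernelStep K t X Y - π Y| :=
      Finset.sum_le_sum fun Y _ => le_abs_self _
    have h3 : ∑ Y ∈ Aᶜ, (π Y - kernelStep K t X Y) ≤ ∑ Y ∈ Aᶜ, |kernelStep K t X Y - π Y| :=
      Finset.sum_le_sum fun Y _ => by rw [abs_sub_comm]; exact le_abs_self _
    have h4 := Finset.sum_add_sum_compl A (fun Y => |kernelStep K t X Y - π Y|)
    have h5 := Finset.sum_add_sum_compl A (fun Y => kernelStep K t X Y)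
    have h6 := Finset.sum_add_sum_compl A π
    have h7 := k1 t X
    rw [Finset.sum_sub_distrib] at h2 h3
    linarith
  have h1 : ∑ X ∈ A, π X * (1/10) ≤ ∑ X ∈ A, π X * ∑ Y ∈ Aᶜ, kernelStep K t X Y :=
    Finset.sum_le_sum fun X _ => mul_le_mul_of_nonneg_left (low X) (hπ0 X)
  rw [← Finset.sum_mul] at h1
  have h2 := F t
  have h3 : (t:ℝ) * ∑ X ∈ D, π X ≤ t * (δ * ∑ X ∈ A, π X) :=
    mul_le_mul_of_nonneg_left hδ (Nat.cast_nonneg t)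
  nlinarith

end LT

end

noncomputable section

namespace LT

lemma mapEdge_inj {m n : ℕ} (v : Fin m ↪ Fin n) {a b : EdgeK m} (h : mapEdge v a = mapEdge v b) :
    a = b := by
  have := congrArg Subtype.val h
  exact Subtype.ext (Sym2.map.injective v.injective this)

lemma count_spec {m n k : ℕ} (t : Fin k ↪ Fin n) (s : Fin k → Fin m) :
    (univ.filter fun v : Fin m ↪ Fin n => ∀ j, v (s j) = t j).card * n ^ k ≤ n ^ m := by
  have h1 : (n ^ k) = (univ : Finset (Fin k → Fin n)).card := by simp
  have h2 : (n ^ m) = (univ : Finset (Fin m → Fin n)).card := by simp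
  rw [h1, h2, ← Finset.card_product]
  refine Finset.card_le_card_of_injOn
    (fun p i => if h : ∃ j, s j = i then p.2 h.choose else p.1 i) (fun _ _ => by simp) ?_
  rintro ⟨v, y⟩ hv ⟨v', y'⟩ hv' heq
  simp only [Finset.coe_product, Set.mem_prod, Finset.mem_coe, Finset.mem_filter, Finset.mem_univ,
    true_and, and_true] at hv hv'
  have hs : Function.Injective s := by
    intro j j' hj
    apply t.injective
    rw [← hv j, ← hv j', hj]
  have hfun : ∀ i, (if h : ∃ j, s j = i then y h.choose else v i)
      = (if h : ∃ j, s j = i then y' h.choose else v' i) := fun i => congrFun heq i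
  have hy : y = y' := by
    funext j
    have h := hfun (s j)
    have hex : ∃ j', s j' = s j := ⟨j, rfl⟩
    have hc : hex.choose = j := hs hex.choose_spec
    rw [dif_pos hex, dif_pos hex, hc] at h
    exact h
  have hvv : v = v' := by
    apply Function.Embedding.ext
    intro i
    by_cases hi : ∃ j, s j = i
    · obtain ⟨j, rfl⟩ := hi
      rw [hv j, hv' j]
    · have h := hfun i
      rwa [dif_neg hi, dif_neg hi] at h
  rw [hy, hvv]

lemma count_range {m n k : ℕ} (t : Fin k ↪ Fin n) :
    (univ.filter fun v : Fin m ↪ Fin n => ∀ j, ∃ i, v i = t j).card * n ^ k ≤ m ^ k * n ^ m := by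
  have hsub : (univ.filter fun v : Fin m ↪ Fin n => ∀ j, ∃ i, v i = t j) ⊆
      (univ : Finset (Fin k → Fin m)).biUnion
        (fun s => univ.filter fun v : Fin m ↪ Fin n => ∀ j, v (s j) = t j) := by
    intro v hv
    simp only [Finset.mem_filter, Finset.mem_univ, true_and] at hv
    choose s hs using hv
    simp only [Finset.mem_biUnion, Finset.mem_filter, Finset.mem_univ, true_and]
    exact ⟨s, hs⟩
  calc _ ≤ (∑ s : Fin k → Fin m,
        (univ.filter fun v : Fin m ↪ Fin n => ∀ j, v (s j) = t j).card) * n ^ k :=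
        Nat.mul_le_mul_right _ ((Finset.card_le_card hsub).trans Finset.card_biUnion_le)
    _ = ∑ s : Fin k → Fin m,
        (univ.filter fun v : Fin m ↪ Fin n => ∀ j, v (s j) = t j).card * n ^ k := Finset.sum_mul _ _ _
    _ ≤ ∑ s : Fin k → Fin m, n ^ m := Finset.sum_le_sum fun s _ => count_spec t s
    _ = _ := by simp

/-- The embedding `v` maps some edge of `G` to `e`. -/
def hit {m n : ℕ} (G : Finset (EdgeK m)) (v : Fin m ↪ Fin n) (e : EdgeK n) : Prop :=
  ∃ a ∈ G, mapEdge v a = e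

/-- Number of embeddings using `e`. -/
def hitCount {m n : ℕ} (G : Finset (EdgeK m)) (e : EdgeK n) : ℕ :=
  (univ.filter fun v : Fin m ↪ Fin n => hit G v e).card

/-- Number of embeddings using `e` and `e'`. -/
def hit2 {m n : ℕ} (G : Finset (EdgeK m)) (e e' : EdgeK n) : ℕ :=
  (univ.filter fun v : Fin m ↪ Fin n => hit G v e ∧ hit G v e').card

lemma hit_range {m n : ℕ} {G : Finset (EdgeK m)} {v : Fin m ↪ Fin n} {e : EdgeK n}
    (h : hit G v e) {x : Fin n} (hx : x ∈ e.1) : ∃ i, v i = x := by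
  obtain ⟨a, _, rfl⟩ := h
  unfold mapEdge at hx
  obtain ⟨i, _, hi⟩ := Sym2.mem_map.mp hx
  exact ⟨i, hi⟩

lemma edge_repr {n : ℕ} (e : EdgeK n) : ∃ x y, x ≠ y ∧ e.1 = s(x, y) := by
  obtain ⟨e, he⟩ := e
  induction e using Sym2.ind with
  | _ x y => exact ⟨x, y, fun h => he (by simpa using h), rfl⟩

lemma hitCount_le {m n : ℕ} (G : Finset (EdgeK m)) (e : EdgeK n) :
    hitCount G e * n ^ 2 ≤ m ^ 2 * n ^ m := by
  obtain ⟨x, y, hxy, he⟩ := edge_repr e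
  let t : Fin 2 ↪ Fin n := ⟨![x, y], by
    intro i j; fin_cases i <;> fin_cases j <;> simp [hxy, hxy.symm]⟩
  refine le_trans (Nat.mul_le_mul_right _ (Finset.card_le_card ?_)) (count_range (m := m) t)
  intro v hv
  simp only [Finset.mem_filter, Finset.mem_univ, true_and] at hv ⊢
  intro j
  apply hit_range hv
  rw [he]
  fin_cases j
  · exact Sym2.mem_mk_left x y
  · exact Sym2.mem_mk_right x y

lemma hit2_le {m n : ℕ} (G : Finset (EdgeK m)) {e e' : EdgeK n} (hne : e ≠ e') :
    hit2 G e e' * n ^ 3 ≤ m ^ 3 * n ^ m := by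
  obtain ⟨x, y, hxy, he⟩ := edge_repr e
  obtain ⟨x', y', hxy', he'⟩ := edge_repr e'
  have hz : ∃ z, z ∈ e'.1 ∧ z ≠ x ∧ z ≠ y := by
    by_contra hcon
    push Not at hcon
    have h1 := hcon x' (by rw [he']; simp)
    have h2 := hcon y' (by rw [he']; simp)
    apply hne
    apply Subtype.ext
    rw [he, he']
    by_cases hx : x' = x
    · by_cases hy : y' = x
      · exact absurd (hx.trans hy.symm) hxy'
      · rw [hx, h2 hy]
    · have := h1 hx
      by_cases hy : y' = x
      · rw [this, hy]; exact Sym2.eq_swap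
      · exact absurd (this.trans (h2 hy).symm) hxy'
  obtain ⟨z, hz, hzx, hzy⟩ := hz
  let t : Fin 3 ↪ Fin n := ⟨![x, y, z], by
    intro i j; fin_cases i <;> fin_cases j <;> simp [hxy, hxy.symm, hzx, hzy, hzx.symm, hzy.symm]⟩
  refine le_trans (Nat.mul_le_mul_right _ (Finset.card_le_card ?_)) (count_range (m := m) t)
  intro v hv
  simp only [Finset.mem_filter, Finset.mem_univ, true_and] at hv ⊢
  intro j
  fin_cases j
  · exact hit_range hv.1 (by rw [he]; exact Sym2.mem_mk_left x y)
  · exact hit_range hv.1 (by rw [he]; exact Sym2.mem_mk_right x y)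
  · exact hit_range hv.2 hz

lemma sum_hit2 {m n : ℕ} (G : Finset (EdgeK m)) (e : EdgeK n) :
    ∑ e', hit2 G e e' ≤ G.card * hitCount G e := by
  unfold hit2 hitCount
  simp_rw [Finset.card_filter]
  rw [Finset.sum_comm, Finset.mul_sum]
  refine Finset.sum_le_sum fun v _ => ?_
  by_cases h : hit G v e
  · simp only [h, true_and, if_true, mul_one]
    rw [← Finset.card_filter]
    have : (univ.filter fun e' => hit G v e') ⊆ G.image (mapEdge v) := by
      intro e' he'
      simp only [Finset.mem_filter, Finset.mem_univ, true_and] at he'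
      obtain ⟨a, ha, rfl⟩ := he'
      exact Finset.mem_image_of_mem _ ha
    exact (Finset.card_le_card this).trans Finset.card_image_le
  · simp [h]

lemma rooted_eq {m n : ℕ} (X : Config n) (G : Finset (EdgeK m)) (e : EdgeK n) :
    rootedCount X G e =
      (univ.filter fun v : Fin m ↪ Fin n => hit G v e ∧ ∀ a ∈ G, addEdge X e (mapEdge v a) = true).card := by
  unfold rootedCount hit
  congr 1
  ext v
  simp only [Finset.mem_filter]

lemma rooted_diff {m n : ℕ} (X Y : Config n) (G : Finset (EdgeK m)) (e : EdgeK n) :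
    rootedCount X G e ≤ rootedCount Y G e +
      ∑ e' ∈ univ.filter (fun f => X f ≠ Y f), if e' = e then 0 else hit2 G e e' := by
  have hsub : (univ.filter fun v : Fin m ↪ Fin n => hit G v e ∧ ∀ a ∈ G, addEdge X e (mapEdge v a) = true) ⊆
      (univ.filter fun v : Fin m ↪ Fin n => hit G v e ∧ ∀ a ∈ G, addEdge Y e (mapEdge v a) = true) ∪
      ((univ.filter (fun f => X f ≠ Y f)).filter (fun e' => e' ≠ e)).biUnion
        (fun e' => univ.filter fun v : Fin m ↪ Fin n => hit G v e ∧ hit G v e') := by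
    intro v hv
    simp only [Finset.mem_filter, Finset.mem_univ, true_and] at hv
    simp only [Finset.mem_union, Finset.mem_filter, Finset.mem_univ, true_and, Finset.mem_biUnion]
    by_cases hY : ∀ a ∈ G, addEdge Y e (mapEdge v a) = true
    · exact Or.inl ⟨hv.1, hY⟩
    · right
      push Not at hY
      obtain ⟨a, ha, hYa⟩ := hY
      have hXa := hv.2 a ha
      unfold addEdge at hYa hXa
      by_cases hae : mapEdge v a = e
      · simp [hae] at hYa
      · simp only [hae, if_false] at hYa hXa
        refine ⟨mapEdge v a, ⟨?_, hae⟩, hv.1, a, ha, rfl⟩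
        rw [hXa]; exact fun h => hYa h.symm
  rw [rooted_eq, rooted_eq]
  refine (Finset.card_le_card hsub).trans ((Finset.card_union_le _ _).trans ?_)
  gcongr
  refine Finset.card_biUnion_le.trans (le_of_eq ?_)
  rw [Finset.sum_filter]
  refine Finset.sum_congr rfl fun e' _ => ?_
  by_cases h : e' = e <;> simp [h, hit2]

lemma copy_set {m n : ℕ} (X : Config n) (G : Finset (EdgeK m)) (e : EdgeK n) :
    copyCount (setEdge X e true) G = copyCount (setEdge X e false) G + rootedCount X G e := by
  unfold copyCount
  rw [rooted_eq, ← Finset.card_union_of_disjoint]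
  · congr 1
    ext v
    simp only [Finset.mem_union, Finset.mem_filter, Finset.mem_univ, true_and]
    constructor
    · intro h
      by_cases hh : hit G v e
      · exact Or.inr ⟨hh, h⟩
      · left
        intro a ha
        have h1 := h a ha
        have : mapEdge v a ≠ e := fun h2 => hh ⟨a, ha, h2⟩
        simpa [setEdge, this] using h1
    · rintro (h | h)
      · intro a ha
        have h1 := h a ha
        unfold setEdge at *
        split_ifs at *; all_goals simp_all
      · exact h.2
  · rw [Finset.disjoint_filter]
    rintro v _ h ⟨⟨a, ha, hae⟩, _⟩
    have := h a ha
    simp [setEdge, hae] at this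

lemma rooted_mono {m n : ℕ} {X Y : Config n} (h : X ≤ Y) (G : Finset (EdgeK m)) (e : EdgeK n) :
    rootedCount X G e ≤ rootedCount Y G e := by
  rw [rooted_eq, rooted_eq]
  apply Finset.card_le_card
  intro v
  simp only [Finset.mem_filter, Finset.mem_univ, true_and]
  rintro ⟨h1, h2⟩
  refine ⟨h1, fun a ha => ?_⟩
  have h3 := h2 a ha
  unfold addEdge at *
  split_ifs at * with h4
  · rfl
  · have := h (mapEdge v a)
    rw [h3] at this
    exact Bool.eq_true_of_true_le this

lemma rooted_one {m n : ℕ} (X : Config n) {G : Finset (EdgeK m)} (hG : G.card = 1) (e : EdgeK n) :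
    rootedCount X G e = hitCount G e := by
  obtain ⟨a, rfl⟩ := Finset.card_eq_one.mp hG
  rw [rooted_eq]; unfold hitCount
  congr 1
  ext v
  rw [Finset.mem_filter, Finset.mem_filter]
  simp only [Finset.mem_univ, true_and, hit, Finset.mem_singleton, exists_eq_left, forall_eq]
  constructor
  · exact fun h => h.1
  · intro h; exact ⟨h, by simp [addEdge, h]⟩

lemma exp_rooted {m n : ℕ} (q : ℝ) (G : Finset (EdgeK m)) (e : EdgeK n) :
    ∑ X : Config n, mu q X * (rootedCount X G e : ℝ) = q ^ (G.card - 1) * hitCount G e := by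
  have h1 : ∀ X : Config n, (rootedCount X G e : ℝ) =
      ∑ v ∈ univ.filter (fun v : Fin m ↪ Fin n => hit G v e),
        if ∀ f ∈ (G.image (mapEdge v)).erase e, X f = true then (1:ℝ) else 0 := by
    intro X
    rw [rooted_eq, ← Finset.filter_filter, Finset.card_filter]
    push_cast
    refine Finset.sum_congr rfl fun v _ => ?_
    congr 1
    apply propext
    constructor
    · intro h f hf
      rw [Finset.mem_erase, Finset.mem_image] at hf
      obtain ⟨hne, a, ha, rfl⟩ := hf
      have := h a ha
      simpa [addEdge, hne] using this
    · intro h a ha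
      unfold addEdge
      split_ifs with hae
      · rfl
      · exact h _ (Finset.mem_erase.mpr ⟨hae, Finset.mem_image_of_mem _ ha⟩)
  simp_rw [h1, Finset.mul_sum]
  rw [Finset.sum_comm]
  have h2 : ∀ v ∈ univ.filter (fun v : Fin m ↪ Fin n => hit G v e),
      ∑ X : Config n, mu q X * (if ∀ f ∈ (G.image (mapEdge v)).erase e, X f = true then (1:ℝ) else 0)
        = q ^ (G.card - 1) := by
    intro v hv
    simp only [Finset.mem_filter, Finset.mem_univ, true_and] at hv
    have := sum_mu_ind q ((G.image (mapEdge v)).erase e)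
    rw [this]
    congr 1
    obtain ⟨a, ha, hae⟩ := hv
    rw [Finset.card_erase_of_mem (hae ▸ Finset.mem_image_of_mem _ ha),
      Finset.card_image_of_injective _ (fun a b h => mapEdge_inj v h)]
  rw [Finset.sum_congr rfl h2]
  simp [hitCount, mul_comm]

lemma perm_exists {n : ℕ} {x y x' y' : Fin n} (h : x ≠ y) (h' : x' ≠ y') :
    ∃ σ : Equiv.Perm (Fin n), σ x = x' ∧ σ y = y' := by
  refine ⟨(Equiv.swap x x').trans (Equiv.swap (Equiv.swap x x' y) y'), ?_, ?_⟩
  · simp only [Equiv.trans_apply, Equiv.swap_apply_left]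
    apply Equiv.swap_apply_of_ne_of_ne
    · intro h1
      have : Equiv.swap x x' x = Equiv.swap x x' y := by rw [Equiv.swap_apply_left]; exact h1
      exact h ((Equiv.swap x x').injective this)
    · exact h'
  · simp

lemma hit_single {m n : ℕ} (a : EdgeK m) (e e' : EdgeK n) :
    (univ.filter fun v : Fin m ↪ Fin n => mapEdge v a = e).card ≤
    (univ.filter fun v : Fin m ↪ Fin n => mapEdge v a = e').card := by
  obtain ⟨x, y, hxy, he⟩ := edge_repr e
  obtain ⟨x', y', hxy', he'⟩ := edge_repr e'
  obtain ⟨σ, hx, hy⟩ := perm_exists hxy hxy'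
  refine Finset.card_le_card_of_injOn (fun v => v.trans σ.toEmbedding) ?_ ?_
  · intro v hv
    simp only [Finset.coe_filter, Finset.mem_univ, true_and, Set.mem_ofPred_eq] at hv ⊢
    apply Subtype.ext
    have h1 : a.1.map v = s(x, y) := by rw [← he, ← hv]; rfl
    have h2 : (mapEdge (v.trans σ.toEmbedding) a).1 = (a.1.map v).map σ := by
      rw [Sym2.map_map]; rfl
    rw [h2, h1, he', Sym2.map_mk]
    simp [hx, hy]
  · intro v _ v' _ h
    apply Function.Embedding.ext
    intro i
    have := congrArg (fun w : Fin m ↪ Fin n => w i) h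
    simpa using this

lemma card_edge (n : ℕ) : Fintype.card (EdgeK n) = n.choose 2 := by
  have := Sym2.card_subtype_not_diag (α := Fin n)
  rw [Fintype.card_fin] at this
  rw [← this]

lemma hit_single_count {m n : ℕ} (a : EdgeK m) (e : EdgeK n) :
    (univ.filter fun v : Fin m ↪ Fin n => mapEdge v a = e).card * n.choose 2 = n.descFactorial m := by
  have h1 : ∑ e' : EdgeK n, (univ.filter fun v : Fin m ↪ Fin n => mapEdge v a = e').card
      = n.descFactorial m := by
    rw [← Finset.card_eq_sum_card_fiberwise (f := fun v : Fin m ↪ Fin n => mapEdge v a)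
      (s := univ) (t := univ) (fun _ _ => by simp)]
    rw [Finset.card_univ, Fintype.card_embedding_eq]; simp only [Fintype.card_fin]
  have h2 : ∀ e' ∈ (univ : Finset (EdgeK n)), (univ.filter fun v : Fin m ↪ Fin n => mapEdge v a = e').card
      = (univ.filter fun v : Fin m ↪ Fin n => mapEdge v a = e).card :=
    fun e' _ => le_antisymm (hit_single a e' e) (hit_single a e e')
  rw [Finset.sum_congr rfl h2, Finset.sum_const, Finset.card_univ] at h1
  rw [card_edge] at h1
  rw [mul_comm]; simpa using h1

lemma hitCount_exact {m n : ℕ} (G : Finset (EdgeK m)) (e : EdgeK n) :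
    hitCount G e * n.choose 2 = G.card * n.descFactorial m := by
  have : hitCount G e = ∑ a ∈ G, (univ.filter fun v : Fin m ↪ Fin n => mapEdge v a = e).card := by
    unfold hitCount
    rw [← Finset.card_biUnion]
    · congr 1
      ext v
      simp [hit]
    · intro a _ b _ hab
      rw [Function.onFun, Finset.disjoint_filter]
      intro v _ h1 h2
      exact hab (mapEdge_inj v (h1.trans h2.symm))
  rw [this, Finset.sum_mul, Finset.sum_congr rfl (fun a _ => hit_single_count a e)]
  simp

end LT

end

noncomputable section

namespace LT

/-- logistic function -/
def sg (u : ℝ) : ℝ := Real.exp u / (1 + Real.exp u)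

lemma sg_pos (u : ℝ) : 0 < sg u := by unfold sg; positivity

lemma sg_lt (u : ℝ) : sg u < 1 := by
  unfold sg; rw [div_lt_one (by positivity)]; linarith

lemma one_sub_sg (u : ℝ) : 1 - sg u = 1 / (1 + Real.exp u) := by
  unfold sg; field_simp; ring

lemma sg_rel (u : ℝ) : sg u = Real.exp u * (1 - sg u) := by
  rw [one_sub_sg]; unfold sg; field_simp

section
variable {s : ℕ} {V : Fin s → ℕ} (Pt : ∀ i, Finset (EdgeK (V i))) (β : Fin s → ℝ)

lemma Psi_diff : Differentiable ℝ (PsiF Pt β) := by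
  unfold PsiF; fun_prop

lemma sg_diff : Differentiable ℝ sg := by
  unfold sg
  intro x
  refine DifferentiableAt.div (by fun_prop) (by fun_prop) ?_
  positivity

lemma crit {p : ℝ} (hp : phiF Pt β p = p) (hd : deriv (phiF Pt β) p < 1) :
    ∃ d < 1, HasDerivAt (fun u => PsiF Pt β (sg u)) d (PsiF Pt β p) ∧ sg (PsiF Pt β p) = p := by
  have h0 : sg (PsiF Pt β p) = p := hp
  have h1 : HasDerivAt (phiF Pt β) (deriv sg (PsiF Pt β p) * deriv (PsiF Pt β) p) p :=
    HasDerivAt.comp p (sg_diff _).hasDerivAt (Psi_diff Pt β p).hasDerivAt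
  have h2 : HasDerivAt (fun u => PsiF Pt β (sg u))
      (deriv (PsiF Pt β) p * deriv sg (PsiF Pt β p)) (PsiF Pt β p) := by
    refine HasDerivAt.comp (h₂ := PsiF Pt β) (PsiF Pt β p) ?_ (sg_diff _).hasDerivAt
    rw [h0]; exact (Psi_diff Pt β p).hasDerivAt
  refine ⟨_, ?_, h2, h0⟩
  rw [mul_comm, ← h1.deriv]; exact hd

lemma gap_right {g : ℝ → ℝ} {d u₀ : ℝ} (hd : d < 1) (hg : HasDerivAt g d u₀) (h0 : g u₀ = u₀) :
    ∀ᶠ u in nhdsWithin u₀ (Set.Ioi u₀), g u < u := by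
  have h1 : HasDerivAt (fun u => g u - u) (d - 1) u₀ := hg.sub (hasDerivAt_id u₀)
  have h2 := h1.hasDerivWithinAt (s := Set.Ioi u₀)
  rw [hasDerivWithinAt_iff_tendsto_slope' (by simp)] at h2
  have h3 := h2.eventually_lt_const (show d - 1 < 0 by linarith)
  filter_upwards [h3, self_mem_nhdsWithin] with u hu hmem
  rw [slope_def_field] at hu
  have hpos : 0 < u - u₀ := sub_pos.mpr hmem
  rw [div_lt_iff₀ hpos] at hu
  rw [h0] at hu
  linarith

lemma gap_left {g : ℝ → ℝ} {d u₀ : ℝ} (hd : d < 1) (hg : HasDerivAt g d u₀) (h0 : g u₀ = u₀) :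
    ∀ᶠ u in nhdsWithin u₀ (Set.Iio u₀), u < g u := by
  have h1 : HasDerivAt (fun u => g u - u) (d - 1) u₀ := hg.sub (hasDerivAt_id u₀)
  have h2 := h1.hasDerivWithinAt (s := Set.Iio u₀)
  rw [hasDerivWithinAt_iff_tendsto_slope' (by simp)] at h2
  have h3 := h2.eventually_lt_const (show d - 1 < 0 by linarith)
  filter_upwards [h3, self_mem_nhdsWithin] with u hu hmem
  rw [slope_def_field] at hu
  have hpos : u - u₀ < 0 := sub_neg.mpr hmem
  rw [div_lt_iff_of_neg hpos] at hu
  rw [h0] at hu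
  linarith

lemma thresholds (h : LowTemp Pt β) : ∃ u w : ℝ, u < w ∧ PsiF Pt β (sg u) < u ∧ w < PsiF Pt β (sg w) := by
  obtain ⟨p₁, p₂, _, _, hne, h1, h2, d1, d2⟩ := h
  wlog hlt : PsiF Pt β p₁ < PsiF Pt β p₂ generalizing p₁ p₂
  · refine this p₂ p₁ ‹_› ‹_› hne.symm h2 h1 d2 d1 ?_
    refine lt_of_le_of_ne (not_lt.mp hlt) ?_
    intro heq
    apply hne
    rw [← h1, ← h2]
    unfold phiF
    rw [heq]
  obtain ⟨a, ha, hda, sa⟩ := crit Pt β h1 d1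
  obtain ⟨b, hb, hdb, sb⟩ := crit Pt β h2 d2
  set u₁ := PsiF Pt β p₁ with hu1
  set u₂ := PsiF Pt β p₂ with hu2
  have e1 := gap_right ha hda (by rw [sa])
  have e2 := gap_left hb hdb (by rw [sb])
  have m1 : ∀ᶠ u in nhdsWithin u₁ (Set.Ioi u₁), u < (u₁ + u₂) / 2 :=
    nhdsWithin_le_nhds (eventually_lt_nhds (by linarith))
  have m2 : ∀ᶠ u in nhdsWithin u₂ (Set.Iio u₂), (u₁ + u₂) / 2 < u :=
    nhdsWithin_le_nhds (eventually_gt_nhds (by linarith))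
  obtain ⟨u, hu, hu'⟩ := (e1.and m1).exists
  obtain ⟨w, hw, hw'⟩ := (e2.and m2).exists
  exact ⟨u, w, by linarith, hu, hw⟩

end

section
variable {s : ℕ} (V : Fin s → ℕ) (Pt : ∀ i, Finset (EdgeK (V i))) (β : Fin s → ℝ)

lemma dH_eq (n : ℕ) (X : Config n) (e : EdgeK n) :
    dH V Pt β n X e = ∑ i, β i * (rootedCount X (Pt i) e : ℝ) / (n : ℝ) ^ (V i - 2) := by
  unfold dH ergmH
  rw [← Finset.sum_sub_distrib]
  refine Finset.sum_congr rfl fun i _ => ?_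
  rw [copy_set]; push_cast; ring

/-- influence of the edge `e'` on `dH` at `e` -/
def infl (n : ℕ) (e e' : EdgeK n) : ℝ :=
  if e' = e then 0 else ∑ i, |β i| * (hit2 (Pt i) e e' : ℝ) / (n : ℝ) ^ (V i - 2)

lemma infl_nonneg (n : ℕ) (e e' : EdgeK n) : 0 ≤ infl V Pt β n e e' := by
  unfold infl; split_ifs
  · exact le_rfl
  · positivity

lemma dH_lip_le (n : ℕ) (X Y : Config n) (e : EdgeK n) :
    |dH V Pt β n X e - dH V Pt β n Y e| ≤ ∑ e' ∈ univ.filter (fun f => X f ≠ Y f), infl V Pt β n e e' := by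
  rw [dH_eq, dH_eq, ← Finset.sum_sub_distrib]
  refine (Finset.abs_sum_le_sum_abs _ _).trans ?_
  have h : ∀ e', infl V Pt β n e e' = ∑ i, |β i| * ((if e' = e then 0 else hit2 (Pt i) e e' : ℕ) : ℝ) / (n : ℝ) ^ (V i - 2) := by
    intro e'
    unfold infl
    split_ifs <;> simp
  simp_rw [h]
  rw [Finset.sum_comm]
  refine Finset.sum_le_sum fun i _ => ?_
  rw [← sub_div, ← mul_sub, abs_div, abs_mul, ← Finset.sum_div, ← Finset.mul_sum,
    abs_of_nonneg (by positivity : (0:ℝ) ≤ (n : ℝ) ^ (V i - 2))]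
  have h1 := rooted_diff X Y (Pt i) e
  have h2 := rooted_diff Y X (Pt i) e
  have h3 : (univ.filter fun f => Y f ≠ X f) = univ.filter fun f => X f ≠ Y f := by
    ext f; simp [ne_comm]
  rw [h3] at h2
  have h1' : (rootedCount X (Pt i) e : ℝ) ≤ rootedCount Y (Pt i) e + ∑ e' ∈ univ.filter (fun f => X f ≠ Y f), ((if e' = e then 0 else hit2 (Pt i) e e' : ℕ) : ℝ) := by
    exact_mod_cast h1
  have h2' : (rootedCount Y (Pt i) e : ℝ) ≤ rootedCount X (Pt i) e + ∑ e' ∈ univ.filter (fun f => X f ≠ Y f), ((if e' = e then 0 else hit2 (Pt i) e e' : ℕ) : ℝ) := by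
    exact_mod_cast h2
  gcongr
  rw [abs_le]; constructor <;> linarith

/-- constant -/
def C1 : ℝ := ∑ i, |β i| * (V i : ℝ) ^ 3
/-- constant -/
def C2 : ℝ := ∑ i, |β i| * ((Pt i).card * (V i : ℝ) ^ 2)

lemma C1_nonneg : 0 ≤ C1 V β := by unfold C1; positivity
lemma C2_nonneg : 0 ≤ C2 V Pt β := by unfold C2; positivity

lemma infl_le (hV2 : ∀ i, 2 ≤ V i) {n : ℕ} (hn : 0 < n) (e e' : EdgeK n) :
    infl V Pt β n e e' ≤ C1 V β / n := by
  have hn' : (0:ℝ) < n := by exact_mod_cast hn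
  unfold infl; split_ifs with h
  · exact div_nonneg (C1_nonneg V β) hn'.le
  · unfold C1
    rw [Finset.sum_div]
    refine Finset.sum_le_sum fun i _ => ?_
    rw [mul_div_assoc, mul_div_assoc]
    refine mul_le_mul_of_nonneg_left ?_ (abs_nonneg _)
    rw [div_le_div_iff₀ (by positivity) hn']
    have h1 := hit2_le (Pt i) (Ne.symm h)
    have h2 : (hit2 (Pt i) e e' : ℝ) * n ^ 3 ≤ (V i : ℝ) ^ 3 * n ^ (V i) := by exact_mod_cast h1
    have h3 : (n : ℝ) ^ (V i) = n ^ (V i - 2) * n ^ 2 := by rw [← pow_add]; congr 1; have := hV2 i; omega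
    rw [h3] at h2
    have : (hit2 (Pt i) e e' : ℝ) * n * n ^ 2 ≤ (V i : ℝ) ^ 3 * n ^ (V i - 2) * n ^ 2 := by
      calc _ = (hit2 (Pt i) e e' : ℝ) * n ^ 3 := by ring
        _ ≤ _ := h2
        _ = _ := by ring
    exact le_of_mul_le_mul_right this (by positivity)

lemma infl_sum (hV2 : ∀ i, 2 ≤ V i) {n : ℕ} (hn : 0 < n) (e : EdgeK n) :
    ∑ e', infl V Pt β n e e' ≤ C2 V Pt β := by
  have hn' : (0:ℝ) < n := by exact_mod_cast hn
  have : ∀ e', infl V Pt β n e e' ≤ ∑ i, |β i| * (hit2 (Pt i) e e' : ℝ) / (n : ℝ) ^ (V i - 2) := by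
    intro e'
    unfold infl; split_ifs
    · positivity
    · exact le_rfl
  refine (Finset.sum_le_sum fun e' _ => this e').trans ?_
  rw [Finset.sum_comm]
  refine Finset.sum_le_sum fun i _ => ?_
  rw [← Finset.sum_div, ← Finset.mul_sum, mul_div_assoc]
  refine mul_le_mul_of_nonneg_left ?_ (abs_nonneg _)
  rw [div_le_iff₀ (by positivity)]
  have h1 : (∑ e', (hit2 (Pt i) e e' : ℝ)) ≤ (Pt i).card * hitCount (Pt i) e := by
    exact_mod_cast sum_hit2 (Pt i) e
  have h2 : (hitCount (Pt i) e : ℝ) * n ^ 2 ≤ (V i : ℝ) ^ 2 * n ^ (V i) := by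
    exact_mod_cast hitCount_le (Pt i) e
  have h3 : (n : ℝ) ^ (V i) = n ^ (V i - 2) * n ^ 2 := by rw [← pow_add]; congr 1; have := hV2 i; omega
  rw [h3, ← mul_assoc] at h2
  have h4 := le_of_mul_le_mul_right h2 (by positivity)
  calc _ ≤ ((Pt i).card : ℝ) * hitCount (Pt i) e := h1
    _ ≤ (Pt i).card * ((V i : ℝ) ^ 2 * n ^ (V i - 2)) := by gcongr
    _ = _ := by ring

lemma infl_sq (hV2 : ∀ i, 2 ≤ V i) {n : ℕ} (hn : 0 < n) (e : EdgeK n) :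
    ∑ e', infl V Pt β n e e' ^ 2 ≤ C1 V β * C2 V Pt β / n := by
  calc _ ≤ ∑ e', C1 V β / n * infl V Pt β n e e' := Finset.sum_le_sum fun e' _ => by
        rw [sq]; exact mul_le_mul_of_nonneg_right (infl_le V Pt β hV2 hn e e') (infl_nonneg V Pt β n e e')
    _ ≤ C1 V β / n * C2 V Pt β := by
        rw [← Finset.mul_sum]
        exact mul_le_mul_of_nonneg_left (infl_sum V Pt β hV2 hn e)
          (div_nonneg (C1_nonneg V β) (Nat.cast_nonneg n))
    _ = _ := by ring

lemma dH_bdd (n : ℕ) (X : Config n) (e e' : EdgeK n) :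
    |dH V Pt β n (setEdge X e' true) e - dH V Pt β n (setEdge X e' false) e| ≤ infl V Pt β n e e' := by
  refine (dH_lip_le V Pt β n _ _ e).trans ?_
  rw [← Finset.sum_singleton (fun e' => infl V Pt β n e e') e']
  refine Finset.sum_le_sum_of_subset_of_nonneg ?_ fun f _ _ => infl_nonneg V Pt β n e f
  intro f hf
  simp only [Finset.mem_filter, Finset.mem_univ, true_and] at hf
  rw [Finset.mem_singleton]
  by_contra hne
  simp [setEdge, hne] at hf

lemma dH_lip (hV2 : ∀ i, 2 ≤ V i) {n : ℕ} (hn : 0 < n) (X Y : Config n) (e : EdgeK n) :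
    |dH V Pt β n X e - dH V Pt β n Y e| ≤ hamDist X Y * (C1 V β / n) := by
  refine (dH_lip_le V Pt β n _ _ e).trans ?_
  refine (Finset.sum_le_card_nsmul _ _ _ fun f _ => infl_le V Pt β hV2 hn e f).trans (le_of_eq ?_)
  rw [nsmul_eq_mul]; rfl

lemma dH_mono (hs : 0 < s) (hG1E : (Pt ⟨0, hs⟩).card = 1)
    (hβ : ∀ i : Fin s, 0 < (i : ℕ) → 0 < β i) {n : ℕ} {X Y : Config n} (h : X ≤ Y) (e : EdgeK n) :
    dH V Pt β n X e ≤ dH V Pt β n Y e := by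
  rw [dH_eq, dH_eq]
  refine Finset.sum_le_sum fun i _ => ?_
  by_cases hi : 0 < (i : ℕ)
  · have := hβ i hi
    have h2 : (rootedCount X (Pt i) e : ℝ) ≤ rootedCount Y (Pt i) e := by
      exact_mod_cast rooted_mono h (Pt i) e
    gcongr
  · have : i = ⟨0, hs⟩ := by apply Fin.ext; simp only; omega
    subst this
    rw [rooted_one X hG1E, rooted_one Y hG1E]

lemma dH_exp (n : ℕ) (q : ℝ) (e : EdgeK n) :
    ∑ X, mu q X * dH V Pt β n X e =
      ∑ i, β i * (q ^ ((Pt i).card - 1) * hitCount (Pt i) e) / (n : ℝ) ^ (V i - 2) := by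
  simp_rw [dH_eq, Finset.mul_sum]
  rw [Finset.sum_comm]
  refine Finset.sum_congr rfl fun i _ => ?_
  rw [← exp_rooted, Finset.mul_sum, Finset.sum_div]
  exact Finset.sum_congr rfl fun X _ => by ring

lemma desc_tendsto (m : ℕ) :
    Filter.Tendsto (fun n : ℕ => (n.descFactorial m : ℝ) / (n : ℝ) ^ m) Filter.atTop (nhds 1) := by
  have hl : Filter.Tendsto (fun n : ℕ => (1 - (m : ℝ) / n) ^ m) Filter.atTop (nhds 1) := by
    have h1 := (tendsto_const_div_atTop_nhds_zero_nat (m : ℝ)).const_sub 1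
    have h2 := h1.pow m
    simpa using h2
  refine tendsto_of_tendsto_of_tendsto_of_le_of_le' hl tendsto_const_nhds ?_ ?_
  · filter_upwards [Filter.eventually_ge_atTop (m + 1)] with n hn
    have hn' : (0:ℝ) < n := by exact_mod_cast (by omega : 0 < n)
    rw [le_div_iff₀ (by positivity), ← mul_pow]
    have h1 := Nat.pow_sub_le_descFactorial n m
    have h2 : (n - m) ^ m ≤ n.descFactorial m := (Nat.pow_le_pow_left (by omega) m).trans h1
    have h3 : (((n - m : ℕ) : ℝ)) ^ m ≤ n.descFactorial m := by exact_mod_cast h2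
    rw [Nat.cast_sub (by omega)] at h3
    have h4 : (1 - (m : ℝ) / n) * n = n - m := by field_simp
    rw [h4]; exact h3
  · filter_upwards [Filter.eventually_ge_atTop 1] with n hn
    have hn' : (0:ℝ) < n := by exact_mod_cast (by omega : 0 < n)
    rw [div_le_one (by positivity)]
    exact_mod_cast Nat.descFactorial_le_pow n m

lemma dH_exp_lim (hV2 : ∀ i, 2 ≤ V i) (q : ℝ) {η : ℝ} (hη : 0 < η) :
    ∀ᶠ n : ℕ in Filter.atTop, ∀ e : EdgeK n,
      |∑ X, mu q X * dH V Pt β n X e - PsiF Pt β q| ≤ η := by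
  have hlim : Filter.Tendsto (fun n : ℕ => ∑ i, β i * (q ^ ((Pt i).card - 1) *
      ((Pt i).card * (2 * ((n.descFactorial (V i) : ℝ) / (n : ℝ) ^ (V i) * ((n.descFactorial 2 : ℝ) / (n : ℝ) ^ 2)⁻¹)))))
      Filter.atTop (nhds (PsiF Pt β q)) := by
    unfold PsiF
    refine tendsto_finsetSum _ fun i _ => ?_
    have h1 := ((desc_tendsto (V i)).mul ((desc_tendsto 2).inv₀ one_ne_zero)).const_mul 2
    have h2 := ((h1.const_mul ((Pt i).card : ℝ)).const_mul (q ^ ((Pt i).card - 1))).const_mul (β i)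
    convert h2 using 2
    ring
  have h1 := Metric.tendsto_nhds.mp hlim η hη
  filter_upwards [h1, Filter.eventually_ge_atTop 2] with n hn hn2 e
  rw [Real.dist_eq] at hn
  rw [dH_exp]
  refine le_of_eq_of_le ?_ hn.le
  congr 2
  refine Finset.sum_congr rfl fun i _ => ?_
  rw [mul_div_assoc, mul_div_assoc]
  congr 2
  have hex : (hitCount (Pt i) e : ℝ) * (n.choose 2 : ℝ) = (Pt i).card * (n.descFactorial (V i) : ℝ) := by
    exact_mod_cast hitCount_exact (Pt i) e
  have hd : (n.descFactorial 2 : ℝ) = 2 * n.choose 2 := by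
    have := Nat.descFactorial_eq_factorial_mul_choose n 2
    rw [this]; push_cast; simp [Nat.factorial]
  have hc : (0:ℝ) < n.choose 2 := by exact_mod_cast Nat.choose_pos hn2
  have hn' : (0:ℝ) < n := by exact_mod_cast (by omega : 0 < n)
  have h3 : (n : ℝ) ^ (V i) = n ^ (V i - 2) * n ^ 2 := by rw [← pow_add]; congr 1; have := hV2 i; omega
  rw [hd, h3]
  have : (hitCount (Pt i) e : ℝ) = (Pt i).card * (n.descFactorial (V i) : ℝ) / n.choose 2 := by
    rw [eq_div_iff hc.ne']; exact hex
  rw [this]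
  field_simp

end

end LT

end

noncomputable section

namespace LT

section
variable {s : ℕ} (V : Fin s → ℕ) (Pt : ∀ i, Finset (EdgeK (V i))) (β : Fin s → ℝ)

lemma Z_pos (n : ℕ) : 0 < ∑ Y : Config n, Real.exp (ergmH V Pt β n Y) :=
  Finset.sum_pos (fun Y _ => Real.exp_pos _) ⟨fun _ => true, Finset.mem_univ _⟩

lemma gibbs_pos (n : ℕ) (X : Config n) : 0 < gibbs V Pt β n X :=
  div_pos (Real.exp_pos _) (Z_pos V Pt β n)

lemma gibbs_sum (n : ℕ) : ∑ X, gibbs V Pt β n X = 1 := by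
  unfold gibbs
  rw [← Finset.sum_div]
  exact div_self (Z_pos V Pt β n).ne'

lemma gibbs_rel (n : ℕ) (X : Config n) (e : EdgeK n) :
    gibbs V Pt β n (setEdge X e true) = Real.exp (dH V Pt β n X e) * gibbs V Pt β n (setEdge X e false) := by
  unfold gibbs dH
  rw [← mul_div_assoc, ← Real.exp_add]
  congr 2; ring

lemma dH_set (n : ℕ) (X : Config n) (e : EdgeK n) (b : Bool) :
    dH V Pt β n (setEdge X e b) e = dH V Pt β n X e := by
  unfold dH; simp only [setEdge_set]

/-- single-edge heat bath kernel -/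
def heat (n : ℕ) (e : EdgeK n) (X Y : Config n) : ℝ :=
  (if Y = setEdge X e true then sg (dH V Pt β n X e) else 0)
    + (if Y = setEdge X e false then 1 - sg (dH V Pt β n X e) else 0)

lemma heat_nonneg (n : ℕ) (e : EdgeK n) (X Y : Config n) : 0 ≤ heat V Pt β n e X Y := by
  have h1 := sg_pos (dH V Pt β n X e)
  have h2 := sg_lt (dH V Pt β n X e)
  unfold heat
  split_ifs <;> linarith

lemma heat_sum (n : ℕ) (e : EdgeK n) (X : Config n) : ∑ Y, heat V Pt β n e X Y = 1 := by
  unfold heat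
  rw [Finset.sum_add_distrib]
  simp

lemma glauber_eq (n : ℕ) (X Y : Config n) :
    glauber V Pt β n X Y = ((n.choose 2 : ℝ))⁻¹ * ∑ e, heat V Pt β n e X Y := by
  unfold glauber heat
  simp_rw [one_sub_sg]
  rfl

lemma heat_ne (n : ℕ) (e : EdgeK n) (X Y : Config n) (h : ∀ b, Y ≠ setEdge X e b) :
    heat V Pt β n e X Y = 0 := by
  unfold heat; rw [if_neg (h _), if_neg (h _)]; simp

lemma set_ne (n : ℕ) (e : EdgeK n) (X : Config n) : setEdge X e true ≠ setEdge X e false := by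
  intro h
  have := congrFun h e
  simp [setEdge] at this

lemma heat_true (n : ℕ) (e : EdgeK n) (X : Config n) :
    heat V Pt β n e X (setEdge X e true) = sg (dH V Pt β n X e) := by
  unfold heat; rw [if_pos rfl, if_neg (set_ne n e X)]; simp

lemma heat_false (n : ℕ) (e : EdgeK n) (X : Config n) :
    heat V Pt β n e X (setEdge X e false) = 1 - sg (dH V Pt β n X e) := by
  unfold heat; rw [if_pos rfl, if_neg (set_ne n e X).symm]; simp

lemma heat_set (n : ℕ) (e : EdgeK n) (X Y : Config n) (b : Bool) :
    heat V Pt β n e (setEdge X e b) Y = heat V Pt β n e X Y := by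
  unfold heat; simp only [dH_set, setEdge_set]

lemma heat_rev (n : ℕ) (e : EdgeK n) (X Y : Config n) :
    gibbs V Pt β n X * heat V Pt β n e X Y = gibbs V Pt β n Y * heat V Pt β n e Y X := by
  by_cases h : ∃ b, Y = setEdge X e b
  · obtain ⟨b, rfl⟩ := h
    rw [heat_set]
    obtain ⟨c, hc⟩ : ∃ c, X = setEdge X e c := ⟨X e, (setEdge_self X e).symm⟩
    have hr := gibbs_rel V Pt β n X e
    have hsg := sg_rel (dH V Pt β n X e)
    have key : ∀ c b, gibbs V Pt β n (setEdge X e c) * heat V Pt β n e X (setEdge X e b)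
        = gibbs V Pt β n (setEdge X e b) * heat V Pt β n e X (setEdge X e c) := by
      intro c b
      cases b <;> cases c <;> simp only [heat_true, heat_false]
      · rw [hr, mul_right_comm, ← hsg]; ring
      · rw [hr, mul_right_comm, ← hsg]; ring
    have := key c b
    rwa [← hc] at this
  · push Not at h
    rw [heat_ne V Pt β n e X Y h, heat_ne V Pt β n e Y X]
    · simp
    · intro b hb
      apply h (Y e)
      rw [hb, setEdge_set, setEdge_self]

lemma glauber_nonneg (n : ℕ) (X Y : Config n) : 0 ≤ glauber V Pt β n X Y := by
  rw [glauber_eq]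
  exact mul_nonneg (by positivity) (Finset.sum_nonneg fun e _ => heat_nonneg V Pt β n e X Y)

lemma glauber_sum {n : ℕ} (hn : 2 ≤ n) (X : Config n) : ∑ Y, glauber V Pt β n X Y = 1 := by
  simp_rw [glauber_eq]
  rw [← Finset.mul_sum, Finset.sum_comm]
  simp_rw [heat_sum]
  have hc : (0:ℝ) < n.choose 2 := by exact_mod_cast Nat.choose_pos hn
  rw [Finset.sum_const, Finset.card_univ, card_edge, nsmul_eq_mul, mul_one]
  exact inv_mul_cancel₀ hc.ne'

lemma glauber_stat {n : ℕ} (hn : 2 ≤ n) (Y : Config n) :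
    ∑ X, gibbs V Pt β n X * glauber V Pt β n X Y = gibbs V Pt β n Y := by
  have : ∀ X, gibbs V Pt β n X * glauber V Pt β n X Y = gibbs V Pt β n Y * glauber V Pt β n Y X := by
    intro X
    rw [glauber_eq, glauber_eq, mul_left_comm, mul_left_comm (gibbs V Pt β n Y), Finset.mul_sum, Finset.mul_sum]
    simp_rw [heat_rev V Pt β n _ X Y, Finset.mul_sum]
  simp_rw [this]
  rw [← Finset.mul_sum, glauber_sum V Pt β hn, mul_one]

lemma glauber_local (n : ℕ) (X Y : Config n) (h : glauber V Pt β n X Y ≠ 0) : hamDist X Y ≤ 1 := by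
  rw [glauber_eq] at h
  obtain ⟨e, _, he⟩ := Finset.exists_ne_zero_of_sum_ne_zero (right_ne_zero_of_mul h)
  have : ∃ b, Y = setEdge X e b := by
    by_contra hcon
    push Not at hcon
    exact he (heat_ne V Pt β n e X Y hcon)
  obtain ⟨b, rfl⟩ := this
  unfold hamDist
  rw [← Finset.card_singleton e]
  apply Finset.card_le_card
  intro f hf
  simp only [Finset.mem_filter, Finset.mem_univ, true_and] at hf
  rw [Finset.mem_singleton]
  by_contra hne
  simp [setEdge, hne] at hf

lemma tail_union (hV2 : ∀ i, 2 ≤ V i) {τ q v : ℝ} (hτ : |τ| = 1) (h0 : 0 ≤ q) (h1 : q ≤ 1)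
    (hv : τ * PsiF Pt β q < v) :
    ∃ c > 0, ∃ η > 0, ∀ᶠ n : ℕ in Filter.atTop,
      ∑ X, mu q X * (if ∃ e : EdgeK n, v - η ≤ τ * dH V Pt β n X e then 1 else 0) ≤ Real.exp (-c * n) := by
  set η := (v - τ * PsiF Pt β q) / 3 with hη
  have hηpos : 0 < η := by rw [hη]; linarith
  have c1 := C1_nonneg V β
  have c2 := C2_nonneg V Pt β
  have c12 : 0 ≤ C1 V β * C2 V Pt β := mul_nonneg c1 c2
  obtain ⟨κ, hκ, hκ1, hκ2⟩ : ∃ κ > 0, κ * C1 V β ≤ 1 ∧ κ * (C1 V β * C2 V Pt β) ≤ η / 2 := by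
    refine ⟨min (1 / (C1 V β + 1)) ((η / 2) / (C1 V β * C2 V Pt β + 1)), by positivity, ?_, ?_⟩
    · calc _ ≤ (1 / (C1 V β + 1)) * (C1 V β + 1) :=
            mul_le_mul (min_le_left _ _) (by linarith) c1 (by positivity)
        _ = 1 := by field_simp
    · calc _ ≤ ((η / 2) / (C1 V β * C2 V Pt β + 1)) * (C1 V β * C2 V Pt β + 1) :=
            mul_le_mul (min_le_right _ _) (by linarith) c12 (by positivity)
        _ = η / 2 := by field_simp
  refine ⟨κ * η / 4, by positivity, η, hηpos, ?_⟩
  have hpoly : ∀ᶠ n : ℕ in Filter.atTop, (n : ℝ) ^ 2 * Real.exp (-(κ * η / 4) * n) ≤ 1 := by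
    have h := Real.tendsto_pow_mul_exp_neg_atTop_nhds_zero 2
    have hlin : Filter.Tendsto (fun n : ℕ => (κ * η / 4) * (n : ℝ)) Filter.atTop Filter.atTop :=
      tendsto_natCast_atTop_atTop.const_mul_atTop (by positivity)
    have h2 := (h.comp hlin).eventually_lt_const (show (0:ℝ) < (κ * η / 4) ^ 2 by positivity)
    filter_upwards [h2] with n hn
    simp only [Function.comp] at hn
    rw [mul_pow, mul_assoc] at hn
    have := lt_of_mul_lt_mul_left (b := (n : ℝ) ^ 2 * Real.exp (-(κ * η / 4 * n))) (c := 1)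
      (by rw [mul_one]; exact hn) (by positivity)
    rw [neg_mul]; exact this.le
  filter_upwards [dH_exp_lim V Pt β hV2 q hηpos, hpoly, Filter.eventually_ge_atTop 1] with n hE hp hn
  have hn' : (0:ℝ) < n := by exact_mod_cast hn
  have hone : ∀ e : EdgeK n, ∑ X, mu q X * (if v - η ≤ τ * dH V Pt β n X e then 1 else 0)
      ≤ Real.exp (-(κ * η / 2) * n) := by
    intro e
    have ht := tail (q := q) (lam := κ * n) (η := η) h0 h1 (by positivity) (infl V Pt β n e)
      (by
        intro e'
        calc κ * n * infl V Pt β n e e' ≤ κ * n * (C1 V β / n) :=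
              mul_le_mul_of_nonneg_left (infl_le V Pt β hV2 hn e e') (by positivity)
          _ = κ * C1 V β := by field_simp
          _ ≤ 1 := hκ1)
      (fun X => τ * dH V Pt β n X e)
      (by
        intro X e'
        rw [← mul_sub, abs_mul, hτ, one_mul]
        exact dH_bdd V Pt β n X e e')
      (v - η)
      (by
        have : ∑ X, mu q X * (τ * dH V Pt β n X e) = τ * ∑ X, mu q X * dH V Pt β n X e := by
          rw [Finset.mul_sum]; exact Finset.sum_congr rfl fun X _ => by ring
        rw [this]
        have h3 : τ * (∑ X, mu q X * dH V Pt β n X e - PsiF Pt β q) ≤ η := by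
          refine (le_abs_self _).trans ?_
          rw [abs_mul, hτ, one_mul]; exact hE e
        have : 3 * η = v - τ * PsiF Pt β q := by rw [hη]; ring
        linarith)
    refine ht.trans (Real.exp_le_exp.mpr ?_)
    have h4 : (κ * n) ^ 2 * ∑ e', infl V Pt β n e e' ^ 2 ≤ (κ * n) ^ 2 * (C1 V β * C2 V Pt β / n) :=
      mul_le_mul_of_nonneg_left (infl_sq V Pt β hV2 hn e) (by positivity)
    have h5 : (κ * n) ^ 2 * (C1 V β * C2 V Pt β / n) = κ * n * (κ * (C1 V β * C2 V Pt β)) := by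
      field_simp
    have h6 : κ * n * (κ * (C1 V β * C2 V Pt β)) ≤ κ * n * (η / 2) :=
      mul_le_mul_of_nonneg_left hκ2 (by positivity)
    linarith
  have hun : ∀ X, mu q X * (if ∃ e : EdgeK n, v - η ≤ τ * dH V Pt β n X e then 1 else 0) ≤
      ∑ e : EdgeK n, mu q X * (if v - η ≤ τ * dH V Pt β n X e then 1 else 0) := by
    intro X
    rw [← Finset.mul_sum]
    refine mul_le_mul_of_nonneg_left ?_ (mu_nonneg h0 h1 X)
    split_ifs with h
    · obtain ⟨e, he⟩ := h
      have := Finset.single_le_sum (s := univ) (f := fun e : EdgeK n => if v - η ≤ τ * dH V Pt β n X e then (1:ℝ) else 0)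
        (fun i _ => by split_ifs <;> norm_num) (Finset.mem_univ e)
      simpa [he] using this
    · exact Finset.sum_nonneg fun e _ => by split_ifs <;> norm_num
  refine (Finset.sum_le_sum fun X _ => hun X).trans ?_
  rw [Finset.sum_comm]
  refine (Finset.sum_le_sum fun e _ => hone e).trans ?_
  rw [Finset.sum_const, Finset.card_univ, card_edge, nsmul_eq_mul]
  have hch : (n.choose 2 : ℝ) ≤ (n : ℝ) ^ 2 := by exact_mod_cast Nat.choose_le_pow n 2
  have hsplit : Real.exp (-(κ * η / 2) * n) = Real.exp (-(κ * η / 4) * n) * Real.exp (-(κ * η / 4) * n) := by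
    rw [← Real.exp_add]; congr 1; ring
  rw [hsplit]
  have hE0 := Real.exp_pos (-(κ * η / 4) * n)
  calc _ ≤ (n : ℝ) ^ 2 * (Real.exp (-(κ * η / 4) * n) * Real.exp (-(κ * η / 4) * n)) := by gcongr
    _ = ((n : ℝ) ^ 2 * Real.exp (-(κ * η / 4) * n)) * Real.exp (-(κ * η / 4) * n) := by ring
    _ ≤ 1 * Real.exp (-(κ * η / 4) * n) := mul_le_mul_of_nonneg_right hp hE0.le
    _ = _ := by rw [one_mul]

/-- the metastable well -/
def well (τ v : ℝ) (n : ℕ) : Finset (Config n) :=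
  univ.filter fun X => ∀ e, τ * dH V Pt β n X e ≤ v

lemma dom_up2 (hs : 0 < s) (hG1E : (Pt ⟨0, hs⟩).card = 1)
    (hβ : ∀ i : Fin s, 0 < (i : ℕ) → 0 < β i) {u : ℝ} {n : ℕ} (w : Config n → ℝ)
    (hw0 : ∀ X, 0 ≤ w X)
    (hwe : ∀ X, w X = if X ∈ well V Pt β 1 u n then gibbs V Pt β n X else 0) (η : ℝ) :
    ∑ X, (if ∃ e : EdgeK n, u - η ≤ 1 * dH V Pt β n X e then 1 else 0) * w X ≤
        (∑ X, w X) * ∑ X, mu (sg u) X * (if ∃ e : EdgeK n, u - η ≤ 1 * dH V Pt β n X e then 1 else 0) := by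
  have q0 := sg_pos u
  have q1 := sg_lt u
  have hsg := sg_rel u
  have hset : ∀ (X : Config n) e, setEdge X e false ≤ setEdge X e true := by
    intro X e f
    unfold setEdge
    split_ifs
    · exact Bool.false_le true
    · exact le_rfl
  have key := dom_up q0 q1 w hw0 ?_ (fun X => ∃ e : EdgeK n, u - η ≤ 1 * dH V Pt β n X e) ?_
  · convert key
  · intro X e
    by_cases hX : setEdge X e true ∈ well V Pt β 1 u n
    · have hX2 : setEdge X e false ∈ well V Pt β 1 u n := by
        simp only [well, Finset.mem_filter, Finset.mem_univ, true_and, one_mul] at hX ⊢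
        intro f
        exact (dH_mono V Pt β hs hG1E hβ (hset X e) f).trans (hX f)
      simp only [hwe, hX, hX2, if_true]
      rw [gibbs_rel]
      simp only [well, Finset.mem_filter, Finset.mem_univ, true_and, one_mul] at hX
      have h1 := hX e
      rw [dH_set] at h1
      have h2 := Real.exp_le_exp.mpr h1
      have h3 := (gibbs_pos V Pt β n (setEdge X e false)).le
      calc _ = Real.exp (dH V Pt β n X e) * ((1 - sg u) * gibbs V Pt β n (setEdge X e false)) := by ring
        _ ≤ Real.exp u * ((1 - sg u) * gibbs V Pt β n (setEdge X e false)) :=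
          mul_le_mul_of_nonneg_right h2 (mul_nonneg (by linarith) h3)
        _ = (Real.exp u * (1 - sg u)) * gibbs V Pt β n (setEdge X e false) := by ring
        _ = _ := by rw [← hsg]
    · have : w (setEdge X e true) = 0 := by simp only [hwe, hX, if_false]
      rw [this, mul_zero]
      exact mul_nonneg q0.le (hw0 _)
  · rintro X Y hXY ⟨e, he⟩
    refine ⟨e, he.trans ?_⟩
    rw [one_mul, one_mul]
    exact dH_mono V Pt β hs hG1E hβ hXY e

lemma dom_down2 (hs : 0 < s) (hG1E : (Pt ⟨0, hs⟩).card = 1)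
    (hβ : ∀ i : Fin s, 0 < (i : ℕ) → 0 < β i) {u : ℝ} {n : ℕ} (w : Config n → ℝ)
    (hw0 : ∀ X, 0 ≤ w X)
    (hwe : ∀ X, w X = if X ∈ well V Pt β (-1) (-u) n then gibbs V Pt β n X else 0) (η : ℝ) :
    ∑ X, (if ∃ e : EdgeK n, (-u) - η ≤ (-1) * dH V Pt β n X e then 1 else 0) * w X ≤
        (∑ X, w X) * ∑ X, mu (sg u) X * (if ∃ e : EdgeK n, (-u) - η ≤ (-1) * dH V Pt β n X e then 1 else 0) := by
  have q0 := sg_pos u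
  have q1 := sg_lt u
  have hsg := sg_rel u
  have hset : ∀ (X : Config n) e, setEdge X e false ≤ setEdge X e true := by
    intro X e f
    unfold setEdge
    split_ifs
    · exact Bool.false_le true
    · exact le_rfl
  have key := dom_down q0 q1 w hw0 ?_ (fun X => ∃ e : EdgeK n, (-u) - η ≤ (-1) * dH V Pt β n X e) ?_
  · convert key
  · intro X e
    by_cases hX : setEdge X e false ∈ well V Pt β (-1) (-u) n
    · have hX2 : setEdge X e true ∈ well V Pt β (-1) (-u) n := by
        simp only [well, Finset.mem_filter, Finset.mem_univ, true_and] at hX ⊢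
        intro f
        have h1 := hX f
        have h2 := dH_mono V Pt β hs hG1E hβ (hset X e) f
        linarith
      simp only [hwe, hX, hX2, if_true]
      rw [gibbs_rel]
      simp only [well, Finset.mem_filter, Finset.mem_univ, true_and] at hX
      have h1 := hX e
      rw [dH_set] at h1
      have h2 := Real.exp_le_exp.mpr (show u ≤ dH V Pt β n X e by linarith)
      have h3 := (gibbs_pos V Pt β n (setEdge X e false)).le
      calc _ = (Real.exp u * (1 - sg u)) * gibbs V Pt β n (setEdge X e false) := by rw [← hsg]
        _ = Real.exp u * ((1 - sg u) * gibbs V Pt β n (setEdge X e false)) := by ring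
        _ ≤ Real.exp (dH V Pt β n X e) * ((1 - sg u) * gibbs V Pt β n (setEdge X e false)) :=
          mul_le_mul_of_nonneg_right h2 (mul_nonneg (by linarith) h3)
        _ = _ := by ring
    · have : w (setEdge X e false) = 0 := by simp only [hwe, hX, if_false]
      rw [this, mul_zero]
      exact mul_nonneg (by linarith) (hw0 _)
  · rintro X Y hXY ⟨e, he⟩
    refine ⟨e, he.trans ?_⟩
    have := dH_mono V Pt β hs hG1E hβ hXY e
    linarith

lemma side (hs : 0 < s) (hV2 : ∀ i, 2 ≤ V i) (hG1E : (Pt ⟨0, hs⟩).card = 1)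
    (hβ : ∀ i : Fin s, 0 < (i : ℕ) → 0 < β i) {τ v u : ℝ} (hτ : τ = 1 ∧ v = u ∨ τ = -1 ∧ v = -u)
    (hv : τ * PsiF Pt β (sg u) < v) :
    ∃ c > 0, ∃ η > 0, ∀ᶠ n : ℕ in Filter.atTop,
      0 < ∑ X ∈ well V Pt β τ v n, gibbs V Pt β n X ∧
      ∑ X ∈ (well V Pt β τ v n).filter (fun X => ∃ e, v - η ≤ τ * dH V Pt β n X e), gibbs V Pt β n X ≤
        Real.exp (-c * n) * ∑ X ∈ well V Pt β τ v n, gibbs V Pt β n X := by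
  have q0 := sg_pos u
  have q1 := sg_lt u
  have hsg := sg_rel u
  have habs : |τ| = 1 := by rcases hτ with h | h <;> rw [h.1] <;> simp
  obtain ⟨c, hc, η, hη, hev⟩ := tail_union V Pt β hV2 habs q0.le q1.le hv
  refine ⟨c, hc, η, hη, ?_⟩
  filter_upwards [hev, Filter.eventually_ge_atTop 1] with n hn hn1
  have hn' : (0:ℝ) < n := by exact_mod_cast hn1
  constructor
  · by_contra hcon
    have hemp : ∀ X, X ∉ well V Pt β τ v n := by
      intro X hX
      exact hcon (Finset.sum_pos (fun X _ => gibbs_pos V Pt β n X) ⟨X, hX⟩)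
    have hall : ∀ X : Config n, ∃ e : EdgeK n, v - η ≤ τ * dH V Pt β n X e := by
      intro X
      have := hemp X
      simp only [well, Finset.mem_filter, Finset.mem_univ, true_and, not_forall, not_le] at this
      obtain ⟨e, he⟩ := this
      exact ⟨e, by linarith⟩
    simp only [hall, if_true, mul_one, sum_mu] at hn
    have : Real.exp (-c * n) < 1 := by
      rw [Real.exp_lt_one_iff]; nlinarith
    linarith
  · set w : Config n → ℝ := fun X => if X ∈ well V Pt β τ v n then gibbs V Pt β n X else 0 with hw
    have hw0 : ∀ X, 0 ≤ w X := by
      intro X; simp only [hw]; split_ifs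
      · exact (gibbs_pos V Pt β n X).le
      · exact le_rfl
    have hsum : ∑ X, w X = ∑ X ∈ well V Pt β τ v n, gibbs V Pt β n X := by
      simp only [hw]; rw [Finset.sum_ite_mem, Finset.univ_inter]
    have hset : ∀ (X : Config n) e, setEdge X e false ≤ setEdge X e true := by
      intro X e f
      unfold setEdge
      split_ifs
      · exact Bool.false_le true
      · exact le_rfl
    have hdom : ∑ X, (if ∃ e : EdgeK n, v - η ≤ τ * dH V Pt β n X e then 1 else 0) * w X ≤
        (∑ X, w X) * ∑ X, mu (sg u) X * (if ∃ e : EdgeK n, v - η ≤ τ * dH V Pt β n X e then 1 else 0) := by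
      have hwe : ∀ X, w X = if X ∈ well V Pt β τ v n then gibbs V Pt β n X else 0 := fun X => rfl
      clear_value w
      rcases hτ with ⟨rfl, rfl⟩ | ⟨rfl, rfl⟩
      · exact dom_up2 V Pt β hs hG1E hβ w hw0 hwe η
      · exact dom_down2 V Pt β hs hG1E hβ w hw0 hwe η
    have hlhs : ∑ X ∈ (well V Pt β τ v n).filter (fun X => ∃ e, v - η ≤ τ * dH V Pt β n X e), gibbs V Pt β n X
        = ∑ X, (if ∃ e : EdgeK n, v - η ≤ τ * dH V Pt β n X e then 1 else 0) * w X := by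
      have e1 : ∀ X, (if ∃ e : EdgeK n, v - η ≤ τ * dH V Pt β n X e then (1:ℝ) else 0) * w X
          = if X ∈ well V Pt β τ v n then (if ∃ e : EdgeK n, v - η ≤ τ * dH V Pt β n X e then gibbs V Pt β n X else 0) else 0 := by
        intro X
        simp only [hw]
        split_ifs <;> simp
      rw [Finset.sum_congr rfl (fun X _ => e1 X), Finset.sum_ite_mem, Finset.univ_inter, Finset.sum_filter]
    rw [hlhs, mul_comm (Real.exp _), ← hsum]
    exact hdom.trans (mul_le_mul_of_nonneg_left hn (Finset.sum_nonneg fun X _ => hw0 X))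

lemma side_mix (hs : 0 < s) (hV2 : ∀ i, 2 ≤ V i) (hG1E : (Pt ⟨0, hs⟩).card = 1)
    (hβ : ∀ i : Fin s, 0 < (i : ℕ) → 0 < β i) {τ v u : ℝ} (hτ : τ = 1 ∧ v = u ∨ τ = -1 ∧ v = -u)
    (hv : τ * PsiF Pt β (sg u) < v) (m : ℕ → ℕ)
    (hm : Filter.Tendsto (fun n : ℕ => (m n : ℝ) / (n : ℝ)) Filter.atTop (nhds 0)) :
    ∃ c > 0, ∀ᶠ n : ℕ in Filter.atTop,
      ∑ X ∈ well V Pt β τ v n, gibbs V Pt β n X ≤ 1 / 2 →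
      ∀ K : Config n → Config n → ℝ,
          (∀ X Y, 0 ≤ K X Y) →
          (∀ X, ∑ Y, K X Y = 1) →
          (∀ Y, ∑ X, gibbs V Pt β n X * K X Y = gibbs V Pt β n Y) →
          (∀ X Y, K X Y ≠ 0 → hamDist X Y ≤ m n) →
          ∀ t : ℕ, (t : ℝ) < Real.exp (c * n) → ¬ mixes K (gibbs V Pt β n) t := by
  have habs : |τ| = 1 := by rcases hτ with h | h <;> rw [h.1] <;> simp
  obtain ⟨c, hc, η, hη, hev⟩ := side V Pt β hs hV2 hG1E hβ hτ hv
  refine ⟨c / 2, by positivity, ?_⟩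
  have hm2 : ∀ᶠ n : ℕ in Filter.atTop, (m n : ℝ) / n * C1 V β < η := by
    have := hm.mul_const (C1 V β)
    rw [zero_mul] at this
    exact this.eventually_lt_const hη
  have hexp : ∀ᶠ n : ℕ in Filter.atTop, Real.exp (-(c / 2 * (n : ℝ))) < 1 / 10 := by
    have hlin : Filter.Tendsto (fun n : ℕ => (c / 2) * (n : ℝ)) Filter.atTop Filter.atTop :=
      tendsto_natCast_atTop_atTop.const_mul_atTop (by positivity)
    exact (Real.tendsto_exp_neg_atTop_nhds_zero.comp hlin).eventually_lt_const (by norm_num)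
  filter_upwards [hev, hm2, hexp, Filter.eventually_ge_atTop 1] with n h1 h2 h3 hn
  intro hhalf K K0 K1 Kst Kloc t ht
  refine bottleneck K (gibbs V Pt β n) K0 K1 Kst (fun X => (gibbs_pos V Pt β n X).le) (gibbs_sum V Pt β n)
    (well V Pt β τ v n) _ ?_ h1.1 hhalf (Real.exp (-c * n)) h1.2 t ?_
  · intro X hX hXD Y hY
    by_contra hK
    apply hY
    have hd := Kloc X Y hK
    simp only [Finset.mem_filter, not_and, not_exists, not_le] at hXD
    have hXD' := hXD hX
    simp only [well, Finset.mem_filter, Finset.mem_univ, true_and]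
    intro e
    have a1 := hXD' e
    have a2 := dH_lip V Pt β hV2 hn X Y e
    have a3 : (hamDist X Y : ℝ) * (C1 V β / n) ≤ m n * (C1 V β / n) := by
      refine mul_le_mul_of_nonneg_right (by exact_mod_cast hd) ?_
      exact div_nonneg (C1_nonneg V β) (Nat.cast_nonneg n)
    have a4 : (m n : ℝ) * (C1 V β / n) = (m n : ℝ) / n * C1 V β := by ring
    have a5 : τ * (dH V Pt β n Y e - dH V Pt β n X e) ≤ |dH V Pt β n X e - dH V Pt β n Y e| := by
      refine (le_abs_self _).trans ?_
      rw [abs_mul, habs, one_mul, abs_sub_comm]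
    linarith
  · calc (t : ℝ) * Real.exp (-c * n) ≤ Real.exp (c / 2 * n) * Real.exp (-c * n) :=
          mul_le_mul_of_nonneg_right ht.le (Real.exp_pos _).le
      _ = Real.exp (-(c / 2 * n)) := by rw [← Real.exp_add]; congr 1; ring
      _ < 1 / 10 := h3

lemma core (hs : 0 < s) (hV2 : ∀ i, 2 ≤ V i) (hG1E : (Pt ⟨0, hs⟩).card = 1)
    (hβ : ∀ i : Fin s, 0 < (i : ℕ) → 0 < β i) (hLT : LowTemp Pt β) (m : ℕ → ℕ)
    (hm : Filter.Tendsto (fun n : ℕ => (m n : ℝ) / (n : ℝ)) Filter.atTop (nhds 0)) :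
    ∃ c > 0, ∀ᶠ n : ℕ in Filter.atTop,
      ∀ K : Config n → Config n → ℝ,
          (∀ X Y, 0 ≤ K X Y) →
          (∀ X, ∑ Y, K X Y = 1) →
          (∀ Y, ∑ X, gibbs V Pt β n X * K X Y = gibbs V Pt β n Y) →
          (∀ X Y, K X Y ≠ 0 → hamDist X Y ≤ m n) →
          ∀ t : ℕ, (t : ℝ) < Real.exp (c * n) → ¬ mixes K (gibbs V Pt β n) t := by
  obtain ⟨u, w, huw, hu, hw⟩ := thresholds Pt β hLT
  obtain ⟨c, hc, h1⟩ := side_mix V Pt β hs hV2 hG1E hβ (τ := 1) (v := u) (u := u) (Or.inl ⟨rfl, rfl⟩)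
    (by linarith) m hm
  obtain ⟨d, hd, h2⟩ := side_mix V Pt β hs hV2 hG1E hβ (τ := -1) (v := -w) (u := w) (Or.inr ⟨rfl, rfl⟩)
    (by linarith) m hm
  refine ⟨min c d, lt_min hc hd, ?_⟩
  filter_upwards [h1, h2, Filter.eventually_ge_atTop 2] with n k1 k2 hn
  intro K K0 K1 Kst Kloc t ht
  have hcn : min c d * (n : ℝ) ≤ c * n := mul_le_mul_of_nonneg_right (min_le_left _ _) (Nat.cast_nonneg n)
  have hdn : min c d * (n : ℝ) ≤ d * n := mul_le_mul_of_nonneg_right (min_le_right _ _) (Nat.cast_nonneg n)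
  by_cases hA : ∑ X ∈ well V Pt β 1 u n, gibbs V Pt β n X ≤ 1 / 2
  · exact k1 hA K K0 K1 Kst Kloc t (ht.trans_le (Real.exp_le_exp.mpr hcn))
  · refine k2 ?_ K K0 K1 Kst Kloc t (ht.trans_le (Real.exp_le_exp.mpr hdn))
    have hdisj : Disjoint (well V Pt β 1 u n) (well V Pt β (-1) (-w) n) := by
      rw [Finset.disjoint_left]
      intro X hX hX'
      simp only [well, Finset.mem_filter, Finset.mem_univ, true_and] at hX hX'
      have hpos : 0 < Fintype.card (EdgeK n) := by rw [card_edge]; exact Nat.choose_pos hn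
      obtain ⟨e⟩ := Fintype.card_pos_iff.mp hpos
      have := hX e
      have := hX' e
      linarith
    have hle : ∑ X ∈ well V Pt β 1 u n ∪ well V Pt β (-1) (-w) n, gibbs V Pt β n X ≤ 1 := by
      rw [← gibbs_sum V Pt β n]
      exact Finset.sum_le_univ_sum_of_nonneg fun X => (gibbs_pos V Pt β n X).le
    rw [Finset.sum_union hdisj] at hle
    linarith

end

end LT

end

/-- **Low temperature (Theorem 2).** In the low temperature phase any local Markov chain
(one changing at most `m n = o(n)` edges per step) with stationary distribution the Gibbs
measure has mixing time at least `e^(αn)`; in particular so does the Glauber dynamics. -/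
theorem low_temperature_slow_mixing
    {L s : ℕ} (hL : 2 ≤ L) (hs : 0 < s)
    (V : Fin s → ℕ) (Pt : ∀ i, Finset (EdgeK (V i))) (β : Fin s → ℝ)
    (hV2 : ∀ i, 2 ≤ V i) (hVL : ∀ i, V i ≤ L)
    (hG1V : V ⟨0, hs⟩ = 2) (hG1E : (Pt ⟨0, hs⟩).card = 1)
    (hβ : ∀ i : Fin s, 0 < (i : ℕ) → 0 < β i)
    (hLT : LowTemp Pt β)
    (m : ℕ → ℕ)
    (hm : Filter.Tendsto (fun n : ℕ => (m n : ℝ) / (n : ℝ)) Filter.atTop (nhds 0)) :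
    ∃ α : ℝ, 0 < α ∧ ∃ N : ℕ, ∀ n ≥ N,
      (∀ K : Config n → Config n → ℝ,
          (∀ X Y, 0 ≤ K X Y) →
          (∀ X, ∑ Y, K X Y = 1) →
          (∀ Y, ∑ X, gibbs V Pt β n X * K X Y = gibbs V Pt β n Y) →
          (∀ X Y, K X Y ≠ 0 → hamDist X Y ≤ m n) →
          ∀ t : ℕ, (t : ℝ) < Real.exp (α * n) → ¬ mixes K (gibbs V Pt β n) t) ∧
      (∀ t : ℕ, (t : ℝ) < Real.exp (α * n) →
        ¬ mixes (glauber V Pt β n) (gibbs V Pt β n) t) := by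
  obtain ⟨c, hc, hev⟩ := LT.core V Pt β hs hV2 hG1E hβ hLT (fun n => m n + 1) (by
    have h := hm.add tendsto_one_div_atTop_nhds_zero_nat
    rw [add_zero] at h
    refine h.congr fun n => ?_
    push_cast
    ring)
  obtain ⟨N, hN⟩ := Filter.eventually_atTop.mp hev
  refine ⟨c, hc, max N 2, fun n hn => ⟨?_, ?_⟩⟩
  · intro K K0 K1 Kst Kloc t ht
    exact hN n ((le_max_left _ _).trans hn) K K0 K1 Kst
      (fun X Y h => (Kloc X Y h).trans (Nat.le_succ _)) t ht
  · intro t ht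
    have hn2 : 2 ≤ n := (le_max_right _ _).trans hn
    exact hN n ((le_max_left _ _).trans hn) _ (LT.glauber_nonneg V Pt β n)
      (LT.glauber_sum V Pt β hn2) (LT.glauber_stat V Pt β hn2)
      (fun X Y h => (LT.glauber_local V Pt β n X Y h).trans (Nat.le_add_left _ _)) t ht
end

section
/- Asymptotic independence of edges: in the high temperature phase with unique fixed point p* of φ(p)=p, for every k ≥ 1 and every ε > 0 there exists N such that for all n ≥ N, for every collection of k distinct edges e_1,…,e_k of K_n and every (a_1,…,a_k) ∈ {0,1}^k, a random graph X drawn from the Gibbs measure p_n satisfies |P(x_{e_1}=a_1,…,x_{e_k}=a_k) − (p*)^{Σa_i}(1−p*)^{k−Σa_i}| ≤ ε, where x_{e_i} is the indicator that e_i is an edge of X. Thus any finite collection of edge indicators is asymptotically independent Bernoulli(p*). -/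
open Finset

open scoped Classical

noncomputable section Aux

namespace ERGM

/-- Weighted sum (expectation). -/
def Ew {n : ℕ} (w h : Config n → ℝ) : ℝ := ∑ X, w X * h X

/-- Edge indicator. -/
def xi {n : ℕ} (X : Config n) (f : EdgeK n) : ℝ := if X f = true then 1 else 0

/-- `h` depends only on the coordinates in `S`. -/
def Dep {n : ℕ} (S : Finset (EdgeK n)) (h : Config n → ℝ) : Prop :=
  ∀ X Y : Config n, (∀ g ∈ S, X g = Y g) → h X = h Y

/-- Upper bound on local conditional probabilities. -/
def UB {n : ℕ} (w : Config n → ℝ) (K : ℕ) (M : ℝ) : Prop :=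
  ∀ S : Finset (EdgeK n), S.card ≤ K → ∀ h : Config n → ℝ, (∀ X, 0 ≤ h X) → Dep S h →
    ∀ f, f ∉ S → Ew w (fun X => h X * xi X f) ≤ M * Ew w h

/-- Lower bound on local conditional probabilities. -/
def LB {n : ℕ} (w : Config n → ℝ) (K : ℕ) (M : ℝ) : Prop :=
  ∀ S : Finset (EdgeK n), S.card ≤ K → ∀ h : Config n → ℝ, (∀ X, 0 ≤ h X) → Dep S h →
    ∀ f, f ∉ S → M * Ew w h ≤ Ew w (fun X => h X * xi X f)

lemma xi_nonneg {n : ℕ} (X : Config n) (f : EdgeK n) : 0 ≤ xi X f := by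
  unfold xi; split_ifs <;> norm_num

lemma xi_le_one {n : ℕ} (X : Config n) (f : EdgeK n) : xi X f ≤ 1 := by
  unfold xi; split_ifs <;> norm_num

lemma Ew_nonneg {n : ℕ} {w h : Config n → ℝ} (hw : ∀ X, 0 ≤ w X) (hh : ∀ X, 0 ≤ h X) :
    0 ≤ Ew w h := Finset.sum_nonneg fun X _ => mul_nonneg (hw X) (hh X)

lemma Ew_mono {n : ℕ} {w h h' : Config n → ℝ} (hw : ∀ X, 0 ≤ w X) (hh : ∀ X, h X ≤ h' X) :
    Ew w h ≤ Ew w h' := Finset.sum_le_sum fun X _ => mul_le_mul_of_nonneg_left (hh X) (hw X)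

lemma Ew_add {n : ℕ} (w h h' : Config n → ℝ) :
    Ew w (fun X => h X + h' X) = Ew w h + Ew w h' := by
  simp [Ew, mul_add, Finset.sum_add_distrib]

lemma Ew_sub {n : ℕ} (w h h' : Config n → ℝ) :
    Ew w (fun X => h X - h' X) = Ew w h - Ew w h' := by
  simp [Ew, mul_sub, Finset.sum_sub_distrib]

lemma Ew_smul {n : ℕ} (w h : Config n → ℝ) (c : ℝ) :
    Ew w (fun X => c * h X) = c * Ew w h := by
  simp only [Ew, Finset.mul_sum]
  exact Finset.sum_congr rfl fun X _ => by ring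

lemma Ew_sum {n : ℕ} {ι : Type*} (R : Finset ι) (w : Config n → ℝ) (h : ι → Config n → ℝ) :
    Ew w (fun X => ∑ v ∈ R, h v X) = ∑ v ∈ R, Ew w (h v) := by
  simp only [Ew, Finset.mul_sum]
  exact Finset.sum_comm

lemma Dep.mono {n : ℕ} {S S' : Finset (EdgeK n)} {h : Config n → ℝ} (hd : Dep S h)
    (hS : S ⊆ S') : Dep S' h := fun X Y hXY => hd X Y fun g hg => hXY g (hS hg)

lemma Dep.mul {n : ℕ} {S S' : Finset (EdgeK n)} {h h' : Config n → ℝ} (hd : Dep S h)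
    (hd' : Dep S' h') : Dep (S ∪ S') (fun X => h X * h' X) := fun X Y hXY => by
  have h1 := hd.mono (Finset.subset_union_left (s₂ := S')) X Y hXY
  have h2 := hd'.mono (Finset.subset_union_right (s₁ := S)) X Y hXY
  simp only [h1, h2]

lemma dep_prod {n : ℕ} (F : Finset (EdgeK n)) : Dep F (fun X => ∏ g ∈ F, xi X g) := by
  intro X Y hXY
  exact Finset.prod_congr rfl fun g hg => by simp [xi, hXY g hg]

lemma prod_nonneg' {n : ℕ} (F : Finset (EdgeK n)) (X : Config n) : 0 ≤ ∏ g ∈ F, xi X g :=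
  Finset.prod_nonneg fun g _ => xi_nonneg X g

lemma prod_le_one' {n : ℕ} (F : Finset (EdgeK n)) (X : Config n) : ∏ g ∈ F, xi X g ≤ 1 :=
  Finset.prod_le_one (fun g _ => xi_nonneg X g) (fun g _ => xi_le_one X g)

lemma UB.prod {n : ℕ} {w : Config n → ℝ} {K : ℕ} {M : ℝ} (hU : UB w K M) (hM : 0 ≤ M)
    {S : Finset (EdgeK n)} {h : Config n → ℝ} (hh : ∀ X, 0 ≤ h X) (hd : Dep S h)
    (F : Finset (EdgeK n)) (hF : Disjoint S F) (hc : S.card + F.card ≤ K) :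
    Ew w (fun X => h X * ∏ g ∈ F, xi X g) ≤ M ^ F.card * Ew w h := by
  induction F using Finset.induction_on with
  | empty => simp
  | insert g F hg ih =>
    rw [Finset.card_insert_of_notMem hg] at hc ⊢
    rw [Finset.disjoint_insert_right] at hF
    have h1 := ih hF.2 (by omega)
    have h2 := hU (S ∪ F) ((Finset.card_union_le _ _).trans (by omega))
      (fun X => h X * ∏ g ∈ F, xi X g) (fun X => mul_nonneg (hh X) (prod_nonneg' F X))
      (hd.mul (dep_prod F)) g (by simp [hg, hF.1])
    have h3 : (fun X => h X * ∏ g ∈ insert g F, xi X g)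
        = (fun X => h X * (∏ g ∈ F, xi X g) * xi X g) := by
      funext X; rw [Finset.prod_insert hg]; ring
    rw [h3]
    calc _ ≤ _ := h2
      _ ≤ M * (M ^ F.card * Ew w h) := mul_le_mul_of_nonneg_left h1 hM
      _ = _ := by ring

lemma LB.prod {n : ℕ} {w : Config n → ℝ} {K : ℕ} {M : ℝ} (hU : LB w K M) (hM : 0 ≤ M)
    {S : Finset (EdgeK n)} {h : Config n → ℝ} (hh : ∀ X, 0 ≤ h X) (hd : Dep S h)
    (F : Finset (EdgeK n)) (hF : Disjoint S F) (hc : S.card + F.card ≤ K) :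
    M ^ F.card * Ew w h ≤ Ew w (fun X => h X * ∏ g ∈ F, xi X g) := by
  induction F using Finset.induction_on with
  | empty => simp
  | insert g F hg ih =>
    rw [Finset.card_insert_of_notMem hg] at hc ⊢
    rw [Finset.disjoint_insert_right] at hF
    have h1 := ih hF.2 (by omega)
    have h2 := hU (S ∪ F) ((Finset.card_union_le _ _).trans (by omega))
      (fun X => h X * ∏ g ∈ F, xi X g) (fun X => mul_nonneg (hh X) (prod_nonneg' F X))
      (hd.mul (dep_prod F)) g (by simp [hg, hF.1])
    have h3 : (fun X => h X * ∏ g ∈ insert g F, xi X g)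
        = (fun X => h X * (∏ g ∈ F, xi X g) * xi X g) := by
      funext X; rw [Finset.prod_insert hg]; ring
    rw [h3]
    calc _ = M * (M ^ F.card * Ew w h) := by ring
      _ ≤ M * _ := mul_le_mul_of_nonneg_left h1 hM
      _ ≤ _ := h2

lemma moment {n : ℕ} {w : Config n → ℝ} (hw : ∀ X, 0 ≤ w X) {ι : Type*} (R : Finset ι)
    (W : ι → Config n → ℝ) (F : ι → Finset (EdgeK n)) (d K : ℕ) (q δ D : ℝ)
    (hq : 0 ≤ q) (hδ : 0 < δ) (hD : 0 < D) (hR : (R.card : ℝ) ≤ D)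
    (hW0 : ∀ v X, 0 ≤ W v X) (hW1 : ∀ v X, W v X ≤ 1)
    (hWd : ∀ v, Dep (F v) (W v)) (hFd : ∀ v, (F v).card ≤ d)
    (hbad : ∀ S : Finset (EdgeK n), S.card ≤ K →
      ((R.filter fun v => ¬ Disjoint S (F v)).card : ℝ) ≤ δ * D)
    (hstep : ∀ S : Finset (EdgeK n), S.card ≤ K → ∀ h : Config n → ℝ, (∀ X, 0 ≤ h X) → Dep S h →
      ∀ v ∈ R, Disjoint S (F v) → Ew w (fun X => h X * W v X) ≤ q * Ew w h)
    (j : ℕ) : ∀ S : Finset (EdgeK n), S.card + j * d ≤ K → ∀ h : Config n → ℝ, (∀ X, 0 ≤ h X) →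
      Dep S h → Ew w (fun X => h X * (∑ v ∈ R, W v X) ^ j) ≤ ((q + δ) * D) ^ j * Ew w h := by
  induction j with
  | zero => intro S _ h _ _; simp
  | succ j ih =>
    intro S hS h hh hd
    have hS' : S.card + j * d + d ≤ K := by rw [add_one_mul] at hS; omega
    set C := ((q + δ) * D) ^ j with hC
    have hC0 : 0 ≤ C := by positivity
    have hE0 : 0 ≤ Ew w h := Ew_nonneg hw hh
    have hT0 : ∀ X, 0 ≤ (∑ v ∈ R, W v X) ^ j := fun X =>
      pow_nonneg (Finset.sum_nonneg fun v _ => hW0 v X) _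
    have e1 : (fun X => h X * (∑ v ∈ R, W v X) ^ (j+1))
        = fun X => ∑ v ∈ R, (h X * W v X) * (∑ v ∈ R, W v X) ^ j := by
      funext X; rw [← Finset.sum_mul, ← Finset.mul_sum]; ring
    rw [e1, Ew_sum]
    have hterm : ∀ v ∈ R, Ew w (fun X => (h X * W v X) * (∑ v ∈ R, W v X) ^ j)
        ≤ q * (C * Ew w h) + if ¬ Disjoint S (F v) then C * Ew w h else 0 := by
      intro v hv
      by_cases hdis : Disjoint S (F v)
      · simp only [hdis, not_true_eq_false, if_false, add_zero]
        have h1 := ih (S ∪ F v) (by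
          have := Finset.card_union_le S (F v)
          have := hFd v
          omega) (fun X => h X * W v X) (fun X => mul_nonneg (hh X) (hW0 v X)) (hd.mul (hWd v))
        have h2 := hstep S (by omega) h hh hd v hv hdis
        calc _ ≤ _ := h1
          _ ≤ C * (q * Ew w h) := mul_le_mul_of_nonneg_left h2 hC0
          _ = _ := by ring
      · simp only [hdis, not_false_eq_true, if_true]
        have h1 := ih S (by omega) h hh hd
        have h2 : Ew w (fun X => (h X * W v X) * (∑ v ∈ R, W v X) ^ j)
            ≤ Ew w (fun X => h X * (∑ v ∈ R, W v X) ^ j) := by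
          refine Ew_mono hw fun X => ?_
          refine mul_le_mul_of_nonneg_right ?_ (hT0 X)
          exact mul_le_of_le_one_right (hh X) (hW1 v X)
        have : 0 ≤ q * (C * Ew w h) := by positivity
        linarith
    calc _ ≤ ∑ v ∈ R, (q * (C * Ew w h) + if ¬ Disjoint S (F v) then C * Ew w h else 0) :=
          Finset.sum_le_sum hterm
      _ = R.card * (q * (C * Ew w h))
          + ((R.filter fun v => ¬ Disjoint S (F v)).card : ℝ) * (C * Ew w h) := by
        rw [Finset.sum_add_distrib, ← Finset.sum_filter]
        simp [nsmul_eq_mul]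
      _ ≤ D * (q * (C * Ew w h)) + (δ * D) * (C * Ew w h) := by
        have := hbad S (by omega)
        gcongr
      _ = _ := by rw [hC]; ring

lemma tail {n : ℕ} {w : Config n → ℝ} (hw : ∀ X, 0 ≤ w X) {ι : Type*} (R : Finset ι)
    (W : ι → Config n → ℝ) (F : ι → Finset (EdgeK n)) (d K : ℕ) (q δ D : ℝ)
    (hq : 0 ≤ q) (hq1 : q ≤ 1) (hδ : 0 < δ) (hD : 0 < D) (hR : (R.card : ℝ) ≤ D)
    (hW0 : ∀ v X, 0 ≤ W v X) (hW1 : ∀ v X, W v X ≤ 1)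
    (hWd : ∀ v, Dep (F v) (W v)) (hFd : ∀ v, (F v).card ≤ d)
    (hbad : ∀ S : Finset (EdgeK n), S.card ≤ K →
      ((R.filter fun v => ¬ Disjoint S (F v)).card : ℝ) ≤ δ * D)
    (hstep : ∀ S : Finset (EdgeK n), S.card ≤ K → ∀ h : Config n → ℝ, (∀ X, 0 ≤ h X) → Dep S h →
      ∀ v ∈ R, Disjoint S (F v) → Ew w (fun X => h X * W v X) ≤ q * Ew w h)
    (j : ℕ) (hj : ((1 + δ) / (1 + 2 * δ)) ^ j ≤ δ)
    (S : Finset (EdgeK n)) (hS : S.card + j * d ≤ K) (h : Config n → ℝ) (hh : ∀ X, 0 ≤ h X)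
    (hd : Dep S h) :
    Ew w (fun X => h X * max ((∑ v ∈ R, W v X) / D - q) 0) ≤ 3 * δ * Ew w h := by
  have hm := moment hw R W F d K q δ D hq hδ hD hR hW0 hW1 hWd hFd hbad hstep j S hS h hh hd
  have hE0 : 0 ≤ Ew w h := Ew_nonneg hw hh
  have hpt : ∀ X, h X * max ((∑ v ∈ R, W v X) / D - q) 0
      ≤ (2 * δ) * h X + (1 / ((q + 2 * δ) * D)) ^ j * (h X * (∑ v ∈ R, W v X) ^ j) := by
    intro X
    set T := ∑ v ∈ R, W v X with hT
    have hT0 : 0 ≤ T := Finset.sum_nonneg fun v _ => hW0 v X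
    have hT1 : T ≤ D := by
      refine le_trans (Finset.sum_le_sum fun v _ => hW1 v X) ?_
      simpa using hR
    have key : max (T / D - q) 0 ≤ 2 * δ + (1 / ((q + 2 * δ) * D)) ^ j * T ^ j := by
      rw [← mul_pow]
      by_cases hc : T / D ≤ q + 2 * δ
      · have : 0 ≤ (1 / ((q + 2 * δ) * D) * T) ^ j := by positivity
        apply max_le <;> linarith
      · push Not at hc
        have h1 : (1:ℝ) ≤ 1 / ((q + 2 * δ) * D) * T := by
          rw [lt_div_iff₀ hD] at hc
          rw [one_div, ← div_eq_inv_mul, le_div_iff₀ (by positivity)]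
          linarith
        have h2 := one_le_pow₀ h1 (n := j)
        have h3 : T / D ≤ 1 := by rw [div_le_one hD]; exact hT1
        apply max_le <;> linarith
    calc _ ≤ h X * (2 * δ + (1 / ((q + 2 * δ) * D)) ^ j * T ^ j) :=
          mul_le_mul_of_nonneg_left key (hh X)
      _ = _ := by ring
  have h1 := Ew_mono hw hpt
  rw [Ew_add, Ew_smul, Ew_smul] at h1
  have h2 : (1 / ((q + 2 * δ) * D)) ^ j * ((q + δ) * D) ^ j ≤ δ := by
    rw [← mul_pow]
    refine le_trans (pow_le_pow_left₀ (by positivity) ?_ j) hj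
    rw [one_div, ← div_eq_inv_mul, mul_div_mul_right _ _ hD.ne',
      div_le_div_iff₀ (by positivity) (by positivity)]
    nlinarith
  have h3 : (1 / ((q + 2 * δ) * D)) ^ j * Ew w (fun X => h X * (∑ v ∈ R, W v X) ^ j)
      ≤ δ * Ew w h := by
    calc _ ≤ (1 / ((q + 2 * δ) * D)) ^ j * (((q + δ) * D) ^ j * Ew w h) :=
          mul_le_mul_of_nonneg_left hm (by positivity)
      _ = ((1 / ((q + 2 * δ) * D)) ^ j * ((q + δ) * D) ^ j) * Ew w h := by ring
      _ ≤ _ := mul_le_mul_of_nonneg_right h2 hE0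
  linarith

/-- Rooted embeddings. -/
def RS {n m : ℕ} (G : Finset (EdgeK m)) (f : EdgeK n) : Finset (Fin m ↪ Fin n) :=
  univ.filter fun v => ∃ a ∈ G, mapEdge v a = f

/-- Edges of the embedded pattern other than the root. -/
def FE {n m : ℕ} (G : Finset (EdgeK m)) (f : EdgeK n) (v : Fin m ↪ Fin n) : Finset (EdgeK n) :=
  (G.image (mapEdge v)).erase f

lemma mapEdge_inj {n m : ℕ} (v : Fin m ↪ Fin n) : Function.Injective (mapEdge v) := by
  intro a b hab
  have := congrArg Subtype.val hab
  exact Subtype.ext (Sym2.map.injective v.injective this)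

lemma FE_card {n m : ℕ} (G : Finset (EdgeK m)) (f : EdgeK n) (v : Fin m ↪ Fin n)
    (hv : v ∈ RS G f) : (FE G f v).card = G.card - 1 := by
  simp only [RS, mem_filter, mem_univ, true_and] at hv
  unfold FE
  rw [Finset.card_erase_of_mem (by simpa using hv), Finset.card_image_of_injective _ (mapEdge_inj v)]

lemma FE_card_le {n m : ℕ} (G : Finset (EdgeK m)) (f : EdgeK n) (v : Fin m ↪ Fin n) :
    (FE G f v).card ≤ G.card :=
  (Finset.card_le_card (Finset.erase_subset _ _)).trans Finset.card_image_le

lemma prod_xi {n : ℕ} (F : Finset (EdgeK n)) (X : Config n) :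
    ∏ g ∈ F, xi X g = if ∀ g ∈ F, X g = true then 1 else 0 := by
  unfold xi
  rw [Finset.prod_ite_zero]
  simp

lemma rootedCount_eq {n m : ℕ} (X : Config n) (G : Finset (EdgeK m)) (f : EdgeK n) :
    (rootedCount X G f : ℝ) = ∑ v ∈ RS G f, ∏ g ∈ FE G f v, xi X g := by
  simp only [prod_xi]
  rw [Finset.sum_boole]
  unfold rootedCount RS
  rw [Finset.filter_filter]
  congr 2
  ext v
  simp only [mem_filter, mem_univ, true_and]
  simp only [FE, mem_erase, mem_image, addEdge]
  refine and_congr_right fun _ => ?_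
  constructor
  · rintro h g ⟨hg, a, ha, rfl⟩
    simpa [hg] using h a ha
  · intro h a ha
    by_cases hg : mapEdge v a = f
    · simp [hg]
    · simp [hg, h _ ⟨hg, a, ha, rfl⟩]

lemma copyCount_setEdge {n m : ℕ} (X : Config n) (G : Finset (EdgeK m)) (f : EdgeK n) :
    copyCount (setEdge X f true) G = copyCount (setEdge X f false) G + rootedCount X G f := by
  unfold copyCount rootedCount
  rw [← Finset.card_union_of_disjoint]
  · congr 1
    ext v
    simp only [mem_filter, mem_univ, true_and, mem_union]
    simp only [setEdge, addEdge]
    constructor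
    · intro h
      by_cases hf : ∃ a ∈ G, mapEdge v a = f
      · exact Or.inr ⟨hf, h⟩
      · left
        intro a ha
        have h1 : mapEdge v a ≠ f := fun h => hf ⟨a, ha, h⟩
        simpa [h1] using h a ha
    · rintro (h | h)
      · intro a ha
        have := h a ha
        split_ifs at this ⊢; simp_all
      · exact h.2
  · rw [Finset.disjoint_left]
    intro v h1 h2
    simp only [mem_filter, mem_univ, true_and] at h1 h2
    simp only [setEdge] at h1
    obtain ⟨⟨a, ha, hf⟩, _⟩ := h2
    simpa [hf] using h1 a ha

lemma dH_eq {s : ℕ} (V : Fin s → ℕ) (Pt : ∀ i, Finset (EdgeK (V i))) (β : Fin s → ℝ)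
    (n : ℕ) (X : Config n) (e : EdgeK n) :
    dH V Pt β n X e = ∑ i, β i * (rootedCount X (Pt i) e : ℝ) / (n : ℝ) ^ (V i - 2) := by
  unfold dH ergmH
  rw [← Finset.sum_sub_distrib]
  refine Finset.sum_congr rfl fun i _ => ?_
  rw [copyCount_setEdge]
  push_cast
  ring

/-- The logistic function. -/
def sg (x : ℝ) : ℝ := Real.exp x / (1 + Real.exp x)

lemma sg_le_one (x : ℝ) : sg x ≤ 1 := by
  unfold sg
  rw [div_le_one (by positivity)]
  linarith

lemma sg_nonneg (x : ℝ) : 0 ≤ sg x := by unfold sg; positivity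

lemma sg_hasDeriv (x : ℝ) : HasDerivAt sg (Real.exp x / (1 + Real.exp x) ^ 2) x := by
  have h := (Real.hasDerivAt_exp x).div ((Real.hasDerivAt_exp x).const_add 1)
    (by positivity : (1 + Real.exp x) ≠ 0)
  have e : Real.exp x / (1 + Real.exp x) ^ 2
      = (Real.exp x * (1 + Real.exp x) - Real.exp x * Real.exp x) / (1 + Real.exp x) ^ 2 := by
    congr 1; ring
  rw [e]
  exact h

lemma sg_lip (x y : ℝ) : sg x ≤ sg y + max (x - y) 0 := by
  have hmono : Monotone sg := by
    refine monotone_of_deriv_nonneg (fun x => (sg_hasDeriv x).differentiableAt) fun x => ?_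
    rw [(sg_hasDeriv x).deriv]; positivity
  rcases le_total x y with h | h
  · have := hmono h
    have := le_max_right (x - y) 0
    linarith
  · have hanti : Antitone (fun x => sg x - x) := by
      refine antitone_of_deriv_nonpos
        (fun x => ((sg_hasDeriv x).sub (hasDerivAt_id x)).differentiableAt) fun x => ?_
      have := ((sg_hasDeriv x).sub (hasDerivAt_id x)).deriv
      change deriv (sg - id) x ≤ 0
      rw [this, sub_nonpos, div_le_one (by positivity)]
      have := Real.exp_pos x
      nlinarith
    have h1 : sg x - x ≤ sg y - y := hanti h
    have := le_max_left (x - y) 0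
    linarith

lemma gibbs_nonneg {s : ℕ} (V : Fin s → ℕ) (Pt : ∀ i, Finset (EdgeK (V i))) (β : Fin s → ℝ)
    (n : ℕ) (X : Config n) : 0 ≤ gibbs V Pt β n X := by
  unfold gibbs
  exact div_nonneg (Real.exp_pos _).le (Finset.sum_nonneg fun _ _ => (Real.exp_pos _).le)

lemma gibbs_sum {s : ℕ} (V : Fin s → ℕ) (Pt : ∀ i, Finset (EdgeK (V i))) (β : Fin s → ℝ)
    (n : ℕ) : ∑ X, gibbs V Pt β n X = 1 := by
  unfold gibbs
  rw [← Finset.sum_div, div_self]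
  exact (Finset.sum_pos (fun _ _ => Real.exp_pos _) Finset.univ_nonempty).ne'

/-- Flipping an edge. -/
def flip {n : ℕ} (f : EdgeK n) (X : Config n) : Config n := setEdge X f (!X f)

lemma flip_invol {n : ℕ} (f : EdgeK n) : Function.Involutive (flip f) := by
  intro X
  funext g
  by_cases h : g = f <;> simp [flip, setEdge, h]

lemma setEdge_self {n : ℕ} (f : EdgeK n) (X : Config n) : setEdge X f (X f) = X := by
  funext g
  by_cases h : g = f <;> simp [setEdge, h]

lemma setEdge_set {n : ℕ} (f : EdgeK n) (X : Config n) (b c : Bool) :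
    setEdge (setEdge X f b) f c = setEdge X f c := by
  funext g
  by_cases h : g = f <;> simp [setEdge, h]

lemma gibbs_cond {s : ℕ} (V : Fin s → ℕ) (Pt : ∀ i, Finset (EdgeK (V i))) (β : Fin s → ℝ)
    (n : ℕ) (f : EdgeK n) (S : Finset (EdgeK n)) (h : Config n → ℝ) (hd : Dep S h) (hf : f ∉ S) :
    Ew (gibbs V Pt β n) (fun X => h X * xi X f)
      = Ew (gibbs V Pt β n) (fun X => h X * sg (dH V Pt β n X f)) := by
  have hset : ∀ X b, h (setEdge X f b) = h X := by
    intro X b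
    refine hd _ _ fun g hg => ?_
    have : g ≠ f := fun h => hf (h ▸ hg)
    simp [setEdge, this]
  have hdset : ∀ X b, dH V Pt β n (setEdge X f b) f = dH V Pt β n X f := by
    intro X b; simp [dH, setEdge_set]
  have hratio : ∀ X, gibbs V Pt β n (setEdge X f true)
      = gibbs V Pt β n (setEdge X f false) * Real.exp (dH V Pt β n X f) := by
    intro X
    unfold gibbs dH
    rw [Real.exp_sub]
    have := (Real.exp_pos (ergmH V Pt β n (setEdge X f false))).ne'
    field_simp
  rw [← sub_eq_zero, ← Ew_sub]
  set g : Config n → ℝ := fun X =>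
    gibbs V Pt β n X * (h X * xi X f - h X * sg (dH V Pt β n X f)) with hg
  change ∑ X, g X = 0
  have hsum : ∑ X, g (flip f X) = ∑ X, g X :=
    Equiv.sum_comp (flip_invol f).toPerm g
  have hpair : ∀ X, g (setEdge X f true) + g (setEdge X f false) = 0 := by
    intro X
    simp only [hg, hset, hdset, hratio X]
    have e1 : xi (setEdge X f true) f = 1 := by simp [xi, setEdge]
    have e2 : xi (setEdge X f false) f = 0 := by simp [xi, setEdge]
    rw [e1, e2]
    unfold sg
    have : (1 + Real.exp (dH V Pt β n X f)) ≠ 0 := by positivity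
    field_simp
    ring
  have hz : ∀ X, g X + g (flip f X) = 0 := by
    intro X
    have h1 := hpair X
    have h2 := setEdge_self f X
    unfold flip
    cases hX : X f <;> rw [hX] at h2
    · rw [h2] at h1; simpa [add_comm] using h1
    · rw [h2] at h1; simpa using h1
  have : ∑ X, g X + ∑ X, g X = 0 := by
    nth_rewrite 2 [← hsum]
    rw [← Finset.sum_add_distrib]
    exact Finset.sum_eq_zero fun X _ => hz X
  linarith

/-! Counting -/

lemma RS_card_eq {n m : ℕ} (G : Finset (EdgeK m)) (f f' : EdgeK n) :
    (RS G f).card = (RS G f').card := by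
  suffices h : ∀ f f' : EdgeK n, (RS G f).card ≤ (RS G f').card from le_antisymm (h _ _) (h _ _)
  intro f f'
  obtain ⟨π, hπ⟩ : ∃ π : Equiv.Perm (Fin n), f.1.map π = f'.1 := by
    obtain ⟨⟨u, w⟩, hf⟩ := f
    obtain ⟨⟨u', w'⟩, hf'⟩ := f'
    have h1 : u ≠ w := hf
    have h2 : u' ≠ w' := hf'
    refine ⟨(Equiv.swap u u').trans (Equiv.swap (Equiv.swap u u' w) w'), ?_⟩
    change s(_, _) = s(u', w')
    simp only [Equiv.trans_apply, Equiv.swap_apply_left]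
    congr 2
    refine Equiv.swap_apply_of_ne_of_ne ?_ h2
    intro h
    have : Equiv.swap u u' u = Equiv.swap u u' w := by rw [Equiv.swap_apply_left]; exact h
    exact h1 ((Equiv.swap u u').injective this)
  refine Finset.card_le_card_of_injOn (fun v => v.trans π.toEmbedding) ?_ ?_
  · intro v hv
    simp only [RS, coe_filter, mem_univ, true_and, Set.mem_ofPred_eq] at hv ⊢
    obtain ⟨a, ha, hva⟩ := hv
    refine ⟨a, ha, Subtype.ext ?_⟩
    rw [← hπ, ← hva]
    simp [mapEdge, Sym2.map_map]
  · intro v _ v' _ h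
    ext x
    have := DFunLike.congr_fun h x
    have h2 : v x = v' x := by simpa using this
    rw [h2]

lemma card_EdgeK (n : ℕ) : Fintype.card (EdgeK n) = n.choose 2 := by
  have := Sym2.card_subtype_not_diag (α := Fin n)
  simpa using this

lemma RS_card_mul {n m : ℕ} (G : Finset (EdgeK m)) (f : EdgeK n) :
    n.choose 2 * (RS G f).card = G.card * n.descFactorial m := by
  have h1 : ∑ f' : EdgeK n, (RS G f').card = n.choose 2 * (RS G f).card := by
    rw [Finset.sum_congr rfl (fun f' _ => RS_card_eq G f' f)]
    rw [Finset.sum_const, smul_eq_mul, Finset.card_univ, card_EdgeK]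
  rw [← h1]
  have h2 : ∀ v : Fin m ↪ Fin n, (univ.filter fun f' : EdgeK n => ∃ a ∈ G, mapEdge v a = f').card
      = G.card := by
    intro v
    rw [← Finset.card_image_of_injective G (mapEdge_inj v)]
    congr 1
    ext f'
    simp
  unfold RS
  simp only [Finset.card_filter]
  rw [Finset.sum_comm]
  simp only [← Finset.card_filter, h2]
  simp [mul_comm]

lemma RS_card {n m : ℕ} (hm : 2 ≤ m) (G : Finset (EdgeK m)) (f : EdgeK n) :
    (RS G f).card = 2 * G.card * (n - 2).descFactorial (m - 2) := by
  have hn : 2 ≤ n := by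
    have h : 0 < Fintype.card (EdgeK n) := Fintype.card_pos_iff.mpr ⟨f⟩
    rw [card_EdgeK] at h
    by_contra hc
    rw [Nat.choose_eq_zero_of_lt (by omega)] at h
    omega
  have h := RS_card_mul G f
  obtain ⟨n, rfl⟩ := Nat.exists_eq_add_of_le' hn
  obtain ⟨m, rfl⟩ := Nat.exists_eq_add_of_le' hm
  have hc : (n+2).choose 2 * 2 = (n+2) * (n+1) := by
    rw [Nat.choose_two_right, Nat.div_mul_cancel]
    · rfl
    · exact (Nat.even_mul_pred_self (n+2)).two_dvd
  rw [Nat.succ_descFactorial_succ, Nat.succ_descFactorial_succ] at h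
  simp only [Nat.add_sub_cancel]
  have : (n+2) * (n+1) * (RS G f).card = (n+2) * (n+1) * (2 * G.card * n.descFactorial m) := by
    calc _ = 2 * ((n+2).choose 2 * (RS G f).card) := by rw [← hc]; ring
      _ = _ := by rw [h]; ring
  exact Nat.eq_of_mul_eq_mul_left (by positivity) this

lemma RS_card_le {n m : ℕ} (hm : 2 ≤ m) (G : Finset (EdgeK m)) (f : EdgeK n) :
    ((RS G f).card : ℝ) ≤ 2 * G.card * (n : ℝ) ^ (m - 2) := by
  rw [RS_card hm]
  have h : (n - 2).descFactorial (m - 2) ≤ n ^ (m - 2) :=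
    (Nat.descFactorial_le_pow _ _).trans (Nat.pow_le_pow_left (Nat.sub_le _ _) _)
  push_cast
  have : (((n - 2).descFactorial (m - 2) : ℕ) : ℝ) ≤ (n : ℝ) ^ (m - 2) := by exact_mod_cast h
  gcongr

lemma RS_card_ge {m : ℕ} (hm : 2 ≤ m) (G : Finset (EdgeK m)) (δ : ℝ) (hδ : 0 < δ) :
    ∃ N : ℕ, ∀ n ≥ N, ∀ f : EdgeK n,
      (1 - δ) * (2 * G.card * (n : ℝ) ^ (m - 2)) ≤ ((RS G f).card : ℝ) := by
  obtain ⟨N, hN⟩ := exists_nat_gt ((m : ℝ) * m / δ)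
  refine ⟨N + m + 1, fun n hn f => ?_⟩
  rw [RS_card hm]
  push_cast
  have hn0 : (0:ℝ) < n := by exact_mod_cast (by omega : 0 < n)
  have h1 : (n + 1 - m) ^ (m - 2) ≤ (n - 2).descFactorial (m - 2) := by
    have := Nat.pow_sub_le_descFactorial (n - 2) (m - 2)
    refine le_trans (Nat.pow_le_pow_left ?_ _) this
    omega
  have h2 : ((n : ℝ) - m) ^ (m - 2) ≤ ((n - 2).descFactorial (m - 2) : ℝ) := by
    refine le_trans ?_ (by exact_mod_cast h1 : (((n + 1 - m : ℕ) : ℝ)) ^ (m - 2) ≤ _)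
    have : (m : ℝ) ≤ n := by exact_mod_cast (by omega : m ≤ n)
    refine pow_le_pow_left₀ (by linarith) ?_ _
    rw [Nat.cast_sub (by omega)]
    push_cast; linarith
  have h3 : (1 - δ) * (n : ℝ) ^ (m - 2) ≤ ((n : ℝ) - m) ^ (m - 2) := by
    have e : ((n : ℝ) - m) = (1 + (-(m / n : ℝ))) * n := by field_simp; ring
    rw [e, mul_pow]
    have hmn : (m : ℝ) / n ≤ 1 := by
      rw [div_le_one hn0]; exact_mod_cast (by omega : m ≤ n)
    have hb := one_add_mul_le_pow (a := -(m / n : ℝ)) (by linarith) (m - 2)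
    refine mul_le_mul_of_nonneg_right (le_trans ?_ hb) (by positivity)
    have h4 : ((m - 2 : ℕ) : ℝ) ≤ m := by exact_mod_cast Nat.sub_le _ _
    have h5 : (m : ℝ) * (m / n) ≤ δ := by
      have : (N : ℝ) ≤ n := by exact_mod_cast (by omega : N ≤ n)
      rw [← mul_div_assoc, div_le_iff₀ hn0]
      rw [div_lt_iff₀ hδ] at hN
      nlinarith
    have h6 : ((m - 2 : ℕ) : ℝ) * (m / n) ≤ m * (m / n) := by gcongr
    linarith
  calc _ = 2 * G.card * ((1 - δ) * (n : ℝ) ^ (m - 2)) := by ring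
    _ ≤ _ := by
      have := h3.trans h2
      gcongr

lemma bad_one {n m : ℕ} (G : Finset (EdgeK m)) (f g : EdgeK n) :
    ((RS G f).filter fun v => g ∈ FE G f v).card ≤ m.choose 3 * (64 * n ^ (m - 3)) := by
  by_cases hgf : g = f
  · have : ((RS G f).filter fun v => g ∈ FE G f v) = ∅ := by
      ext v; simp [FE, hgf]
    rw [this]; simp
  set U : Finset (Fin n) := f.1.toFinset ∪ g.1.toFinset with hU
  have hf2 : f.1.toFinset.card = 2 := Sym2.card_toFinset_of_not_isDiag _ f.2
  have hg2 : g.1.toFinset.card = 2 := Sym2.card_toFinset_of_not_isDiag _ g.2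
  have hU4 : U.card ≤ 4 := by
    refine (Finset.card_union_le _ _).trans ?_
    omega
  have hU3 : 3 ≤ U.card := by
    by_contra hc
    have e1 : f.1.toFinset = U := Finset.eq_of_subset_of_card_le Finset.subset_union_left (by omega)
    have e2 : g.1.toFinset = U := Finset.eq_of_subset_of_card_le Finset.subset_union_right (by omega)
    apply hgf
    apply Subtype.ext
    apply Sym2.ext
    intro x
    rw [← Sym2.mem_toFinset, ← Sym2.mem_toFinset, e1, e2]
  have hcount : ∀ A ∈ (univ : Finset (Fin m)).powersetCard 3,
      (univ.filter fun v : Fin m ↪ Fin n => ∀ x ∈ A, v x ∈ U).card ≤ 64 * n ^ (m - 3) := by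
    intro A hA
    have hA3 : A.card = 3 := (Finset.mem_powersetCard.mp hA).2
    have h1 : (univ.filter fun v : Fin m ↪ Fin n => ∀ x ∈ A, v x ∈ U).card
        ≤ (Fintype.piFinset fun x : Fin m => if x ∈ A then U else univ).card := by
      refine Finset.card_le_card_of_injOn (fun v => (v : Fin m → Fin n)) ?_ ?_
      · intro v hv
        simp only [coe_filter, mem_univ, true_and, Set.mem_ofPred_eq] at hv
        simp only [Fintype.coe_piFinset, Set.mem_pi, Set.mem_univ, mem_coe, forall_true_left]
        intro x
        split_ifs with hx
        · exact hv x hx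
        · exact mem_univ _
      · intro v _ v' _ h
        exact DFunLike.coe_injective h
    refine h1.trans ?_
    rw [Fintype.card_piFinset]
    have h2 : ∀ x : Fin m, (if x ∈ A then U else univ).card = if x ∈ A then U.card else n := by
      intro x; split_ifs <;> simp
    simp only [h2]
    rw [Finset.prod_ite]
    simp only [Finset.prod_const]
    have h3 : (univ.filter fun x : Fin m => x ∈ A) = A := by ext; simp
    have h4 : (univ.filter fun x : Fin m => x ∉ A).card = m - 3 := by
      have : (univ.filter fun x : Fin m => x ∉ A) = Aᶜ := by ext; simp
      rw [this, Finset.card_compl, hA3, Fintype.card_fin]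
    rw [h3, h4, hA3]
    have : U.card ^ 3 ≤ 4 ^ 3 := Nat.pow_le_pow_left hU4 3
    exact Nat.mul_le_mul_right _ (by simpa using this)
  have hsub : ((RS G f).filter fun v => g ∈ FE G f v)
      ⊆ ((univ : Finset (Fin m)).powersetCard 3).biUnion
        (fun A => univ.filter fun v : Fin m ↪ Fin n => ∀ x ∈ A, v x ∈ U) := by
    intro v hv
    simp only [RS, FE, mem_filter, mem_univ, true_and, mem_erase, mem_image] at hv
    obtain ⟨⟨a, ha, haf⟩, _, b, hb, hbg⟩ := hv
    have himg : U ⊆ (univ.filter fun x => v x ∈ U).image v := by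
      intro y hy
      have hex : ∃ x, v x = y := by
        rcases Finset.mem_union.mp hy with h | h
        · rw [Sym2.mem_toFinset, ← haf] at h
          obtain ⟨x, _, hx⟩ := Sym2.mem_map.mp h
          exact ⟨x, hx⟩
        · rw [Sym2.mem_toFinset, ← hbg] at h
          obtain ⟨x, _, hx⟩ := Sym2.mem_map.mp h
          exact ⟨x, hx⟩
      obtain ⟨x, rfl⟩ := hex
      exact Finset.mem_image.mpr ⟨x, by simpa using hy, rfl⟩
    have h3 : 3 ≤ (univ.filter fun x => v x ∈ U).card :=
      hU3.trans ((Finset.card_le_card himg).trans Finset.card_image_le)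
    obtain ⟨A, hA, hA3⟩ := Finset.exists_subset_card_eq h3
    simp only [mem_biUnion, mem_powersetCard, mem_filter, mem_univ, true_and]
    exact ⟨A, ⟨Finset.subset_univ _, hA3⟩, fun x hx => (Finset.mem_filter.mp (hA hx)).2⟩
  refine (Finset.card_le_card hsub).trans ?_
  refine (Finset.card_biUnion_le_card_mul _ _ _ hcount).trans ?_
  simp

lemma bad_all {n m : ℕ} (G : Finset (EdgeK m)) (f : EdgeK n) (S : Finset (EdgeK n)) :
    ((RS G f).filter fun v => ¬ Disjoint S (FE G f v)).card
      ≤ S.card * (m.choose 3 * (64 * n ^ (m - 3))) := by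
  have hsub : ((RS G f).filter fun v => ¬ Disjoint S (FE G f v))
      ⊆ S.biUnion fun g => (RS G f).filter fun v => g ∈ FE G f v := by
    intro v hv
    simp only [mem_filter, Finset.not_disjoint_iff] at hv
    obtain ⟨hv, g, hg, hgv⟩ := hv
    simp only [mem_biUnion, mem_filter]
    exact ⟨g, hg, hv, hgv⟩
  exact (Finset.card_le_card hsub).trans
    (Finset.card_biUnion_le_card_mul _ _ _ fun g _ => bad_one G f g)

lemma bad_small {m : ℕ} (G : Finset (EdgeK m)) (hG : 1 ≤ G.card) (K : ℕ)
    (δ : ℝ) (hδ : 0 < δ) :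
    ∃ N : ℕ, ∀ n ≥ N, ∀ f : EdgeK n, ∀ S : Finset (EdgeK n), S.card ≤ K →
      (((RS G f).filter fun v => ¬ Disjoint S (FE G f v)).card : ℝ)
        ≤ δ * (2 * G.card * (n : ℝ) ^ (m - 2)) := by
  obtain ⟨N, hN⟩ := exists_nat_gt ((K * (m.choose 3 * 64) : ℝ) / δ)
  refine ⟨N + 1, fun n hn f S hS => ?_⟩
  have h1 : (((RS G f).filter fun v => ¬ Disjoint S (FE G f v)).card : ℝ)
      ≤ S.card * (m.choose 3 * (64 * (n:ℝ) ^ (m - 3))) := by exact_mod_cast bad_all G f S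
  refine h1.trans ?_
  have hG' : (1:ℝ) ≤ G.card := by exact_mod_cast hG
  rcases Nat.lt_or_ge m 3 with h | h
  · rw [Nat.choose_eq_zero_of_lt h]
    simp only [Nat.cast_zero, zero_mul, mul_zero]
    positivity
  · have e : (n:ℝ) ^ (m - 2) = n * (n:ℝ) ^ (m - 3) := by
      rw [← pow_succ']; congr 1; omega
    rw [e]
    have hS' : (S.card : ℝ) ≤ K := by exact_mod_cast hS
    have hn' : (N : ℝ) ≤ n := by exact_mod_cast (by omega : N ≤ n)
    rw [div_lt_iff₀ hδ] at hN
    have h2 : (K * (m.choose 3 * 64) : ℝ) ≤ δ * (2 * G.card * n) := by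
      have h3 : (N:ℝ) * δ ≤ n * δ := by gcongr
      have h4 : (n:ℝ) * δ * 1 ≤ n * δ * G.card := by gcongr
      have h5 : 0 ≤ (n:ℝ) * δ := by positivity
      linarith
    calc (S.card : ℝ) * (m.choose 3 * (64 * (n:ℝ) ^ (m - 3)))
        ≤ K * (m.choose 3 * (64 * (n:ℝ) ^ (m - 3))) := by gcongr
      _ = (K * (m.choose 3 * 64)) * (n:ℝ) ^ (m - 3) := by ring
      _ ≤ (δ * (2 * G.card * n)) * (n:ℝ) ^ (m - 3) := by gcongr
      _ = _ := by ring

lemma exists_j (δ : ℝ) (hδ : 0 < δ) : ∃ j : ℕ, ((1 + δ) / (1 + 2 * δ)) ^ j ≤ δ := by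
  obtain ⟨j, hj⟩ := exists_pow_lt_of_lt_one hδ
    (by rw [div_lt_one (by positivity)]; linarith : (1 + δ) / (1 + 2 * δ) < 1)
  exact ⟨j, hj.le⟩

lemma up_tail {m : ℕ} (hm : 2 ≤ m) (G : Finset (EdgeK m)) (hG : 1 ≤ G.card) (k : ℕ)
    (δ : ℝ) (hδ : 0 < δ) :
    ∃ K N : ℕ, ∀ n ≥ N, ∀ w : Config n → ℝ, (∀ X, 0 ≤ w X) → ∀ M : ℝ, 0 ≤ M → M ≤ 1 → UB w K M →
      ∀ f : EdgeK n, ∀ S : Finset (EdgeK n), S.card ≤ k → ∀ h : Config n → ℝ, (∀ X, 0 ≤ h X) →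
      Dep S h →
      Ew w (fun X => h X * max ((rootedCount X G f : ℝ) / (2 * G.card * (n : ℝ) ^ (m - 2))
        - M ^ (G.card - 1)) 0) ≤ δ * Ew w h := by
  obtain ⟨j, hj⟩ := exists_j (δ / 3) (by positivity)
  obtain ⟨N, hN⟩ := bad_small G hG (k + j * G.card) (δ / 3) (by positivity)
  refine ⟨k + j * G.card + G.card, N + 1, fun n hn w hw M hM0 hM1 hU f S hS h hh hd => ?_⟩
  have hG' : (0:ℝ) < G.card := by exact_mod_cast hG
  have hn0 : (0:ℝ) < n := by exact_mod_cast (by omega : 0 < n)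
  have ht := tail hw (RS G f) (fun v X => ∏ g ∈ FE G f v, xi X g) (FE G f) G.card (k + j * G.card)
    (M ^ (G.card - 1)) (δ / 3) (2 * G.card * (n : ℝ) ^ (m - 2)) (by positivity)
    (pow_le_one₀ hM0 hM1) (by positivity) (by positivity) (RS_card_le hm G f)
    (fun v X => prod_nonneg' _ X) (fun v X => prod_le_one' _ X) (fun v => dep_prod _)
    (fun v => FE_card_le G f v) (hN n (by omega) f)
    (by
      intro S hS h hh hd v hv hdis
      rw [← FE_card G f v hv]
      exact hU.prod hM0 hh hd _ hdis (by have := FE_card_le G f v; omega))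
    j hj S (by omega) h hh hd
  simp only [rootedCount_eq]
  calc _ ≤ _ := ht
    _ = _ := by ring

lemma lo_tail {m : ℕ} (hm : 2 ≤ m) (G : Finset (EdgeK m)) (hG : 1 ≤ G.card) (k : ℕ)
    (δ : ℝ) (hδ : 0 < δ) :
    ∃ K N : ℕ, ∀ n ≥ N, ∀ w : Config n → ℝ, (∀ X, 0 ≤ w X) → ∀ M : ℝ, 0 ≤ M → M ≤ 1 → LB w K M →
      ∀ f : EdgeK n, ∀ S : Finset (EdgeK n), S.card ≤ k → ∀ h : Config n → ℝ, (∀ X, 0 ≤ h X) →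
      Dep S h →
      Ew w (fun X => h X * max (M ^ (G.card - 1) -
        (rootedCount X G f : ℝ) / (2 * G.card * (n : ℝ) ^ (m - 2))) 0) ≤ δ * Ew w h := by
  obtain ⟨j, hj⟩ := exists_j (δ / 4) (by positivity)
  obtain ⟨N, hN⟩ := bad_small G hG (k + j * G.card) (δ / 4) (by positivity)
  obtain ⟨N', hN'⟩ := RS_card_ge hm G (δ / 4) (by positivity)
  refine ⟨k + j * G.card + G.card, N + N' + 1, fun n hn w hw M hM0 hM1 hU f S hS h hh hd => ?_⟩
  have hG' : (0:ℝ) < G.card := by exact_mod_cast hG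
  have hn0 : (0:ℝ) < n := by exact_mod_cast (by omega : 0 < n)
  have hp1 : M ^ (G.card - 1) ≤ 1 := pow_le_one₀ hM0 hM1
  have hp0 : 0 ≤ M ^ (G.card - 1) := by positivity
  have ht := tail hw (RS G f) (fun v X => 1 - ∏ g ∈ FE G f v, xi X g) (FE G f) G.card
    (k + j * G.card)
    (1 - M ^ (G.card - 1)) (δ / 4) (2 * G.card * (n : ℝ) ^ (m - 2)) (by linarith)
    (by linarith) (by positivity) (by positivity) (RS_card_le hm G f)
    (fun v X => by have := prod_le_one' (FE G f v) X; linarith)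
    (fun v X => by have := prod_nonneg' (FE G f v) X; linarith)
    (fun v X Y hXY => by simp only [dep_prod _ X Y hXY])
    (fun v => FE_card_le G f v) (hN n (by omega) f)
    (by
      intro S hS h hh hd v hv hdis
      have h1 := hU.prod hM0 hh hd _ hdis (by have := FE_card_le G f v; omega)
      rw [FE_card G f v hv] at h1
      have e : (fun X => h X * (1 - ∏ g ∈ FE G f v, xi X g))
          = fun X => h X - h X * ∏ g ∈ FE G f v, xi X g := by funext X; ring
      rw [e, Ew_sub]
      linarith)
    j hj S (by omega) h hh hd
  have hR := hN' n (by omega) f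
  set D := 2 * (G.card:ℝ) * (n : ℝ) ^ (m - 2) with hD
  have hD0 : 0 < D := by positivity
  have hpt : ∀ X, h X * max (M ^ (G.card - 1) - (rootedCount X G f : ℝ) / D) 0
      ≤ (δ / 4) * h X + h X * max ((∑ v ∈ RS G f, (1 - ∏ g ∈ FE G f v, xi X g)) / D
        - (1 - M ^ (G.card - 1))) 0 := by
    intro X
    rw [Finset.sum_sub_distrib, ← rootedCount_eq]
    simp only [Finset.sum_const, nsmul_eq_mul, mul_one]
    have h1 : 1 - δ / 4 ≤ ((RS G f).card : ℝ) / D := by rw [le_div_iff₀ hD0]; exact hR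
    rw [sub_div]
    set t := (rootedCount X G f : ℝ) / D
    set r := ((RS G f).card : ℝ) / D
    have h2 : max (M ^ (G.card - 1) - t) 0
        ≤ δ / 4 + max (r - t - (1 - M ^ (G.card - 1))) 0 := by
      have h3 := le_max_left (r - t - (1 - M ^ (G.card - 1))) 0
      have h4 := le_max_right (r - t - (1 - M ^ (G.card - 1))) 0
      apply max_le <;> linarith
    calc _ ≤ h X * _ := mul_le_mul_of_nonneg_left h2 (hh X)
      _ = _ := by ring
  have h1 := Ew_mono hw hpt
  rw [Ew_add, Ew_smul] at h1
  linarith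

lemma UB.mono {n : ℕ} {w : Config n → ℝ} (hw : ∀ X, 0 ≤ w X) {K K' : ℕ} {M M' : ℝ}
    (hU : UB w K M) (hK : K' ≤ K) (hM : M ≤ M') : UB w K' M' := fun S hS h hh hd f hf =>
  (hU S (hS.trans hK) h hh hd f hf).trans (mul_le_mul_of_nonneg_right hM (Ew_nonneg hw hh))

lemma LB.mono {n : ℕ} {w : Config n → ℝ} (hw : ∀ X, 0 ≤ w X) {K K' : ℕ} {M M' : ℝ}
    (hU : LB w K M) (hK : K' ≤ K) (hM : M' ≤ M) : LB w K' M' := fun S hS h hh hd f hf =>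
  (mul_le_mul_of_nonneg_right hM (Ew_nonneg hw hh)).trans (hU S (hS.trans hK) h hh hd f hf)

lemma UB_one {n : ℕ} {w : Config n → ℝ} (hw : ∀ X, 0 ≤ w X) (K : ℕ) : UB w K 1 := by
  intro S hS h hh hd f hf
  rw [one_mul]
  exact Ew_mono hw fun X => mul_le_of_le_one_right (hh X) (xi_le_one X f)

lemma LB_zero {n : ℕ} {w : Config n → ℝ} (hw : ∀ X, 0 ≤ w X) (K : ℕ) : LB w K 0 := by
  intro S hS h hh hd f hf
  rw [zero_mul]
  exact Ew_nonneg hw fun X => mul_nonneg (hh X) (xi_nonneg X f)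

/-- Asymptotic upper bound. -/
def AU {s : ℕ} (V : Fin s → ℕ) (Pt : ∀ i, Finset (EdgeK (V i))) (β : Fin s → ℝ) (M : ℝ) : Prop :=
  ∀ k : ℕ, ∃ N : ℕ, ∀ n ≥ N, UB (gibbs V Pt β n) k M

/-- Asymptotic lower bound. -/
def AL {s : ℕ} (V : Fin s → ℕ) (Pt : ∀ i, Finset (EdgeK (V i))) (β : Fin s → ℝ) (M : ℝ) : Prop :=
  ∀ k : ℕ, ∃ N : ℕ, ∀ n ≥ N, LB (gibbs V Pt β n) k M

lemma up_tail' {s : ℕ} {V : Fin s → ℕ} {Pt : ∀ i, Finset (EdgeK (V i))} {β : Fin s → ℝ} {M : ℝ}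
    (hM0 : 0 ≤ M) (hM1 : M ≤ 1) (hA : AU V Pt β M)
    {m : ℕ} (hm : 2 ≤ m) (G : Finset (EdgeK m)) (hG : 1 ≤ G.card) (k : ℕ)
    (c : ℝ) (hc : 0 ≤ c) (δ : ℝ) (hδ : 0 < δ) :
    ∃ N : ℕ, ∀ n ≥ N,
      ∀ f : EdgeK n, ∀ S : Finset (EdgeK n), S.card ≤ k → ∀ h : Config n → ℝ, (∀ X, 0 ≤ h X) →
      Dep S h →
      Ew (gibbs V Pt β n) (fun X => h X * (c * max ((rootedCount X G f : ℝ) /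
        (2 * G.card * (n : ℝ) ^ (m - 2)) - M ^ (G.card - 1)) 0)) ≤ δ * Ew (gibbs V Pt β n) h := by
  obtain ⟨K, N, hN⟩ := up_tail hm G hG k (δ / (c + 1)) (by positivity)
  obtain ⟨N', hN'⟩ := hA K
  refine ⟨N + N', fun n hn f S hS h hh hd => ?_⟩
  have hw := gibbs_nonneg V Pt β n
  have h1 := hN n (by omega) _ hw M hM0 hM1 (hN' n (by omega)) f S hS h hh hd
  have e : ∀ u : Config n → ℝ, (fun X => h X * (c * u X)) = fun X => c * (h X * u X) := by
    intro u; funext X; ring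
  rw [e, Ew_smul]
  have h2 : c * (δ / (c + 1)) ≤ δ := by
    rw [← mul_div_assoc, div_le_iff₀ (by positivity)]; nlinarith
  calc _ ≤ c * (δ / (c + 1) * Ew (gibbs V Pt β n) h) := mul_le_mul_of_nonneg_left h1 hc
    _ = c * (δ / (c + 1)) * Ew (gibbs V Pt β n) h := by ring
    _ ≤ _ := mul_le_mul_of_nonneg_right h2 (Ew_nonneg hw hh)

lemma lo_tail' {s : ℕ} {V : Fin s → ℕ} {Pt : ∀ i, Finset (EdgeK (V i))} {β : Fin s → ℝ} {M : ℝ}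
    (hM0 : 0 ≤ M) (hM1 : M ≤ 1) (hA : AL V Pt β M)
    {m : ℕ} (hm : 2 ≤ m) (G : Finset (EdgeK m)) (hG : 1 ≤ G.card) (k : ℕ)
    (c : ℝ) (hc : 0 ≤ c) (δ : ℝ) (hδ : 0 < δ) :
    ∃ N : ℕ, ∀ n ≥ N,
      ∀ f : EdgeK n, ∀ S : Finset (EdgeK n), S.card ≤ k → ∀ h : Config n → ℝ, (∀ X, 0 ≤ h X) →
      Dep S h →
      Ew (gibbs V Pt β n) (fun X => h X * (c * max (M ^ (G.card - 1) - (rootedCount X G f : ℝ) /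
        (2 * G.card * (n : ℝ) ^ (m - 2))) 0)) ≤ δ * Ew (gibbs V Pt β n) h := by
  obtain ⟨K, N, hN⟩ := lo_tail hm G hG k (δ / (c + 1)) (by positivity)
  obtain ⟨N', hN'⟩ := hA K
  refine ⟨N + N', fun n hn f S hS h hh hd => ?_⟩
  have hw := gibbs_nonneg V Pt β n
  have h1 := hN n (by omega) _ hw M hM0 hM1 (hN' n (by omega)) f S hS h hh hd
  have e : ∀ u : Config n → ℝ, (fun X => h X * (c * u X)) = fun X => c * (h X * u X) := by
    intro u; funext X; ring
  rw [e, Ew_smul]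
  have h2 : c * (δ / (c + 1)) ≤ δ := by
    rw [← mul_div_assoc, div_le_iff₀ (by positivity)]; nlinarith
  calc _ ≤ c * (δ / (c + 1) * Ew (gibbs V Pt β n) h) := mul_le_mul_of_nonneg_left h1 hc
    _ = c * (δ / (c + 1)) * Ew (gibbs V Pt β n) h := by ring
    _ ≤ _ := mul_le_mul_of_nonneg_right h2 (Ew_nonneg hw hh)

lemma rooted_empty {n m : ℕ} (X : Config n) (G : Finset (EdgeK m)) (f : EdgeK n)
    (hG : G.card = 0) : rootedCount X G f = 0 := by
  rw [Finset.card_eq_zero] at hG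
  subst hG
  simp [rootedCount]

lemma term_eq {n : ℕ} (hn : 0 < n) (b r e q : ℝ) (he : 0 < e) (l : ℕ) :
    b * r / (n:ℝ) ^ l - 2 * b * e * q = (2 * b * e) * (r / (2 * e * (n:ℝ) ^ l) - q) := by
  have : (0:ℝ) < n := by exact_mod_cast hn
  field_simp

lemma term_up {s : ℕ} {V : Fin s → ℕ} {Pt : ∀ i, Finset (EdgeK (V i))} {β : Fin s → ℝ} {M : ℝ}
    (hM0 : 0 ≤ M) (hM1 : M ≤ 1) (hA : AU V Pt β M) (hV2 : ∀ i, 2 ≤ V i)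
    (i : Fin s) (hi : 0 ≤ β i ∨ (Pt i).card = 1) (k : ℕ) (δ : ℝ) (hδ : 0 < δ) :
    ∃ N : ℕ, ∀ n ≥ N,
      ∀ f : EdgeK n, ∀ S : Finset (EdgeK n), S.card ≤ k → ∀ h : Config n → ℝ, (∀ X, 0 ≤ h X) →
      Dep S h →
      Ew (gibbs V Pt β n) (fun X => h X * max (β i * (rootedCount X (Pt i) f : ℝ) /
        (n : ℝ) ^ (V i - 2) - 2 * β i * (Pt i).card * M ^ ((Pt i).card - 1)) 0)
        ≤ δ * Ew (gibbs V Pt β n) h := by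
  rcases Nat.eq_zero_or_pos (Pt i).card with h0 | hpos
  · refine ⟨0, fun n _ f S _ h hh _ => ?_⟩
    have : 0 ≤ Ew (gibbs V Pt β n) h := Ew_nonneg (gibbs_nonneg V Pt β n) hh
    simp only [rooted_empty _ _ _ h0, h0]
    simp only [Nat.cast_zero, mul_zero, zero_div, zero_mul, sub_self, max_self]
    simp only [Ew, mul_zero, Finset.sum_const_zero]
    positivity
  have hpos' : (0:ℝ) < (Pt i).card := by exact_mod_cast hpos
  rcases le_or_gt 0 (β i) with hb | hb
  · have hc : 0 ≤ 2 * β i * (Pt i).card := by positivity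
    obtain ⟨N, hN⟩ := up_tail' hM0 hM1 hA (hV2 i) (Pt i) hpos k _ hc δ hδ
    refine ⟨N + 1, fun n hn f S hS h hh hd => ?_⟩
    refine le_trans (le_of_eq ?_) (hN n (by omega) f S hS h hh hd)
    congr 1
    funext X
    rw [term_eq (by omega) _ _ _ _ hpos', mul_max_of_nonneg _ _ hc, mul_zero]
  · have h1 : (Pt i).card = 1 := hi.resolve_left (not_le.mpr hb)
    have hc : 0 ≤ -(2 * β i * (Pt i).card) := by nlinarith
    obtain ⟨N, hN⟩ := lo_tail' (V := V) (Pt := Pt) (β := β) le_rfl zero_le_one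
      (fun k => ⟨0, fun n _ => LB_zero (gibbs_nonneg V Pt β n) k⟩) (hV2 i) (Pt i) hpos k _ hc δ hδ
    refine ⟨N + 1, fun n hn f S hS h hh hd => ?_⟩
    refine le_trans (le_of_eq ?_) (hN n (by omega) f S hS h hh hd)
    congr 1
    funext X
    rw [term_eq (by omega) _ _ _ _ hpos', mul_max_of_nonneg _ _ hc, mul_zero]
    have e : (Pt i).card - 1 = 0 := by omega
    rw [e, pow_zero, pow_zero]
    congr 2
    ring

lemma term_lo {s : ℕ} {V : Fin s → ℕ} {Pt : ∀ i, Finset (EdgeK (V i))} {β : Fin s → ℝ} {M : ℝ}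
    (hM0 : 0 ≤ M) (hM1 : M ≤ 1) (hA : AL V Pt β M) (hV2 : ∀ i, 2 ≤ V i)
    (i : Fin s) (hi : 0 ≤ β i ∨ (Pt i).card = 1) (k : ℕ) (δ : ℝ) (hδ : 0 < δ) :
    ∃ N : ℕ, ∀ n ≥ N,
      ∀ f : EdgeK n, ∀ S : Finset (EdgeK n), S.card ≤ k → ∀ h : Config n → ℝ, (∀ X, 0 ≤ h X) →
      Dep S h →
      Ew (gibbs V Pt β n) (fun X => h X * max (2 * β i * (Pt i).card * M ^ ((Pt i).card - 1)
        - β i * (rootedCount X (Pt i) f : ℝ) / (n : ℝ) ^ (V i - 2)) 0)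
        ≤ δ * Ew (gibbs V Pt β n) h := by
  rcases Nat.eq_zero_or_pos (Pt i).card with h0 | hpos
  · refine ⟨0, fun n _ f S _ h hh _ => ?_⟩
    have : 0 ≤ Ew (gibbs V Pt β n) h := Ew_nonneg (gibbs_nonneg V Pt β n) hh
    simp only [rooted_empty _ _ _ h0, h0]
    simp only [Nat.cast_zero, mul_zero, zero_div, zero_mul, sub_self, max_self]
    simp only [Ew, mul_zero, Finset.sum_const_zero]
    positivity
  have hpos' : (0:ℝ) < (Pt i).card := by exact_mod_cast hpos
  rcases le_or_gt 0 (β i) with hb | hb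
  · have hc : 0 ≤ 2 * β i * (Pt i).card := by positivity
    obtain ⟨N, hN⟩ := lo_tail' hM0 hM1 hA (hV2 i) (Pt i) hpos k _ hc δ hδ
    refine ⟨N + 1, fun n hn f S hS h hh hd => ?_⟩
    refine le_trans (le_of_eq ?_) (hN n (by omega) f S hS h hh hd)
    congr 1
    funext X
    rw [← neg_sub, term_eq (by omega) _ _ _ _ hpos', mul_max_of_nonneg _ _ hc, mul_zero,
      ← mul_neg, neg_sub]
  · have h1 : (Pt i).card = 1 := hi.resolve_left (not_le.mpr hb)
    have hc : 0 ≤ -(2 * β i * (Pt i).card) := by nlinarith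
    obtain ⟨N, hN⟩ := up_tail' (V := V) (Pt := Pt) (β := β) zero_le_one le_rfl
      (fun k => ⟨0, fun n _ => UB_one (gibbs_nonneg V Pt β n) k⟩) (hV2 i) (Pt i) hpos k _ hc δ hδ
    refine ⟨N + 1, fun n hn f S hS h hh hd => ?_⟩
    refine le_trans (le_of_eq ?_) (hN n (by omega) f S hS h hh hd)
    congr 1
    funext X
    rw [← neg_sub, term_eq (by omega) _ _ _ _ hpos', mul_max_of_nonneg _ _ hc, mul_zero]
    have e : (Pt i).card - 1 = 0 := by omega
    rw [e, pow_zero, pow_zero]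
    congr 2
    ring

lemma max_sum_le {ι : Type*} (T : Finset ι) (u : ι → ℝ) :
    max (∑ i ∈ T, u i) 0 ≤ ∑ i ∈ T, max (u i) 0 :=
  max_le (Finset.sum_le_sum fun i _ => le_max_left _ _)
    (Finset.sum_nonneg fun i _ => le_max_right _ _)

lemma step_up {s : ℕ} {V : Fin s → ℕ} {Pt : ∀ i, Finset (EdgeK (V i))} {β : Fin s → ℝ} {M : ℝ}
    (hM0 : 0 ≤ M) (hM1 : M ≤ 1) (hA : AU V Pt β M) (hV2 : ∀ i, 2 ≤ V i)
    (hi : ∀ i, 0 ≤ β i ∨ (Pt i).card = 1) (δ : ℝ) (hδ : 0 < δ) :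
    AU V Pt β (phiF Pt β M + δ) := by
  intro k
  choose N hN using fun i => term_up hM0 hM1 hA hV2 i (hi i) k (δ / (s + 1)) (by positivity)
  refine ⟨∑ i, N i, fun n hn S hS h hh hd f hf => ?_⟩
  have hw := gibbs_nonneg V Pt β n
  have hE : 0 ≤ Ew (gibbs V Pt β n) h := Ew_nonneg hw hh
  rw [gibbs_cond V Pt β n f S h hd hf]
  have hpt : ∀ X, h X * sg (dH V Pt β n X f) ≤ phiF Pt β M * h X +
      ∑ i, h X * max (β i * (rootedCount X (Pt i) f : ℝ) /
        (n : ℝ) ^ (V i - 2) - 2 * β i * (Pt i).card * M ^ ((Pt i).card - 1)) 0 := by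
    intro X
    have h1 := sg_lip (dH V Pt β n X f) (PsiF Pt β M)
    have h2 : dH V Pt β n X f - PsiF Pt β M = ∑ i, (β i * (rootedCount X (Pt i) f : ℝ) /
        (n : ℝ) ^ (V i - 2) - 2 * β i * (Pt i).card * M ^ ((Pt i).card - 1)) := by
      rw [dH_eq, PsiF, Finset.sum_sub_distrib]
    rw [h2] at h1
    rw [← Finset.mul_sum]
    have h3 := h1.trans (add_le_add_right (max_sum_le _ _) _)
    have h4 := mul_le_mul_of_nonneg_left h3 (hh X)
    refine h4.trans (le_of_eq ?_)
    change h X * (phiF Pt β M + _) = _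
    ring
  have h1 := Ew_mono hw hpt
  rw [Ew_add, Ew_smul, Ew_sum] at h1
  have h2 : ∑ i : Fin s, Ew (gibbs V Pt β n) (fun X => h X * max (β i * (rootedCount X (Pt i) f : ℝ) /
        (n : ℝ) ^ (V i - 2) - 2 * β i * (Pt i).card * M ^ ((Pt i).card - 1)) 0)
      ≤ ∑ i : Fin s, (δ / (s + 1)) * Ew (gibbs V Pt β n) h :=
    Finset.sum_le_sum fun i _ => hN i n
      ((Finset.single_le_sum (fun _ _ => Nat.zero_le _) (mem_univ i)).trans hn) f S hS h hh hd
  have h3 : ∑ i : Fin s, (δ / (s + 1)) * Ew (gibbs V Pt β n) h ≤ δ * Ew (gibbs V Pt β n) h := by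
    simp only [Finset.sum_const, Finset.card_univ, Fintype.card_fin, nsmul_eq_mul]
    rw [← mul_assoc]
    refine mul_le_mul_of_nonneg_right ?_ hE
    rw [← mul_div_assoc, div_le_iff₀ (by positivity)]; nlinarith
  linarith

lemma step_lo {s : ℕ} {V : Fin s → ℕ} {Pt : ∀ i, Finset (EdgeK (V i))} {β : Fin s → ℝ} {M : ℝ}
    (hM0 : 0 ≤ M) (hM1 : M ≤ 1) (hA : AL V Pt β M) (hV2 : ∀ i, 2 ≤ V i)
    (hi : ∀ i, 0 ≤ β i ∨ (Pt i).card = 1) (δ : ℝ) (hδ : 0 < δ) :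
    AL V Pt β (phiF Pt β M - δ) := by
  intro k
  choose N hN using fun i => term_lo hM0 hM1 hA hV2 i (hi i) k (δ / (s + 1)) (by positivity)
  refine ⟨∑ i, N i, fun n hn S hS h hh hd f hf => ?_⟩
  have hw := gibbs_nonneg V Pt β n
  have hE : 0 ≤ Ew (gibbs V Pt β n) h := Ew_nonneg hw hh
  rw [gibbs_cond V Pt β n f S h hd hf]
  have hpt : ∀ X, phiF Pt β M * h X ≤ h X * sg (dH V Pt β n X f) +
      ∑ i, h X * max (2 * β i * (Pt i).card * M ^ ((Pt i).card - 1) -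
        β i * (rootedCount X (Pt i) f : ℝ) / (n : ℝ) ^ (V i - 2)) 0 := by
    intro X
    have h1 := sg_lip (PsiF Pt β M) (dH V Pt β n X f)
    have h2 : PsiF Pt β M - dH V Pt β n X f
        = ∑ i, (2 * β i * (Pt i).card * M ^ ((Pt i).card - 1) -
        β i * (rootedCount X (Pt i) f : ℝ) / (n : ℝ) ^ (V i - 2)) := by
      rw [dH_eq, PsiF, Finset.sum_sub_distrib]
    rw [h2] at h1
    rw [← Finset.mul_sum, ← mul_add]
    have h3 := h1.trans (add_le_add_right (max_sum_le _ _) _)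
    have h4 := mul_le_mul_of_nonneg_left h3 (hh X)
    refine le_trans (le_of_eq ?_) h4
    change _ = h X * phiF Pt β M
    ring
  have h1 := Ew_mono hw hpt
  rw [Ew_add, Ew_smul, Ew_sum] at h1
  have h2 : ∑ i : Fin s, Ew (gibbs V Pt β n) (fun X => h X *
        max (2 * β i * (Pt i).card * M ^ ((Pt i).card - 1) -
        β i * (rootedCount X (Pt i) f : ℝ) / (n : ℝ) ^ (V i - 2)) 0)
      ≤ ∑ i : Fin s, (δ / (s + 1)) * Ew (gibbs V Pt β n) h :=
    Finset.sum_le_sum fun i _ => hN i n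
      ((Finset.single_le_sum (fun _ _ => Nat.zero_le _) (mem_univ i)).trans hn) f S hS h hh hd
  have h3 : ∑ i : Fin s, (δ / (s + 1)) * Ew (gibbs V Pt β n) h ≤ δ * Ew (gibbs V Pt β n) h := by
    simp only [Finset.sum_const, Finset.card_univ, Fintype.card_fin, nsmul_eq_mul]
    rw [← mul_assoc]
    refine mul_le_mul_of_nonneg_right ?_ hE
    rw [← mul_div_assoc, div_le_iff₀ (by positivity)]; nlinarith
  linarith

lemma fix_up (φ : ℝ → ℝ) (hφ : Continuous φ) (h0 : ∀ x, 0 ≤ φ x) (h1 : ∀ x, φ x ≤ 1)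
    (p : ℝ) (huniq : ∀ q ∈ Set.Icc (0:ℝ) 1, φ q = q → q = p)
    (P : ℝ → Prop) (hP1 : P 1) (hmono : ∀ x y, x ≤ y → P x → P y)
    (hstep : ∀ M, 0 ≤ M → M ≤ 1 → P M → ∀ δ > 0, P (φ M + δ)) (δ : ℝ) (hδ : 0 < δ) :
    P (p + δ) := by
  set A : Set ℝ := {M | 0 ≤ M ∧ M ≤ 1 ∧ P M} with hA
  have hne : A.Nonempty := ⟨1, zero_le_one, le_rfl, hP1⟩
  have hbdd : BddBelow A := ⟨0, fun M hM => hM.1⟩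
  set m := sInf A with hm
  have hm0 : 0 ≤ m := le_csInf hne fun M hM => hM.1
  have hm1 : m ≤ 1 := csInf_le hbdd ⟨zero_le_one, le_rfl, hP1⟩
  have hfix : m ≤ φ m := by
    by_contra hc
    push Not at hc
    have hev : ∀ᶠ x in nhds m, φ x < m := hφ.continuousAt.eventually_lt continuousAt_const hc
    obtain ⟨r, hr, hball⟩ := Metric.eventually_nhds_iff.mp hev
    obtain ⟨M, hM, hMr⟩ := exists_lt_of_csInf_lt hne (by linarith : sInf A < m + r)
    have hmM : m ≤ M := csInf_le hbdd hM
    have h2 : φ M < m := hball (by rw [Real.dist_eq, abs_lt]; constructor <;> linarith)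
    have h3 := hstep M hM.1 hM.2.1 hM.2.2 ((m - φ M) / 2) (by linarith)
    have h4 : m ≤ φ M + (m - φ M) / 2 :=
      csInf_le hbdd ⟨by have := h0 M; linarith, by linarith, h3⟩
    linarith
  have hmp : m ≤ p := by
    have hcont : ContinuousOn (fun x => x - φ x) (Set.Icc m 1) := by fun_prop
    obtain ⟨q, hq, hq0⟩ := intermediate_value_Icc hm1 hcont
      (show (0:ℝ) ∈ Set.Icc (m - φ m) (1 - φ 1) from ⟨by linarith, by have := h1 1; linarith⟩)
    have hq0' : q - φ q = 0 := hq0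
    have := huniq q ⟨hm0.trans hq.1, hq.2⟩ (by linarith)
    rw [← this]; exact hq.1
  obtain ⟨M, hM, hMr⟩ := exists_lt_of_csInf_lt hne (by linarith : sInf A < p + δ)
  exact hmono M _ hMr.le hM.2.2

lemma phiF_cont {s : ℕ} {V : Fin s → ℕ} (Pt : ∀ i, Finset (EdgeK (V i))) (β : Fin s → ℝ) :
    Continuous (phiF Pt β) := by
  unfold phiF PsiF
  refine Continuous.div (by fun_prop) (by fun_prop) fun x => by positivity

/-- Chain rule for the probability of a cylinder. -/
lemma chain {n : ℕ} {w : Config n → ℝ} (hw : ∀ X, 0 ≤ w X) (hw1 : ∑ X, w X = 1) (p δ : ℝ)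
    (hp0 : 0 ≤ p) (hp1 : p ≤ 1) (hδ : 0 ≤ δ) (K : ℕ)
    (hU : UB w K (p + δ)) (hL : LB w K (p - δ)) {k : ℕ} (hk : k ≤ K)
    (e : Fin k → EdgeK n) (he : Function.Injective e) (a : Fin k → Bool) (I : Finset (Fin k)) :
    |Ew w (fun X => ∏ i ∈ I, if X (e i) = a i then (1:ℝ) else 0)
      - ∏ i ∈ I, (if a i = true then p else 1 - p)| ≤ I.card * δ := by
  have hdep : ∀ I : Finset (Fin k),
      Dep (I.image e) (fun X => ∏ i ∈ I, if X (e i) = a i then (1:ℝ) else 0) := by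
    intro I X Y hXY
    refine Finset.prod_congr rfl fun i hi => ?_
    rw [hXY _ (Finset.mem_image_of_mem e hi)]
  have hnn : ∀ (I : Finset (Fin k)) (X : Config n),
      0 ≤ ∏ i ∈ I, if X (e i) = a i then (1:ℝ) else 0 := fun I X =>
    Finset.prod_nonneg fun i _ => by split_ifs <;> norm_num
  have hle : ∀ (I : Finset (Fin k)),
      Ew w (fun X => ∏ i ∈ I, if X (e i) = a i then (1:ℝ) else 0) ≤ 1 := by
    intro I
    calc _ ≤ Ew w (fun _ => 1) := Ew_mono hw fun X =>
          Finset.prod_le_one (fun i _ => by split_ifs <;> norm_num)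
            (fun i _ => by split_ifs <;> norm_num)
      _ = 1 := by simp [Ew, hw1]
  induction I using Finset.induction_on with
  | empty => simp [Ew, hw1]
  | insert j I hj ih =>
    set h : Config n → ℝ := fun X => ∏ i ∈ I, if X (e i) = a i then (1:ℝ) else 0 with hh
    set c := ∏ i ∈ I, (if a i = true then p else 1 - p) with hc
    have hcard : (I.image e).card ≤ K :=
      Finset.card_image_le.trans (((Finset.card_le_univ I).trans (by simp)).trans hk)
    have hnot : e j ∉ I.image e := by
      intro hmem
      obtain ⟨i, hi, hij⟩ := Finset.mem_image.mp hmem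
      exact hj (he hij ▸ hi)
    have hu := hU _ hcard h (hnn I) (hdep I) (e j) hnot
    have hl := hL _ hcard h (hnn I) (hdep I) (e j) hnot
    have hE0 : 0 ≤ Ew w h := Ew_nonneg hw (hnn I)
    have hE1 : Ew w h ≤ 1 := hle I
    have hδE : δ * Ew w h ≤ δ := mul_le_of_le_one_right hδ hE1
    have hrew : (fun X => ∏ i ∈ insert j I, if X (e i) = a i then (1:ℝ) else 0)
        = fun X => if a j = true then h X * xi X (e j) else h X - h X * xi X (e j) := by
      funext X
      rw [Finset.prod_insert hj]
      change _ * h X = _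
      unfold xi
      cases haj : a j <;> cases hX : X (e j) <;> simp
    rw [hrew, Finset.prod_insert hj, Finset.card_insert_of_notMem hj]
    push_cast
    rw [abs_le] at ih ⊢
    by_cases haj : a j = true
    · simp only [haj, if_true]
      rw [← hc]
      constructor <;> nlinarith
    · simp only [haj]
      rw [if_neg (by simp), ← hc]
      simp only [Bool.false_eq_true, if_false]
      rw [Ew_sub]
      constructor <;> nlinarith

end ERGM

end Aux

/-- **Asymptotic independence of edges (Theorem 3).** In the high temperature phase with
unique fixed point `p*`, any finite collection of distinct edge indicators is asymptotically
independent `Bernoulli(p*)`. -/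
theorem asymptotic_independence_of_edges
    {L s : ℕ} (hL : 2 ≤ L) (hs : 0 < s)
    (V : Fin s → ℕ) (Pt : ∀ i, Finset (EdgeK (V i))) (β : Fin s → ℝ)
    (hV2 : ∀ i, 2 ≤ V i) (hVL : ∀ i, V i ≤ L)
    (hG1V : V ⟨0, hs⟩ = 2) (hG1E : (Pt ⟨0, hs⟩).card = 1)
    (hβ : ∀ i : Fin s, 0 < (i : ℕ) → 0 < β i)
    (pstar : ℝ) (hHT : HighTemp Pt β pstar)
    (k : ℕ) (hk : 1 ≤ k) (ε : ℝ) (hε : 0 < ε) :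
    ∃ N : ℕ, ∀ n ≥ N, ∀ e : Fin k → EdgeK n, Function.Injective e → ∀ a : Fin k → Bool,
      |(∑ X ∈ univ.filter (fun X : Config n => ∀ i, X (e i) = a i), gibbs V Pt β n X) -
          pstar ^ ((univ.filter fun i => a i = true).card) *
            (1 - pstar) ^ (k - (univ.filter fun i => a i = true).card)| ≤ ε := by
  obtain ⟨⟨hp0, hp1⟩, -, huniq, -⟩ := hHT
  have hi : ∀ i, 0 ≤ β i ∨ (Pt i).card = 1 := by
    intro i
    rcases Nat.eq_zero_or_pos (i : ℕ) with h | h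
    · right
      have : i = ⟨0, hs⟩ := Fin.ext h
      rw [this]; exact hG1E
    · exact Or.inl (hβ i h).le
  have hφ0 : ∀ x, 0 ≤ phiF Pt β x := fun x => ERGM.sg_nonneg _
  have hφ1 : ∀ x, phiF Pt β x ≤ 1 := fun x => ERGM.sg_le_one _
  have hk0 : (0:ℝ) < k := by exact_mod_cast hk
  have hδ : 0 < ε / k := by positivity
  have hU : ERGM.AU V Pt β (pstar + ε / k) :=
    ERGM.fix_up (phiF Pt β) (ERGM.phiF_cont Pt β) hφ0 hφ1 pstar huniq (ERGM.AU V Pt β)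
      (fun K => ⟨0, fun n _ => ERGM.UB_one (ERGM.gibbs_nonneg V Pt β n) K⟩)
      (fun x y hxy hx K => (hx K).imp fun N hN n hn =>
        (hN n hn).mono (ERGM.gibbs_nonneg V Pt β n) le_rfl hxy)
      (fun M hM0 hM1 hA δ hδ => ERGM.step_up hM0 hM1 hA hV2 hi δ hδ) _ hδ
  have hL' : ERGM.AL V Pt β (1 - ((1 - pstar) + ε / k)) :=
    ERGM.fix_up (fun x => 1 - phiF Pt β (1 - x))
      (continuous_const.sub ((ERGM.phiF_cont Pt β).comp (by fun_prop)))
      (fun x => by have := hφ1 (1 - x); linarith) (fun x => by have := hφ0 (1 - x); linarith)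
      (1 - pstar)
      (fun q hq hq1 => by
        have := huniq (1 - q) ⟨by linarith [hq.2], by linarith [hq.1]⟩ (by linarith)
        linarith)
      (fun x => ERGM.AL V Pt β (1 - x))
      (fun K => ⟨0, fun n _ => by
        rw [sub_self]; exact ERGM.LB_zero (ERGM.gibbs_nonneg V Pt β n) K⟩)
      (fun x y hxy hx K => (hx K).imp fun N hN n hn =>
        (hN n hn).mono (ERGM.gibbs_nonneg V Pt β n) le_rfl (by linarith))
      (fun M hM0 hM1 hA δ hδ => by
        have := ERGM.step_lo (M := 1 - M) (by linarith) (by linarith) hA hV2 hi δ hδ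
        have e : 1 - (1 - phiF Pt β (1 - M) + δ) = phiF Pt β (1 - M) - δ := by ring
        rw [e]; exact this) _ hδ
  have e1 : 1 - ((1 - pstar) + ε / k) = pstar - ε / k := by ring
  rw [e1] at hL'
  obtain ⟨N, hN⟩ := hU k
  obtain ⟨N', hN'⟩ := hL' k
  refine ⟨N + N', fun n hn e he a => ?_⟩
  have h := ERGM.chain (ERGM.gibbs_nonneg V Pt β n) (ERGM.gibbs_sum V Pt β n) pstar (ε / k)
    hp0 hp1 hδ.le k (hN n (by omega)) (hN' n (by omega)) le_rfl e he a univ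
  have e2 : (Finset.card (univ : Finset (Fin k)) : ℝ) * (ε / k) = ε := by
    simp only [Finset.card_univ, Fintype.card_fin]
    field_simp
  rw [e2] at h
  have e3 : ∑ X ∈ univ.filter (fun X : Config n => ∀ i, X (e i) = a i), gibbs V Pt β n X
      = ERGM.Ew (gibbs V Pt β n) (fun X => ∏ i, if X (e i) = a i then (1:ℝ) else 0) := by
    unfold ERGM.Ew
    rw [Finset.sum_filter]
    refine Finset.sum_congr rfl fun X _ => ?_
    beta_reduce
    rw [Finset.prod_ite_zero]
    simp
  have e4 : ∏ i, (if a i = true then pstar else 1 - pstar)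
      = pstar ^ ((univ.filter fun i => a i = true).card) *
            (1 - pstar) ^ (k - (univ.filter fun i => a i = true).card) := by
    rw [Finset.prod_ite, Finset.prod_const, Finset.prod_const]
    congr 2
    have := Finset.card_filter_add_card_filter_not (s := (univ : Finset (Fin k)))
      (fun i => a i = true)
    rw [Finset.card_univ, Fintype.card_fin] at this
    omega
  rw [e4] at h
  rw [e3]
  exact h
end
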